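/- arXiv:1906.04938 — 2 statements merged into one kernel-verified Lean document; each statement's English description precedes it below -/
import Mathlib

section
/- Assume c > 0. Let ξ₁, ξ₂ : [0,∞) → ℝ be continuous and bounded from above, with ξ₁ a viscosity subsolution and ξ₂ a viscosity supersolution of (E) on (0,∞), and assume ξ₁ ≤ ξ₂ on the uniqueness set Ã. Then ξ₁ ≤ ξ₂ on [0,∞). -/
open Set Filter Topology

/-- `ψ` is a viscosity subsolution of (E): `-((n-1)/r)·ψ'(r) - |ψ'(r)| = h(r)`
on an open set `I ⊆ (0,∞)`: for every test function `φ` differentiable on `(0,∞)`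
and every `r₀ ∈ I` at which `ψ - φ` attains a local maximum, the subsolution
inequality holds. -/
def ViscSubsolE (n : ℕ) (h : ℝ → ℝ) (I : Set ℝ) (ψ : ℝ → ℝ) : Prop :=
  ∀ φ : ℝ → ℝ, DifferentiableOn ℝ φ (Set.Ioi 0) →
    ∀ r₀ ∈ I, IsLocalMax (fun r => ψ r - φ r) r₀ →
      -(((n : ℝ) - 1) / r₀) * deriv φ r₀ - |deriv φ r₀| ≤ h r₀

/-- Viscosity supersolution of (E) on an open set `I ⊆ (0,∞)`. -/
def ViscSupersolE (n : ℕ) (h : ℝ → ℝ) (I : Set ℝ) (ψ : ℝ → ℝ) : Prop :=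
  ∀ φ : ℝ → ℝ, DifferentiableOn ℝ φ (Set.Ioi 0) →
    ∀ r₀ ∈ I, IsLocalMin (fun r => ψ r - φ r) r₀ →
      -(((n : ℝ) - 1) / r₀) * deriv φ r₀ - |deriv φ r₀| ≥ h r₀

/-- Viscosity solution of (E): both a subsolution and a supersolution. -/
def ViscSolE (n : ℕ) (h : ℝ → ℝ) (I : Set ℝ) (ψ : ℝ → ℝ) : Prop :=
  ViscSubsolE n h I ψ ∧ ViscSupersolE n h I ψ

/-!
At a point `r ≥ n - 1` with `h r < 0`, the subsolution `u` has no local maximum on the component of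
`{h < 0}` around `r`, so there it is antitone to the left of `r` or monotone to the right of `r`.
Once the sign of `u'` is fixed, the equation can be solved for it: `u'` and `v'` satisfy opposite
first-order inequalities with a common right-hand side, and the difference `v - u` is monotone in
the direction that bounds it at `r` by its value at the nearest zero of `h`, a point of the
uniqueness set. Such a zero exists. Otherwise, on the left, the component reaches below `n - 1`,
where `p ↦ -((n - 1) / r) p - |p|` is decreasing and forces `u` to be increasing, hence constant
there; on the right, `u` grows at least linearly and is not bounded above. Finally, for
`r < n - 1` the Hamiltonian is decreasing and `v - u` is antitone on `[r, n - 1]`.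
-/

section OrderTopology

variable {α β : Type*} [TopologicalSpace α] [TopologicalSpace β]

lemma monotoneOn_closure [LinearOrder α] [OrderClosedTopology α] [Preorder β]
    [OrderClosedTopology β] {f : α → β} {s : Set α} (hf : MonotoneOn f s)
    (hc : ContinuousOn f (closure s)) : MonotoneOn f (closure s) := by
  intro x hx y hy hxy
  rcases hxy.eq_or_lt with rfl | hxy
  · exact le_rfl
  have := mem_closure_iff_nhdsWithin_neBot.1 hx
  have := mem_closure_iff_nhdsWithin_neBot.1 hy
  have hlt : ∀ᶠ p in 𝓝[s] x ×ˢ 𝓝[s] y, p.1 < p.2 :=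
    (tendsto_fst.mono_right nhdsWithin_le_nhds).eventually_lt
      (tendsto_snd.mono_right nhdsWithin_le_nhds) hxy
  refine le_of_tendsto_of_tendsto (((hc x hx).mono subset_closure).tendsto.comp tendsto_fst)
    (((hc y hy).mono subset_closure).tendsto.comp tendsto_snd) ?_
  filter_upwards [hlt, prod_mem_prod self_mem_nhdsWithin self_mem_nhdsWithin] with p hp hps
  exact hf hps.1 hps.2 hp.le

lemma antitoneOn_closure [LinearOrder α] [OrderClosedTopology α] [Preorder β]
    [OrderClosedTopology β] {f : α → β} {s : Set α} (hf : AntitoneOn f s)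
    (hc : ContinuousOn f (closure s)) : AntitoneOn f (closure s) :=
  (monotoneOn_closure (β := βᵒᵈ) hf.dual_right hc).dual_right

lemma antitoneOn_inter_Iic_or_monotoneOn_inter_Ici [ConditionallyCompleteLinearOrder α]
    [OrderTopology α] [LinearOrder β] [OrderClosedTopology β] {f : α → β} {s : Set α}
    [hs : s.OrdConnected] (hf : ContinuousOn f s) (hmax : ∀ z ∈ s, ¬ IsLocalMax f z) (c : α) :
    AntitoneOn f (s ∩ Iic c) ∨ MonotoneOn f (s ∩ Ici c) := by
  by_contra! hcon
  simp only [AntitoneOn, MonotoneOn, not_forall, not_le] at hcon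
  obtain ⟨⟨x, hx, y, hy, hxy, hfxy⟩, x', hx', y', hy', hxy', hfxy'⟩ := hcon
  have hyx' : y ≤ x' := hy.2.trans hx'.2
  have hsub : Icc x y' ⊆ s := hs.out hx.1 hy'.1
  obtain ⟨m, hm, hxm, hym⟩ : ∃ m ∈ Icc x y', f x < f m ∧ f y' < f m := by
    rcases le_total (f y) (f x') with h | h
    · exact ⟨x', ⟨hxy.trans hyx', hxy'⟩, hfxy.trans_le h, hfxy'⟩
    · exact ⟨y, ⟨hxy, hyx'.trans hxy'⟩, hfxy, hfxy'.trans_le h⟩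
  obtain ⟨z, hz, hzmax⟩ := isCompact_Icc.exists_isLocalMax_mem_open Ioo_subset_Icc_self
    (hf.mono hsub) hm (by
      rw [Icc_sdiff_Ioo_same (hm.1.trans hm.2)]
      rintro _ (rfl | rfl) <;> assumption) isOpen_Ioo
  exact hmax z (hsub (Ioo_subset_Icc_self hz)) hzmax

end OrderTopology

section Zeros

variable {h : ℝ → ℝ} {a b : ℝ}

lemma exists_last_zero_Icc (hh : ContinuousOn h (Icc a b)) (hz : ∃ z ∈ Icc a b, h z = 0) :
    ∃ z ∈ Icc a b, h z = 0 ∧ ∀ y ∈ Ioc z b, h y ≠ 0 := by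
  have hclosed : IsClosed (Icc a b ∩ h ⁻¹' {0}) :=
    hh.preimage_isClosed_of_isClosed isClosed_Icc isClosed_singleton
  obtain ⟨z, ⟨hzI, hz0⟩, hmax⟩ :=
    (isCompact_Icc.of_isClosed_subset hclosed inter_subset_left).exists_isGreatest hz
  exact ⟨z, hzI, hz0, fun y hy hy0 ↦
    (hmax ⟨⟨hzI.1.trans hy.1.le, hy.2⟩, hy0⟩).not_gt hy.1⟩

lemma exists_first_zero_Ici (hh : ContinuousOn h (Ici a)) (hz : ∃ z ∈ Ici a, h z = 0) :
    ∃ z ∈ Ici a, h z = 0 ∧ ∀ y ∈ Ico a z, h y ≠ 0 := by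
  have hclosed : IsClosed (Ici a ∩ h ⁻¹' {0}) :=
    hh.preimage_isClosed_of_isClosed isClosed_Ici isClosed_singleton
  have hbdd : BddBelow (Ici a ∩ h ⁻¹' {0}) := ⟨a, fun _ hy ↦ hy.1⟩
  obtain ⟨hzI, hz0⟩ := hclosed.csInf_mem hz hbdd
  exact ⟨_, hzI, hz0, fun y hy hy0 ↦ (csInf_le hbdd ⟨hy.1, hy0⟩).not_gt hy.2⟩

end Zeros

section Semidifferentials

variable {u v g G : ℝ → ℝ} {a b k p r : ℝ} {s : Set ℝ}

/-- The superdifferential `D⁺u(r)`: the slopes at `r` of the test functions that touch `u` from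
above at `r`, up to an additive constant. Test functions are differentiable on all of `ℝ`. -/
def superdifferential (u : ℝ → ℝ) (r : ℝ) : Set ℝ :=
  {p | ∃ φ : ℝ → ℝ, Differentiable ℝ φ ∧ IsLocalMax (fun x ↦ u x - φ x) r ∧ deriv φ r = p}

/-- The subdifferential `D⁻u(r)`: the slopes at `r` of the test functions that touch `u` from
below at `r`, up to an additive constant. Test functions are differentiable on all of `ℝ`. -/
def subdifferential (u : ℝ → ℝ) (r : ℝ) : Set ℝ :=
  {p | ∃ φ : ℝ → ℝ, Differentiable ℝ φ ∧ IsLocalMin (fun x ↦ u x - φ x) r ∧ deriv φ r = p}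

lemma zero_mem_superdifferential (hu : IsLocalMax u r) : 0 ∈ superdifferential u r :=
  ⟨fun _ ↦ 0, differentiable_const 0, by simpa only [sub_zero] using hu, deriv_const r 0⟩

lemma neg_mem_subdifferential (hp : p ∈ superdifferential (fun x ↦ -u x) r) :
    -p ∈ subdifferential u r := by
  obtain ⟨φ, hφ, hmax, rfl⟩ := hp
  refine ⟨fun x ↦ -φ x, hφ.neg, ?_, deriv.fun_neg⟩
  have hmin := hmax.neg
  simp only [neg_sub'] at hmin
  simpa only [neg_neg] using hmin

lemma neg_mem_superdifferential_of_comp_neg (hp : p ∈ superdifferential (fun x ↦ u (-x)) r) :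
    -p ∈ superdifferential u (-r) := by
  obtain ⟨φ, hφ, hmax, rfl⟩ := hp
  refine ⟨fun x ↦ φ (-x), by fun_prop, ?_, by rw [deriv_comp_neg, neg_neg]⟩
  rw [← neg_neg r] at hmax
  have hcomp := hmax.comp_continuous (g := Neg.neg) continuous_neg.continuousAt
  simpa only [Function.comp_def, neg_neg] using hcomp

lemma add_deriv_mem_superdifferential (hG : Differentiable ℝ G)
    (hp : p ∈ superdifferential (fun x ↦ u x - G x) r) :
    p + deriv G r ∈ superdifferential u r := by
  obtain ⟨φ, hφ, hmax, rfl⟩ := hp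
  refine ⟨fun x ↦ φ x + G x, hφ.add hG, ?_, deriv_fun_add (hφ r) (hG r)⟩
  simpa only [sub_add_eq_sub_sub_swap] using hmax

lemma superdifferential_nonpos_of_antitoneOn (hs : s ∈ 𝓝 r) (hu : AntitoneOn u s)
    (hp : p ∈ superdifferential u r) : p ≤ 0 := by
  obtain ⟨φ, hφ, hmax, rfl⟩ := hp
  have hslope := (hasDerivWithinAt_iff_tendsto_slope' self_notMem_Iio).1
    (hφ r).hasDerivAt.hasDerivWithinAt
  refine le_of_tendsto hslope ?_
  filter_upwards [self_mem_nhdsWithin, mem_nhdsWithin_of_mem_nhds hmax,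
    mem_nhdsWithin_of_mem_nhds hs] with x (hxr : x < r) hx hxs
  have hφx : φ r ≤ φ x := by
    linarith [hu hxs (mem_of_mem_nhds hs) hxr.le]
  rw [slope_def_field]
  exact div_nonpos_of_nonneg_of_nonpos (sub_nonneg.2 hφx) (sub_nonpos.2 hxr.le)

lemma superdifferential_nonneg_of_monotoneOn (hs : s ∈ 𝓝 r) (hu : MonotoneOn u s)
    (hp : p ∈ superdifferential u r) : 0 ≤ p := by
  have hp' : -p ∈ superdifferential (fun x ↦ u (-x)) (-r) :=
    neg_mem_superdifferential_of_comp_neg (by simpa only [neg_neg] using hp)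
  have hs' : Neg.neg ⁻¹' s ∈ 𝓝 (-r) := by
    exact continuous_neg.continuousAt.preimage_mem_nhds (by rwa [neg_neg])
  have hanti : AntitoneOn (fun x ↦ u (-x)) (Neg.neg ⁻¹' s) :=
    fun x hx y hy hxy ↦ hu hy hx (neg_le_neg hxy)
  exact neg_nonpos.1 (superdifferential_nonpos_of_antitoneOn hs' hanti hp')

lemma exists_deriv_mem_superdifferential {φ : ℝ → ℝ} {t : ℝ} (hu : ContinuousOn u (Icc a b))
    (hφ : Differentiable ℝ φ) (ht : t ∈ Ioo a b) (ha : u a - φ a < u t - φ t)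
    (hb : u b - φ b < u t - φ t) : ∃ z ∈ Ioo a b, deriv φ z ∈ superdifferential u z := by
  obtain ⟨z, hz, hmax⟩ := isCompact_Icc.exists_isLocalMax_mem_open Ioo_subset_Icc_self
    (hu.sub hφ.continuous.continuousOn) (Ioo_subset_Icc_self ht) (by
      rw [Icc_sdiff_Ioo_same (ht.1.trans ht.2).le]
      rintro _ (rfl | rfl) <;> assumption) isOpen_Ioo
  exact ⟨z, hz, φ, hφ, hmax, rfl⟩

lemma le_of_superdifferential_nonpos (hab : a ≤ b) (hu : ContinuousOn u (Icc a b))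
    (h : ∀ r ∈ Ioo a b, ∀ p ∈ superdifferential u r, p ≤ 0) : u b ≤ u a := by
  rcases hab.eq_or_lt with rfl | hab
  · exact le_rfl
  suffices hlt : ∀ t ∈ Ioo a b, u t ≤ u a by
    have hcl : closure (Ioo a b) = Icc a b := closure_Ioo hab.ne
    exact le_on_closure hlt (hcl ▸ hu) continuousOn_const (hcl ▸ right_mem_Icc.2 hab.le)
  intro t ht
  by_contra! hat
  set d := u t - u a with hd
  have hdpos : 0 < d := sub_pos.2 hat
  -- A steep exponential barrier of height `d` at `t` forces an interior maximum of `u - φ`.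
  have hexp : Tendsto (fun N : ℝ ↦ Real.exp (N * (b - t))) atTop atTop :=
    Real.tendsto_exp_atTop.comp (tendsto_id.atTop_mul_const (sub_pos.2 ht.2))
  obtain ⟨N, hNexp, hN⟩ : ∃ N : ℝ, (u b - u a) / d < Real.exp (N * (b - t)) ∧ 0 < N :=
    ((hexp.eventually_gt_atTop _).and (eventually_gt_atTop 0)).exists
  set φ : ℝ → ℝ := fun x ↦ d * Real.exp (N * (x - t)) with hφ
  have hφ' (x : ℝ) : HasDerivAt φ (d * (Real.exp (N * (x - t)) * (N * 1))) x :=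
    (((hasDerivAt_id x).sub_const t).const_mul N).exp.const_mul d
  have hφd : Differentiable ℝ φ := fun x ↦ (hφ' x).differentiableAt
  have htval : u t - φ t = u a := by simp [hφ, hd]
  have haval : u a - φ a < u t - φ t := by
    rw [htval]
    exact sub_lt_self _ (by positivity)
  have hbval : u b - φ b < u t - φ t := by
    rw [div_lt_iff₀' hdpos] at hNexp
    rw [htval]
    exact sub_lt_comm.1 hNexp
  obtain ⟨z, hz, hzφ⟩ := exists_deriv_mem_superdifferential hu hφd ht haval hbval
  have hslope : deriv φ z ≤ 0 := h z hz _ hzφ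
  rw [(hφ' z).deriv] at hslope
  exact hslope.not_gt (by positivity)

lemma exists_differentiable_eqOn_deriv_Icc (hab : a ≤ b) (hg : ContinuousOn g (Icc a b)) :
    ∃ G : ℝ → ℝ, Differentiable ℝ G ∧ EqOn (deriv G) g (Icc a b) := by
  set e : ℝ → ℝ := IccExtend hab ((Icc a b).domRestrict g) with he
  have hec : Continuous e := hg.domRestrict.Icc_extend'
  have hG (x : ℝ) : HasDerivAt (fun x ↦ ∫ y in a..x, e y) (e x) x :=
    hec.integral_hasStrictDerivAt a x |>.hasDerivAt
  exact ⟨_, fun x ↦ (hG x).differentiableAt, fun x hx ↦ by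
    rw [(hG x).deriv, he, IccExtend_of_mem _ _ hx, domRestrict_apply]⟩

theorem sub_le_integral_of_superdifferential_le (hab : a ≤ b) (hu : ContinuousOn u (Icc a b))
    (hg : ContinuousOn g (Icc a b)) (h : ∀ r ∈ Ioo a b, ∀ p ∈ superdifferential u r, p ≤ g r) :
    u b - u a ≤ ∫ x in a..b, g x := by
  obtain ⟨G, hG, hGg⟩ := exists_differentiable_eqOn_deriv_Icc hab hg
  rw [← uIcc_of_le hab] at hGg hg
  have hint : ∫ x in a..b, g x = G b - G a := by
    rw [← intervalIntegral.integral_congr hGg]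
    exact intervalIntegral.integral_deriv_eq_sub (fun x _ ↦ hG x)
      (hg.congr hGg).intervalIntegrable
  have hle : u b - G b ≤ u a - G a := by
    refine le_of_superdifferential_nonpos hab (hu.sub hG.continuous.continuousOn) ?_
    intro r hr p hp
    have hpg := h r hr _ (add_deriv_mem_superdifferential hG hp)
    rw [hGg (uIcc_of_le hab ▸ Ioo_subset_Icc_self hr)] at hpg
    linarith
  linarith

theorem integral_le_sub_of_le_superdifferential (hab : a ≤ b) (hu : ContinuousOn u (Icc a b))
    (hg : ContinuousOn g (Icc a b)) (h : ∀ r ∈ Ioo a b, ∀ p ∈ superdifferential u r, g r ≤ p) :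
    ∫ x in a..b, g x ≤ u b - u a := by
  have hmaps : MapsTo Neg.neg (Icc (-b) (-a)) (Icc a b) :=
    fun x hx ↦ ⟨le_neg.1 hx.2, neg_le.1 hx.1⟩
  have hrefl : u (- -a) - u (- -b) ≤ ∫ x in -b..-a, -g (-x) := by
    refine sub_le_integral_of_superdifferential_le (u := fun x ↦ u (-x)) (neg_le_neg hab)
      (hu.comp continuousOn_neg hmaps) (hg.comp continuousOn_neg hmaps).neg ?_
    intro r hr p hp
    exact le_neg.1 (h (-r) ⟨lt_neg.1 hr.2, neg_lt.1 hr.1⟩ _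
      (neg_mem_superdifferential_of_comp_neg hp))
  rw [intervalIntegral.integral_neg, intervalIntegral.integral_comp_neg] at hrefl
  simp only [neg_neg] at hrefl
  linarith

theorem integral_le_sub_of_le_subdifferential (hab : a ≤ b) (hu : ContinuousOn u (Icc a b))
    (hg : ContinuousOn g (Icc a b)) (h : ∀ r ∈ Ioo a b, ∀ p ∈ subdifferential u r, g r ≤ p) :
    ∫ x in a..b, g x ≤ u b - u a := by
  have hneg := sub_le_integral_of_superdifferential_le hab hu.neg hg.neg fun r hr p hp ↦
    le_neg.1 (h r hr _ (neg_mem_subdifferential hp))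
  simp only [Pi.neg_apply, intervalIntegral.integral_neg] at hneg
  linarith

theorem sub_le_integral_of_subdifferential_le (hab : a ≤ b) (hu : ContinuousOn u (Icc a b))
    (hg : ContinuousOn g (Icc a b)) (h : ∀ r ∈ Ioo a b, ∀ p ∈ subdifferential u r, p ≤ g r) :
    u b - u a ≤ ∫ x in a..b, g x := by
  have hneg := integral_le_sub_of_le_superdifferential hab hu.neg hg.neg fun r hr p hp ↦
    neg_le.1 (h r hr _ (neg_mem_subdifferential hp))
  simp only [Pi.neg_apply, intervalIntegral.integral_neg] at hneg
  linarith

lemma monotoneOn_of_superdifferential_nonneg [hs : s.OrdConnected] (hu : ContinuousOn u s)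
    (h : ∀ r ∈ s, ∀ p ∈ superdifferential u r, 0 ≤ p) : MonotoneOn u s := by
  intro x hx y hy hxy
  have hsub : Icc x y ⊆ s := hs.out hx hy
  simpa using integral_le_sub_of_le_superdifferential (g := 0) hxy (hu.mono hsub)
    continuousOn_const fun r hr ↦ h r (hsub (Ioo_subset_Icc_self hr))

lemma not_bddAbove_of_le_superdifferential (hk : 0 < k) (hu : ContinuousOn u (Ici a))
    (h : ∀ r ∈ Ioi a, ∀ p ∈ superdifferential u r, k ≤ p) : ¬ BddAbove (u '' Ici a) := by
  rintro ⟨M, hM⟩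
  obtain ⟨x, hxM, hax⟩ : ∃ x, M - u a < (x - a) * k ∧ a ≤ x :=
    ((((tendsto_atTop_add_const_right _ (-a) tendsto_id).atTop_mul_const hk).eventually_gt_atTop
      _).and (eventually_ge_atTop a)).exists
  have hgrow := integral_le_sub_of_le_superdifferential (g := fun _ ↦ k) hax
    (hu.mono Icc_subset_Ici_self) continuousOn_const fun r hr ↦ h r hr.1
  rw [intervalIntegral.integral_const, smul_eq_mul] at hgrow
  linarith [hM (mem_image_of_mem u hax)]

theorem monotoneOn_sub_of_superdifferential_le_of_le_subdifferential (hab : a < b)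
    (hu : ContinuousOn u (Icc a b)) (hv : ContinuousOn v (Icc a b))
    (hg : ContinuousOn g (Ioo a b)) (hug : ∀ r ∈ Ioo a b, ∀ p ∈ superdifferential u r, p ≤ g r)
    (hgv : ∀ r ∈ Ioo a b, ∀ p ∈ subdifferential v r, g r ≤ p) :
    MonotoneOn (fun x ↦ v x - u x) (Icc a b) := by
  rw [← closure_Ioo hab.ne] at hu hv ⊢
  refine monotoneOn_closure (fun x hx y hy hxy ↦ ?_) (hv.sub hu)
  have hsub : Icc x y ⊆ Ioo a b := ordConnected_Ioo.out hx hy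
  have hux := sub_le_integral_of_superdifferential_le hxy (hu.mono (hsub.trans subset_closure))
    (hg.mono hsub) fun r hr ↦ hug r (hsub (Ioo_subset_Icc_self hr))
  have hvx := integral_le_sub_of_le_subdifferential hxy (hv.mono (hsub.trans subset_closure))
    (hg.mono hsub) fun r hr ↦ hgv r (hsub (Ioo_subset_Icc_self hr))
  linarith

theorem antitoneOn_sub_of_le_superdifferential_of_subdifferential_le (hab : a < b)
    (hu : ContinuousOn u (Icc a b)) (hv : ContinuousOn v (Icc a b))
    (hg : ContinuousOn g (Ioo a b)) (hgu : ∀ r ∈ Ioo a b, ∀ p ∈ superdifferential u r, g r ≤ p)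
    (hvg : ∀ r ∈ Ioo a b, ∀ p ∈ subdifferential v r, p ≤ g r) :
    AntitoneOn (fun x ↦ v x - u x) (Icc a b) := by
  rw [← closure_Ioo hab.ne] at hu hv ⊢
  refine antitoneOn_closure (fun x hx y hy hxy ↦ ?_) (hv.sub hu)
  have hsub : Icc x y ⊆ Ioo a b := ordConnected_Ioo.out hx hy
  have hux := integral_le_sub_of_le_superdifferential hxy (hu.mono (hsub.trans subset_closure))
    (hg.mono hsub) fun r hr ↦ hgu r (hsub (Ioo_subset_Icc_self hr))
  have hvx := sub_le_integral_of_subdifferential_le hxy (hv.mono (hsub.trans subset_closure))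
    (hg.mono hsub) fun r hr ↦ hvg r (hsub (Ioo_subset_Icc_self hr))
  linarith

end Semidifferentials

section DriftEquation

variable {κ h u v : ℝ → ℝ} {a b r₀ δ : ℝ} {s : Set ℝ}

/-- `u` is a viscosity subsolution on `s` of the equation `-κ(r) u'(r) - |u'(r)| = h(r)`,
expressed through superdifferentials; (E) is the case `κ(r) = (n - 1) / r`. -/
def DriftSubsolOn (κ h : ℝ → ℝ) (s : Set ℝ) (u : ℝ → ℝ) : Prop :=
  ∀ r ∈ s, ∀ p ∈ superdifferential u r, -κ r * p - |p| ≤ h r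

/-- `v` is a viscosity supersolution on `s` of the equation `-κ(r) v'(r) - |v'(r)| = h(r)`,
expressed through subdifferentials. -/
def DriftSupersolOn (κ h : ℝ → ℝ) (s : Set ℝ) (v : ℝ → ℝ) : Prop :=
  ∀ r ∈ s, ∀ p ∈ subdifferential v r, h r ≤ -κ r * p - |p|

lemma DriftSubsolOn.mono {t : Set ℝ} (hu : DriftSubsolOn κ h t u) (hst : s ⊆ t) :
    DriftSubsolOn κ h s u :=
  fun r hr ↦ hu r (hst hr)

lemma DriftSupersolOn.mono {t : Set ℝ} (hv : DriftSupersolOn κ h t v) (hst : s ⊆ t) :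
    DriftSupersolOn κ h s v :=
  fun r hr ↦ hv r (hst hr)

-- For `1 < κ` the map `p ↦ -κ p - |p|` is decreasing, and
-- `min (-η / (κ + 1)) (-η / (κ - 1))` is the preimage of `η`.
theorem antitoneOn_sub_of_one_lt (hab : a < b) (hκ : ContinuousOn κ (Ioo a b))
    (hκ_gt : ∀ r ∈ Ioo a b, 1 < κ r) (hh : ContinuousOn h (Ioo a b))
    (hu : ContinuousOn u (Icc a b)) (hv : ContinuousOn v (Icc a b))
    (hsub : DriftSubsolOn κ h (Ioo a b) u) (hsup : DriftSupersolOn κ h (Ioo a b) v) :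
    AntitoneOn (fun x ↦ v x - u x) (Icc a b) := by
  have hplus : ∀ r ∈ Ioo a b, 0 < κ r + 1 := fun r hr ↦ by linarith [hκ_gt r hr]
  have hminus : ∀ r ∈ Ioo a b, 0 < κ r - 1 := fun r hr ↦ by linarith [hκ_gt r hr]
  refine antitoneOn_sub_of_le_superdifferential_of_subdifferential_le
    (g := fun r ↦ min (-h r / (κ r + 1)) (-h r / (κ r - 1))) hab hu hv ?_ ?_ ?_
  · exact (hh.neg.div (hκ.add continuousOn_const) fun r hr ↦ (hplus r hr).ne').inf
      (hh.neg.div (hκ.sub continuousOn_const) fun r hr ↦ (hminus r hr).ne')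
  · intro r hr p hp
    have hpr := hsub r hr p hp
    rw [min_le_iff, div_le_iff₀ (hplus r hr), div_le_iff₀ (hminus r hr)]
    rcases abs_cases p with ⟨habs, -⟩ | ⟨habs, -⟩
    · exact .inl (by linarith)
    · exact .inr (by linarith)
  · intro r hr p hp
    have hpr := hsup r hr p hp
    rw [le_min_iff, le_div_iff₀ (hplus r hr), le_div_iff₀ (hminus r hr)]
    constructor <;> linarith [le_abs_self p, neg_le_abs p]

theorem monotoneOn_sub_of_antitoneOn (hab : a < b) (hκ : ContinuousOn κ (Ioo a b))
    (hκ_lt : ∀ r ∈ Ioo a b, κ r < 1) (hh : ContinuousOn h (Ioo a b))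
    (hu : ContinuousOn u (Icc a b)) (hv : ContinuousOn v (Icc a b))
    (hsub : DriftSubsolOn κ h (Ioo a b) u) (hsup : DriftSupersolOn κ h (Ioo a b) v)
    (hanti : AntitoneOn u (Ioo a b)) : MonotoneOn (fun x ↦ v x - u x) (Icc a b) := by
  have hpos : ∀ r ∈ Ioo a b, 0 < 1 - κ r := fun r hr ↦ sub_pos.2 (hκ_lt r hr)
  refine monotoneOn_sub_of_superdifferential_le_of_le_subdifferential
    (g := fun r ↦ h r / (1 - κ r)) hab hu hv ?_ ?_ ?_
  · exact hh.div (continuousOn_const.sub hκ) fun r hr ↦ (hpos r hr).ne'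
  · intro r hr p hp
    have hp0 := superdifferential_nonpos_of_antitoneOn (Ioo_mem_nhds hr.1 hr.2) hanti hp
    have hpr := hsub r hr p hp
    rw [abs_of_nonpos hp0] at hpr
    rw [le_div_iff₀ (hpos r hr)]
    linarith
  · intro r hr p hp
    have hpr := hsup r hr p hp
    rw [div_le_iff₀ (hpos r hr)]
    linarith [neg_le_abs p]

theorem antitoneOn_sub_of_monotoneOn (hab : a < b) (hκ : ContinuousOn κ (Ioo a b))
    (hκ_gt : ∀ r ∈ Ioo a b, -1 < κ r) (hh : ContinuousOn h (Ioo a b))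
    (hu : ContinuousOn u (Icc a b)) (hv : ContinuousOn v (Icc a b))
    (hsub : DriftSubsolOn κ h (Ioo a b) u) (hsup : DriftSupersolOn κ h (Ioo a b) v)
    (hmono : MonotoneOn u (Ioo a b)) : AntitoneOn (fun x ↦ v x - u x) (Icc a b) := by
  have hpos : ∀ r ∈ Ioo a b, 0 < κ r + 1 := fun r hr ↦ by linarith [hκ_gt r hr]
  refine antitoneOn_sub_of_le_superdifferential_of_subdifferential_le
    (g := fun r ↦ -h r / (κ r + 1)) hab hu hv ?_ ?_ ?_
  · exact hh.neg.div (hκ.add continuousOn_const) fun r hr ↦ (hpos r hr).ne'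
  · intro r hr p hp
    have hp0 := superdifferential_nonneg_of_monotoneOn (Ioo_mem_nhds hr.1 hr.2) hmono hp
    have hpr := hsub r hr p hp
    rw [abs_of_nonneg hp0] at hpr
    rw [div_le_iff₀ (hpos r hr)]
    linarith
  · intro r hr p hp
    have hpr := hsup r hr p hp
    rw [le_div_iff₀ (hpos r hr)]
    linarith [le_abs_self p]

lemma DriftSubsolOn.not_isLocalMax (hsub : DriftSubsolOn κ h s u) (hneg : ∀ r ∈ s, h r < 0) :
    ∀ r ∈ s, ¬ IsLocalMax u r := by
  intro r hr hmax
  have h0 := hsub r hr 0 (zero_mem_superdifferential hmax)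
  rw [mul_zero, abs_zero, sub_zero] at h0
  exact (hneg r hr).not_ge h0

lemma DriftSubsolOn.not_antitoneOn [s.OrdConnected] (hsub : DriftSubsolOn κ h s u)
    (hso : IsOpen s) (hne : s.Nonempty) (hu : ContinuousOn u s) (hκ : ∀ r ∈ s, 1 ≤ κ r)
    (hneg : ∀ r ∈ s, h r < 0) : ¬ AntitoneOn u s := by
  intro hanti
  have hmono : MonotoneOn u s := by
    refine monotoneOn_of_superdifferential_nonneg hu fun r hr p hp ↦ ?_
    by_contra! hp0
    have hpr := hsub r hr p hp
    rw [abs_of_neg hp0] at hpr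
    nlinarith [hκ r hr, hneg r hr]
  -- `u` is constant on `s`, so every point of `s` is a local maximum.
  obtain ⟨r, hr⟩ := hne
  refine hsub.not_isLocalMax hneg r hr ?_
  filter_upwards [hso.mem_nhds hr] with y hy
  rcases le_total y r with hyr | hry
  · exact hmono hy hr hyr
  · exact hanti hr hy hry

lemma DriftSubsolOn.not_bddAbove (hsub : DriftSubsolOn κ h (Ioi a) u)
    (hu : ContinuousOn u (Ici a)) (hκ : ∀ r ∈ Ioi a, κ r ≤ 1) (hδ : 0 < δ)
    (hh : ∀ r ∈ Ioi a, h r ≤ -δ) (hmono : MonotoneOn u (Ici a)) : ¬ BddAbove (u '' Ici a) := by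
  refine not_bddAbove_of_le_superdifferential (half_pos hδ) hu fun r hr p hp ↦ ?_
  have hp0 := superdifferential_nonneg_of_monotoneOn (Ici_mem_nhds hr) hmono hp
  have hpr := hsub r hr p hp
  rw [abs_of_nonneg hp0] at hpr
  have hκp : κ r * p ≤ p := mul_le_of_le_one_left hp0 (hκ r hr)
  linarith [hh r hr]

lemma DriftSubsolOn.not_antitoneOn_component (hsub : DriftSubsolOn κ h (Ioi 0) u) (ha : 0 < a)
    (har : a ≤ r₀) (hκ : ∀ r ∈ Ioo 0 a, 1 ≤ κ r) (hh : ContinuousOn h (Ioi 0))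
    (hu : ContinuousOn u (Ioi 0)) (hneg : ∀ r ∈ Icc a r₀, h r < 0) :
    ¬ AntitoneOn u (ordConnectedComponent {r | 0 < r ∧ h r < 0} r₀ ∩ Iic r₀) := by
  intro hanti
  have hnear : {r | 0 < r ∧ h r < 0} ∈ 𝓝 a :=
    inter_mem (Ioi_mem_nhds ha) ((hh.continuousAt (Ioi_mem_nhds ha)).eventually_lt_const
      (hneg a (left_mem_Icc.2 har)))
  obtain ⟨m, hma, hm⟩ := exists_Ioc_subset_of_mem_nhds hnear ⟨0, ha⟩
  have hneg' : Ioc m r₀ ⊆ {r | 0 < r ∧ h r < 0} := fun r hr ↦ by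
    rcases le_total r a with hra | har'
    · exact hm ⟨hr.1, hra⟩
    · exact ⟨ha.trans_le har', hneg r ⟨har', hr.2⟩⟩
  have hcomp : Ioo m a ⊆ ordConnectedComponent {r | 0 < r ∧ h r < 0} r₀ ∩ Iic r₀ := fun r hr ↦
    ⟨subset_ordConnectedComponent (right_mem_Ioc.2 (hma.trans_le har)) hneg'
      ⟨hr.1, hr.2.le.trans har⟩, hr.2.le.trans har⟩
  have hpos : Ioo m a ⊆ Ioi 0 := fun r hr ↦ (hm (Ioo_subset_Ioc_self hr)).1
  exact (hsub.mono hpos).not_antitoneOn isOpen_Ioo (nonempty_Ioo.2 hma) (hu.mono hpos)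
    (fun r hr ↦ hκ r ⟨hpos hr, hr.2⟩) (fun r hr ↦ (hm (Ioo_subset_Ioc_self hr)).2)
    (hanti.mono hcomp)

lemma DriftSubsolOn.not_monotoneOn_component (hsub : DriftSubsolOn κ h (Ioi 0) u) (hr₀ : 0 < r₀)
    (hκ : ∀ r ∈ Ioi r₀, κ r ≤ 1) (hδ : 0 < δ) (hh_top : ∀ᶠ r in atTop, h r ≤ -δ)
    (hneg : ∀ r ∈ Ici r₀, h r < 0) (hu : ContinuousOn u (Ici r₀))
    (hbdd : BddAbove (u '' Ici r₀)) :
    ¬ MonotoneOn u (ordConnectedComponent {r | 0 < r ∧ h r < 0} r₀ ∩ Ici r₀) := by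
  intro hmono
  obtain ⟨t, ht⟩ := eventually_atTop.1 hh_top
  have htop : Ici (max t r₀) ⊆ Ici r₀ := Ici_subset_Ici.2 (le_max_right t r₀)
  have hcomp : Ici r₀ ⊆ ordConnectedComponent {r | 0 < r ∧ h r < 0} r₀ :=
    subset_ordConnectedComponent self_mem_Ici fun r hr ↦ ⟨hr₀.trans_le hr, hneg r hr⟩
  have hpos : Ioi (max t r₀) ⊆ Ioi 0 :=
    Ioi_subset_Ioi (hr₀.le.trans (le_max_right t r₀))
  exact (hsub.mono hpos).not_bddAbove (hu.mono htop)
    (fun r hr ↦ hκ r (lt_of_le_of_lt (le_max_right t r₀) hr)) hδ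
    (fun r hr ↦ ht r ((le_max_left _ _).trans (le_of_lt hr)))
    (hmono.mono fun r hr ↦ ⟨hcomp (htop hr), htop hr⟩) (hbdd.mono (image_mono htop))

lemma le_of_antitoneOn_component (ha : 0 < a) (har : a ≤ r₀) (hκ : ContinuousOn κ (Ioi 0))
    (hκ_gt : ∀ r ∈ Ioo 0 a, 1 < κ r) (hκ_lt : ∀ r ∈ Ioi a, κ r < 1)
    (hh : ContinuousOn h (Ioi 0)) (hh_nonpos : ∀ r ∈ Ici a, h r ≤ 0)
    (hu : ContinuousOn u (Ioi 0)) (hv : ContinuousOn v (Ioi 0))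
    (hsub : DriftSubsolOn κ h (Ioi 0) u) (hsup : DriftSupersolOn κ h (Ioi 0) v)
    (hle : ∀ r ∈ Ici a, h r = 0 → u r ≤ v r)
    (hanti : AntitoneOn u (ordConnectedComponent {r | 0 < r ∧ h r < 0} r₀ ∩ Iic r₀)) :
    u r₀ ≤ v r₀ := by
  have hz : ∃ z ∈ Icc a r₀, h z = 0 := by
    by_contra! hne
    exact hsub.not_antitoneOn_component ha har (fun r hr ↦ (hκ_gt r hr).le) hh hu
      (fun r hr ↦ (hh_nonpos r hr.1).lt_of_ne (hne r hr)) hanti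
  obtain ⟨b, hb, hb0, hne⟩ :=
    exists_last_zero_Icc (hh.mono fun r hr ↦ ha.trans_le hr.1) hz
  rcases hb.2.eq_or_lt with rfl | hbr
  · exact hle b hb.1 hb0
  have hpos : Icc b r₀ ⊆ Ioi 0 := fun r hr ↦ ha.trans_le (hb.1.trans hr.1)
  have hpos' : Ioo b r₀ ⊆ Ioi 0 := Ioo_subset_Icc_self.trans hpos
  have hneg : Ioc b r₀ ⊆ {r | 0 < r ∧ h r < 0} := fun r hr ↦
    ⟨hpos (Ioc_subset_Icc_self hr), (hh_nonpos r (hb.1.trans hr.1.le)).lt_of_ne (hne r hr)⟩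
  have hcomp : Ioo b r₀ ⊆ ordConnectedComponent {r | 0 < r ∧ h r < 0} r₀ ∩ Iic r₀ := fun r hr ↦
    ⟨subset_ordConnectedComponent (right_mem_Ioc.2 hbr) hneg (Ioo_subset_Ioc_self hr), hr.2.le⟩
  have hmono := monotoneOn_sub_of_antitoneOn hbr (hκ.mono hpos')
    (fun r hr ↦ hκ_lt r (hb.1.trans_lt hr.1)) (hh.mono hpos') (hu.mono hpos) (hv.mono hpos)
    (hsub.mono hpos') (hsup.mono hpos') (hanti.mono hcomp)
  linarith [hmono (left_mem_Icc.2 hbr.le) (right_mem_Icc.2 hbr.le) hbr.le, hle b hb.1 hb0]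

lemma le_of_monotoneOn_component (ha : 0 < a) (har : a ≤ r₀) (hκ : ContinuousOn κ (Ioi 0))
    (hκ_lt : ∀ r ∈ Ioi a, |κ r| < 1) (hh : ContinuousOn h (Ioi 0))
    (hh_nonpos : ∀ r ∈ Ici a, h r ≤ 0) (hδ : 0 < δ) (hh_top : ∀ᶠ r in atTop, h r ≤ -δ)
    (hu : ContinuousOn u (Ioi 0)) (hv : ContinuousOn v (Ioi 0)) (hbdd : BddAbove (u '' Ioi 0))
    (hsub : DriftSubsolOn κ h (Ioi 0) u) (hsup : DriftSupersolOn κ h (Ioi 0) v)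
    (hle : ∀ r ∈ Ici a, h r = 0 → u r ≤ v r)
    (hmono : MonotoneOn u (ordConnectedComponent {r | 0 < r ∧ h r < 0} r₀ ∩ Ici r₀)) :
    u r₀ ≤ v r₀ := by
  have hpos : Ici r₀ ⊆ Ioi 0 := fun r hr ↦ ha.trans_le (har.trans hr)
  have hneg {r : ℝ} (hr : r₀ ≤ r) (hr0 : h r ≠ 0) : r ∈ {r | 0 < r ∧ h r < 0} :=
    ⟨hpos hr, (hh_nonpos r (har.trans hr)).lt_of_ne hr0⟩
  have hz : ∃ z ∈ Ici r₀, h z = 0 := by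
    by_contra! hne
    exact hsub.not_monotoneOn_component (ha.trans_le har)
      (fun r hr ↦ (abs_lt.1 (hκ_lt r (har.trans_lt hr))).2.le) hδ hh_top
      (fun r hr ↦ (hneg hr (hne r hr)).2) (hu.mono hpos) (hbdd.mono (image_mono hpos)) hmono
  obtain ⟨b, hb, hb0, hne⟩ := exists_first_zero_Ici (hh.mono hpos) hz
  rcases (mem_Ici.1 hb).eq_or_lt with rfl | hrb
  · exact hle r₀ har hb0
  have hpos' : Icc r₀ b ⊆ Ioi 0 := Icc_subset_Ici_self.trans hpos
  have hpos'' : Ioo r₀ b ⊆ Ioi 0 := Ioo_subset_Icc_self.trans hpos'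
  have hcomp : Ioo r₀ b ⊆ ordConnectedComponent {r | 0 < r ∧ h r < 0} r₀ ∩ Ici r₀ := fun r hr ↦
    ⟨subset_ordConnectedComponent (left_mem_Ico.2 hrb) (fun x hx ↦ hneg hx.1 (hne x hx))
      (Ioo_subset_Ico_self hr), hr.1.le⟩
  have hanti := antitoneOn_sub_of_monotoneOn hrb (hκ.mono hpos'')
    (fun r hr ↦ (abs_lt.1 (hκ_lt r (har.trans_lt hr.1))).1) (hh.mono hpos'') (hu.mono hpos')
    (hv.mono hpos') (hsub.mono hpos'') (hsup.mono hpos'') (hmono.mono hcomp)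
  linarith [hanti (left_mem_Icc.2 hrb.le) (right_mem_Icc.2 hrb.le) hrb.le,
    hle b (har.trans hb) hb0]

theorem le_of_driftSubsolOn_of_driftSupersolOn (ha : 0 < a) (hκ : ContinuousOn κ (Ioi 0))
    (hκ_gt : ∀ r ∈ Ioo 0 a, 1 < κ r) (hκ_lt : ∀ r ∈ Ioi a, |κ r| < 1)
    (hh : ContinuousOn h (Ioi 0)) (hh_nonpos : ∀ r ∈ Ici a, h r ≤ 0) (hδ : 0 < δ)
    (hh_top : ∀ᶠ r in atTop, h r ≤ -δ)
    (hu : ContinuousOn u (Ici 0)) (hv : ContinuousOn v (Ici 0)) (hbdd : BddAbove (u '' Ioi 0))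
    (hsub : DriftSubsolOn κ h (Ioi 0) u) (hsup : DriftSupersolOn κ h (Ioi 0) v)
    (hle : ∀ r ∈ Ici a, h r = 0 → u r ≤ v r) : ∀ r ∈ Ici 0, u r ≤ v r := by
  have hle_right : ∀ r ∈ Ici a, u r ≤ v r := by
    intro r har
    have hu' := hu.mono Ioi_subset_Ici_self
    have hv' := hv.mono Ioi_subset_Ici_self
    set C := ordConnectedComponent {r | 0 < r ∧ h r < 0} r
    have hC {x : ℝ} (hx : x ∈ C) : x ∈ {r | 0 < r ∧ h r < 0} :=
      ordConnectedComponent_subset hx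
    rcases antitoneOn_inter_Iic_or_monotoneOn_inter_Ici (s := C)
      (hu'.mono fun x hx ↦ (hC hx).1)
      ((hsub.mono fun x hx ↦ (hC hx).1).not_isLocalMax fun x hx ↦ (hC hx).2) r with hanti | hmono
    · exact le_of_antitoneOn_component ha har hκ hκ_gt (fun x hx ↦ (abs_lt.1 (hκ_lt x hx)).2) hh
        hh_nonpos hu' hv' hsub hsup hle hanti
    · exact le_of_monotoneOn_component ha har hκ hκ_lt hh hh_nonpos hδ hh_top hu' hv' hbdd hsub
        hsup hle hmono
  intro r hr
  rcases le_or_gt a r with har | hra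
  · exact hle_right r har
  have hnonneg : Icc r a ⊆ Ici 0 := fun x hx ↦ le_trans hr hx.1
  have hpos : Ioo r a ⊆ Ioi 0 := fun x hx ↦ lt_of_le_of_lt hr hx.1
  have hanti := antitoneOn_sub_of_one_lt hra (hκ.mono hpos)
    (fun x hx ↦ hκ_gt x ⟨hpos hx, hx.2⟩) (hh.mono hpos) (hu.mono hnonneg) (hv.mono hnonneg)
    (hsub.mono hpos) (hsup.mono hpos)
  linarith [hanti (left_mem_Icc.2 hra.le) (right_mem_Icc.2 hra.le) hra.le,
    hle_right a self_mem_Ici]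

end DriftEquation

lemma ViscSubsolE.driftSubsolOn {n : ℕ} {h u : ℝ → ℝ} {s : Set ℝ} (hu : ViscSubsolE n h s u) :
    DriftSubsolOn (fun r ↦ ((n : ℝ) - 1) / r) h s u := by
  rintro r hr _ ⟨φ, hφ, hmax, rfl⟩
  exact hu φ hφ.differentiableOn r hr hmax

lemma ViscSupersolE.driftSupersolOn {n : ℕ} {h v : ℝ → ℝ} {s : Set ℝ}
    (hv : ViscSupersolE n h s v) : DriftSupersolOn (fun r ↦ ((n : ℝ) - 1) / r) h s v := by
  rintro r hr _ ⟨φ, hφ, hmin, rfl⟩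
  exact hv φ hφ.differentiableOn r hr hmin

theorem stmt_9_general {n : ℕ} (hn : 2 ≤ n) {h : ℝ → ℝ} (hh : ContinuousOn h (Ioi 0))
    (hh_nonpos : ∀ r ∈ Ici ((n : ℝ) - 1), h r ≤ 0) {δ : ℝ} (hδ : 0 < δ)
    (hh_top : ∀ᶠ r in atTop, h r ≤ -δ) {u v : ℝ → ℝ} (hu : ContinuousOn u (Ici 0))
    (hv : ContinuousOn v (Ici 0)) (hbdd : BddAbove (u '' Ioi 0))
    (hsub : ViscSubsolE n h (Ioi 0) u) (hsup : ViscSupersolE n h (Ioi 0) v)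
    (hle : ∀ r ∈ Ici ((n : ℝ) - 1), h r = 0 → u r ≤ v r) : ∀ r ∈ Ici 0, u r ≤ v r := by
  have ha : (0 : ℝ) < n - 1 := sub_pos.2 (by exact_mod_cast hn)
  refine le_of_driftSubsolOn_of_driftSupersolOn ha ?_ ?_ ?_ hh hh_nonpos hδ hh_top hu hv hbdd
    hsub.driftSubsolOn hsup.driftSupersolOn hle
  · exact continuousOn_const.div continuousOn_id fun r hr ↦ (mem_Ioi.1 hr).ne'
  · exact fun r hr ↦ (one_lt_div hr.1).2 hr.2
  · intro r hr
    have hr0 : 0 < r := ha.trans hr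
    rw [abs_of_pos (div_pos ha hr0)]
    exact (div_lt_one hr0).2 hr

/-- Comparison on the uniqueness set: a bounded-from-above continuous
viscosity subsolution `ξ₁` and supersolution `ξ₂` of (E) on `(0,∞)` with `ξ₁ ≤ ξ₂` on
`Ã = {r ≥ n-1 : f̃(r) = c}` satisfy `ξ₁ ≤ ξ₂` on `[0,∞)`. -/
theorem stmt_9 (n : ℕ) (hn : 2 ≤ n) (ftilde : ℝ → ℝ)
    (hfC1 : ContDiffOn ℝ 1 ftilde (Set.Ici 0))
    (hfnonneg : ∀ r ∈ Set.Ici (0 : ℝ), 0 ≤ ftilde r)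
    (hfsupp : ∃ R : ℝ, 0 < R ∧ ∀ r ≥ R, ftilde r = 0)
    (c : ℝ) (hc : IsGreatest (ftilde '' Set.Ici ((n : ℝ) - 1)) c) (hcpos : 0 < c)
    (ξ₁ ξ₂ : ℝ → ℝ)
    (hξ₁cont : ContinuousOn ξ₁ (Set.Ici 0)) (hξ₂cont : ContinuousOn ξ₂ (Set.Ici 0))
    (hξ₁ : ViscSubsolE n (fun r => ftilde r - c) (Set.Ioi 0) ξ₁)
    (hξ₂ : ViscSupersolE n (fun r => ftilde r - c) (Set.Ioi 0) ξ₂)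
    (hbd₁ : BddAbove (ξ₁ '' Set.Ici 0)) (hbd₂ : BddAbove (ξ₂ '' Set.Ici 0))
    (hle : ∀ r ∈ {r : ℝ | (n : ℝ) - 1 ≤ r ∧ ftilde r = c}, ξ₁ r ≤ ξ₂ r) :
    ∀ r ∈ Set.Ici (0 : ℝ), ξ₁ r ≤ ξ₂ r := by
  obtain ⟨R, -, hR⟩ := hfsupp
  exact stmt_9_general (h := fun r ↦ ftilde r - c) hn
    (hfC1.continuousOn.mono Ioi_subset_Ici_self |>.sub continuousOn_const)
    (fun r hr ↦ sub_nonpos.2 (hc.2 (mem_image_of_mem ftilde hr))) hcpos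
    (eventually_atTop.2 ⟨R, fun r hr ↦ by rw [hR r hr, zero_sub]⟩) hξ₁cont hξ₂cont
    (hbd₁.mono (image_mono Ioi_subset_Ici_self)) hξ₁ hξ₂
    fun r hr hr0 ↦ hle r ⟨hr, sub_eq_zero.1 hr0⟩
end

section
/- Assume f(x) = f̃(|x|) with f̃ : [0,∞) → ℝ a C¹ nonnegative function with compact support, not identically zero, and u₀(x) = ũ₀(|x|) with ũ₀ bounded and uniformly continuous on [0,∞). Let u : ℝⁿ × [0,∞) → ℝ be continuous, bounded and uniformly continuous on ℝⁿ × [0,T] for every T > 0, with u(·,0) = u₀, and a viscosity solution of u_t - (div(Du/|Du|)+1)|Du| = f(x) in ℝⁿ × (0,∞). Set c := max_{|x| ≥ n-1} f(x). Then there exists a continuous function v_∞ : ℝⁿ → ℝ which is a viscosity solution of -(div(Dv/|Dv|)+1)|Dv| = f(x) - c in ℝⁿ, such that u(x,t) - c·t → v_∞(x) locally uniformly in x ∈ ℝⁿ as t → ∞. -/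
open Set Filter Topology
open scoped RealInnerProductSpace

noncomputable section

/-- The trace of a continuous linear endomorphism of `ℝⁿ`. -/
def clmTrace {n : ℕ} (A : EuclideanSpace ℝ (Fin n) →L[ℝ] EuclideanSpace ℝ (Fin n)) : ℝ :=
  LinearMap.trace ℝ (EuclideanSpace ℝ (Fin n)) A.toLinearMap

/-- The (spatial) Hessian of `φ : ℝⁿ → ℝ` at `x`, as the derivative of the gradient. -/
def hess {n : ℕ} (φ : EuclideanSpace ℝ (Fin n) → ℝ) (x : EuclideanSpace ℝ (Fin n)) :
    EuclideanSpace ℝ (Fin n) →L[ℝ] EuclideanSpace ℝ (Fin n) :=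
  fderiv ℝ (gradient φ) x

/-- `tr((I - η⊗η) D²φ(x))` for a continuous linear map `A = D²φ(x)` and `η ∈ ℝⁿ`. -/
def trProj {n : ℕ} (A : EuclideanSpace ℝ (Fin n) →L[ℝ] EuclideanSpace ℝ (Fin n))
    (η : EuclideanSpace ℝ (Fin n)) : ℝ :=
  clmTrace A - ⟪A η, η⟫

/-- `v` is a viscosity subsolution of the stationary level-set equation
`-(div(Dv/|Dv|)+1)|Dv| = g(x)` on the open set `O ⊆ ℝⁿ`.  When the gradient of
the test function does not vanish one uses `η = Dφ/|Dφ|`, noting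
`div(Dφ/|Dφ|)·|Dφ| = tr((I - η⊗η) D²φ)`; when it vanishes, some `η` with `|η| ≤ 1`. -/
def StatSubsol {n : ℕ} (g : EuclideanSpace ℝ (Fin n) → ℝ) (O : Set (EuclideanSpace ℝ (Fin n)))
    (v : EuclideanSpace ℝ (Fin n) → ℝ) : Prop :=
  ∀ φ : EuclideanSpace ℝ (Fin n) → ℝ, ContDiff ℝ 2 φ →
    ∀ x₀ ∈ O, IsLocalMax (fun x => v x - φ x) x₀ →
      (gradient φ x₀ ≠ 0 →
        -(trProj (hess φ x₀) (‖gradient φ x₀‖⁻¹ • gradient φ x₀) + ‖gradient φ x₀‖) ≤ g x₀) ∧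
      (gradient φ x₀ = 0 →
        ∃ η : EuclideanSpace ℝ (Fin n), ‖η‖ ≤ 1 ∧ -(trProj (hess φ x₀) η) ≤ g x₀)

/-- Viscosity supersolution of the stationary level-set equation
`-(div(Dv/|Dv|)+1)|Dv| = g(x)` on the open set `O ⊆ ℝⁿ`. -/
def StatSupersol {n : ℕ} (g : EuclideanSpace ℝ (Fin n) → ℝ) (O : Set (EuclideanSpace ℝ (Fin n)))
    (v : EuclideanSpace ℝ (Fin n) → ℝ) : Prop :=
  ∀ φ : EuclideanSpace ℝ (Fin n) → ℝ, ContDiff ℝ 2 φ →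
    ∀ x₀ ∈ O, IsLocalMin (fun x => v x - φ x) x₀ →
      (gradient φ x₀ ≠ 0 →
        -(trProj (hess φ x₀) (‖gradient φ x₀‖⁻¹ • gradient φ x₀) + ‖gradient φ x₀‖) ≥ g x₀) ∧
      (gradient φ x₀ = 0 →
        ∃ η : EuclideanSpace ℝ (Fin n), ‖η‖ ≤ 1 ∧ -(trProj (hess φ x₀) η) ≥ g x₀)

/-- Spatial gradient of a space-time test function. -/
def sGrad {n : ℕ} (φ : EuclideanSpace ℝ (Fin n) → ℝ → ℝ) (x : EuclideanSpace ℝ (Fin n))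
    (t : ℝ) : EuclideanSpace ℝ (Fin n) :=
  gradient (fun y => φ y t) x

/-- Spatial Hessian of a space-time test function. -/
def sHess {n : ℕ} (φ : EuclideanSpace ℝ (Fin n) → ℝ → ℝ) (x : EuclideanSpace ℝ (Fin n))
    (t : ℝ) : EuclideanSpace ℝ (Fin n) →L[ℝ] EuclideanSpace ℝ (Fin n) :=
  fderiv ℝ (fun y => gradient (fun z => φ z t) y) x

/-- Time derivative of a space-time test function. -/
def tDeriv {n : ℕ} (φ : EuclideanSpace ℝ (Fin n) → ℝ → ℝ) (x : EuclideanSpace ℝ (Fin n))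
    (t : ℝ) : ℝ :=
  deriv (fun s => φ x s) t

/-- `u` is a viscosity subsolution of the level-set equation
`u_t - (div(Du/|Du|)+1)|Du| = f(x)` in `O × (0,∞)`: at any local maximum `(x₀,t₀)`,
`t₀ > 0`, `x₀ ∈ O`, of `u - φ` with `φ` C², the subsolution inequality holds, where
`(div(D_xφ/|D_xφ|)+1)|D_xφ| = tr((I - η⊗η) D_x²φ) + |D_xφ|` with `η = D_xφ/|D_xφ|`
if `D_xφ ≠ 0`, and with some `η`, `|η| ≤ 1`, and no `|D_xφ|` term if `D_xφ = 0`. -/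
def ParabSubsol {n : ℕ} (f : EuclideanSpace ℝ (Fin n) → ℝ) (O : Set (EuclideanSpace ℝ (Fin n)))
    (u : EuclideanSpace ℝ (Fin n) → ℝ → ℝ) : Prop :=
  ∀ φ : EuclideanSpace ℝ (Fin n) → ℝ → ℝ,
    ContDiff ℝ 2 (fun p : EuclideanSpace ℝ (Fin n) × ℝ => φ p.1 p.2) →
    ∀ x₀ ∈ O, ∀ t₀ : ℝ, 0 < t₀ →
      IsLocalMax (fun p : EuclideanSpace ℝ (Fin n) × ℝ => u p.1 p.2 - φ p.1 p.2) (x₀, t₀) →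
        (sGrad φ x₀ t₀ ≠ 0 →
          tDeriv φ x₀ t₀ -
            (trProj (sHess φ x₀ t₀) (‖sGrad φ x₀ t₀‖⁻¹ • sGrad φ x₀ t₀) + ‖sGrad φ x₀ t₀‖)
            ≤ f x₀) ∧
        (sGrad φ x₀ t₀ = 0 →
          ∃ η : EuclideanSpace ℝ (Fin n), ‖η‖ ≤ 1 ∧
            tDeriv φ x₀ t₀ - trProj (sHess φ x₀ t₀) η ≤ f x₀)

/-- Viscosity supersolution of the level-set equation
`u_t - (div(Du/|Du|)+1)|Du| = f(x)` in `O × (0,∞)`. -/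
def ParabSupersol {n : ℕ} (f : EuclideanSpace ℝ (Fin n) → ℝ) (O : Set (EuclideanSpace ℝ (Fin n)))
    (u : EuclideanSpace ℝ (Fin n) → ℝ → ℝ) : Prop :=
  ∀ φ : EuclideanSpace ℝ (Fin n) → ℝ → ℝ,
    ContDiff ℝ 2 (fun p : EuclideanSpace ℝ (Fin n) × ℝ => φ p.1 p.2) →
    ∀ x₀ ∈ O, ∀ t₀ : ℝ, 0 < t₀ →
      IsLocalMin (fun p : EuclideanSpace ℝ (Fin n) × ℝ => u p.1 p.2 - φ p.1 p.2) (x₀, t₀) →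
        (sGrad φ x₀ t₀ ≠ 0 →
          tDeriv φ x₀ t₀ -
            (trProj (sHess φ x₀ t₀) (‖sGrad φ x₀ t₀‖⁻¹ • sGrad φ x₀ t₀) + ‖sGrad φ x₀ t₀‖)
            ≥ f x₀) ∧
        (sGrad φ x₀ t₀ = 0 →
          ∃ η : EuclideanSpace ℝ (Fin n), ‖η‖ ≤ 1 ∧
            tDeriv φ x₀ t₀ - trProj (sHess φ x₀ t₀) η ≥ f x₀)

end

/-! In the radial variable `r = |x|` the equation for `w = u - c t` is of first order,
`w_t - (N / r) w_r - |w_r| = g(r)` with `N = n - 1` and `g = f̃ - c`, where `g ≤ 0` on `[N, ∞)` with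
equality at some contact radii. Doubling variables with the penalty `K ||x| - |y||`, whose drift
term `K N (1/r - 1/s)` absorbs the variation of `g`, gives a comparison principle, bounds on `w` and
a modulus of continuity in `x`, all uniform in time.

At a contact radius `a` the cone `-K |r - a|` is a subsolution, so `w` is nondecreasing in time
there, and it converges because it is bounded. Away from the contact radii there is a strict
barrier: either `g < 0`, or `r < N` and the drift `N / r` beats the unit speed of the front.
Comparing `w(· + h)` with `(1 - μ) w` plus `μ` times this barrier transports the convergence from
the contact radii to all `x`: for large `t`, `w(x, t + h) ≤ w(x, t) + ε` for every `h ≥ 0`. With the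
modulus of continuity, `w` converges locally uniformly, and stability of viscosity solutions
identifies the limit equation. -/

section LevelSet

variable {n : ℕ}

local notation "𝔼" => EuclideanSpace ℝ (Fin n)

/-- `b ≤ tr((I - η⊗η)A) + σ|p|` for some admissible direction `η`: the two requirements on `η`
say `η = p/|p|` if `p ≠ 0` and `|η| ≤ 1` if `p = 0`, which merges the two branches of the
viscosity inequality. The sign is `σ = 1` for subsolutions and `σ = -1` for negatives of
supersolutions. -/
def LevelSetBound (σ : ℝ) (A : 𝔼 →L[ℝ] 𝔼) (p : 𝔼) (b : ℝ) : Prop :=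
  ∃ η : 𝔼, ‖η‖ ≤ 1 ∧ ‖p‖ • η = p ∧ b ≤ trProj A η + σ * ‖p‖

theorem levelSetBound_iff {σ b : ℝ} {A : 𝔼 →L[ℝ] 𝔼} {p : 𝔼} :
    LevelSetBound σ A p b ↔
      (p ≠ 0 → b ≤ trProj A (‖p‖⁻¹ • p) + σ * ‖p‖) ∧
      (p = 0 → ∃ η : 𝔼, ‖η‖ ≤ 1 ∧ b ≤ trProj A η) := by
  rcases eq_or_ne p 0 with rfl | hp
  · simp [LevelSetBound]
  · have hp' : ‖p‖ ≠ 0 := norm_ne_zero_iff.2 hp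
    simp only [LevelSetBound, ne_eq, hp, not_false_eq_true, forall_true_left, false_implies,
      and_true]
    constructor
    · rintro ⟨η, -, hη, hb⟩
      rwa [← (eq_inv_smul_iff₀ hp').2 hη]
    · intro hb
      exact ⟨‖p‖⁻¹ • p, by rw [norm_smul, norm_inv, norm_norm, inv_mul_cancel₀ hp'],
        smul_inv_smul₀ hp' p, hb⟩

theorem trProj_neg (A : 𝔼 →L[ℝ] 𝔼) (η : 𝔼) : trProj (-A) η = -trProj A η := by
  simp [trProj, clmTrace]; ring

theorem trProj_neg_right (A : 𝔼 →L[ℝ] 𝔼) (η : 𝔼) : trProj A (-η) = trProj A η := by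
  simp [trProj]

theorem continuous_trProj : Continuous fun q : (𝔼 →L[ℝ] 𝔼) × 𝔼 => trProj q.1 q.2 := by
  have htrace : Continuous (clmTrace (n := n)) := LinearMap.continuous_of_finiteDimensional
    ((LinearMap.trace ℝ 𝔼).comp (ContinuousLinearMap.coeLM ℝ : (𝔼 →L[ℝ] 𝔼) →ₗ[ℝ] _))
  unfold trProj
  exact (htrace.comp continuous_fst).sub (by fun_prop)

theorem LevelSetBound.of_tendsto {σ b₀ : ℝ} {A₀ : 𝔼 →L[ℝ] 𝔼} {p₀ : 𝔼}
    {A : ℕ → 𝔼 →L[ℝ] 𝔼} {p : ℕ → 𝔼} {b : ℕ → ℝ} (hA : Tendsto A atTop (𝓝 A₀))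
    (hp : Tendsto p atTop (𝓝 p₀)) (hb : Tendsto b atTop (𝓝 b₀))
    (h : ∀ᶠ k in atTop, LevelSetBound σ (A k) (p k) (b k)) : LevelSetBound σ A₀ p₀ b₀ := by
  obtain ⟨K, hK⟩ := eventually_atTop.1 h
  choose! η hη hηp hbη using hK
  obtain ⟨η₀, hη₀, ψ, hψ, hlim⟩ := (isCompact_closedBall (0 : 𝔼) 1).tendsto_subseq
    (x := fun k => η (k + K)) (fun k => by simpa using hη (k + K) (by omega))
  have hψK : Tendsto (fun k => ψ k + K) atTop atTop :=
    (tendsto_add_atTop_nat K).comp hψ.tendsto_atTop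
  have htr := (continuous_trProj.tendsto (A₀, η₀)).comp ((hA.comp hψK).prodMk_nhds hlim)
  refine ⟨η₀, by simpa using hη₀, ?_, ?_⟩
  · exact tendsto_nhds_unique (((hp.comp hψK).norm.smul hlim).congr
      fun k => hηp (ψ k + K) (by omega)) (hp.comp hψK)
  · exact le_of_tendsto_of_tendsto' (hb.comp hψK) (htr.add ((hp.comp hψK).norm.const_mul σ))
      fun k => hbη (ψ k + K) (by omega)

/-- The viscosity inequality `u_t - tr((I - η⊗η)D²u) - σ|Du| ≤ g`, tested only against functions
of the form `Φ(x) + h(t)`. With `σ = 1` this is implied by being a subsolution, with `σ = -1` it is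
the condition on `-u` implied by `u` being a supersolution with source `-g`. -/
def SeparatedSubsol (σ : ℝ) (g : 𝔼 → ℝ) (u : 𝔼 → ℝ → ℝ) : Prop :=
  ∀ (Φ : 𝔼 → ℝ) (h : ℝ → ℝ), ContDiff ℝ 2 Φ → ContDiff ℝ 2 h → ∀ (x₀ : 𝔼) (t₀ : ℝ), 0 < t₀ →
    IsLocalMax (fun p : 𝔼 × ℝ => u p.1 p.2 - (Φ p.1 + h p.2)) (x₀, t₀) →
      LevelSetBound σ (hess Φ x₀) (gradient Φ x₀) (deriv h t₀ - g x₀)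

theorem sGrad_separated (Φ : 𝔼 → ℝ) (h : ℝ → ℝ) (x : 𝔼) (t : ℝ) :
    sGrad (fun x t => Φ x + h t) x t = gradient Φ x := by
  simp [sGrad, gradient]

theorem sHess_separated (Φ : 𝔼 → ℝ) (h : ℝ → ℝ) (x : 𝔼) (t : ℝ) :
    sHess (fun x t => Φ x + h t) x t = hess Φ x :=
  congrArg (fderiv ℝ · x) (funext fun y => sGrad_separated Φ h y t)

theorem tDeriv_separated (Φ : 𝔼 → ℝ) (h : ℝ → ℝ) (x : 𝔼) (t : ℝ) :
    tDeriv (fun x t => Φ x + h t) x t = deriv h t :=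
  deriv_const_add ..

theorem gradient_neg (Φ : 𝔼 → ℝ) : gradient (fun x => -Φ x) = -gradient Φ := by
  funext x; simp [gradient]

theorem hess_neg (Φ : 𝔼 → ℝ) : hess (fun x => -Φ x) = -hess Φ := by
  funext x; rw [hess, gradient_neg, fderiv_neg]; rfl

theorem ParabSubsol.separatedSubsol {g : 𝔼 → ℝ} {u : 𝔼 → ℝ → ℝ} (hu : ParabSubsol g univ u) :
    SeparatedSubsol 1 g u := by
  intro Φ h hΦ hh x₀ t₀ ht₀ hmax
  have htest := hu (fun x t => Φ x + h t) ((hΦ.comp contDiff_fst).add (hh.comp contDiff_snd))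
    x₀ (mem_univ _) t₀ ht₀ hmax
  rw [sGrad_separated, sHess_separated, tDeriv_separated] at htest
  refine levelSetBound_iff.2 ⟨fun hp => by linarith [htest.1 hp], fun hp => ?_⟩
  obtain ⟨η, hη, hle⟩ := htest.2 hp
  exact ⟨η, hη, by linarith⟩

theorem ParabSupersol.separatedSubsol_neg {g : 𝔼 → ℝ} {u : 𝔼 → ℝ → ℝ}
    (hu : ParabSupersol g univ u) :
    SeparatedSubsol (-1) (fun x => -g x) (fun x t => -u x t) := by
  intro Φ h hΦ hh x₀ t₀ ht₀ hmax
  have hmin : IsLocalMin (fun p : 𝔼 × ℝ => u p.1 p.2 - (-Φ p.1 + -h p.2)) (x₀, t₀) := by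
    refine hmax.neg.congr (.of_forall fun p => ?_)
    simp only
    ring
  have htest := hu (fun x t => -Φ x + -h t)
    ((hΦ.comp contDiff_fst).neg.add (hh.comp contDiff_snd).neg) x₀ (mem_univ _) t₀ ht₀ hmin
  rw [sGrad_separated (fun x => -Φ x) (fun t => -h t), sHess_separated (fun x => -Φ x)
    (fun t => -h t), tDeriv_separated (fun x => -Φ x) (fun t => -h t), gradient_neg, hess_neg,
    deriv.fun_neg] at htest
  simp only [Pi.neg_apply, norm_neg, smul_neg, trProj_neg_right, trProj_neg, neg_eq_zero, ne_eq]
    at htest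
  refine levelSetBound_iff.2 ⟨fun hp => by linarith [htest.1 hp], fun hp => ?_⟩
  obtain ⟨η, hη, hle⟩ := htest.2 hp
  exact ⟨η, hη, by linarith⟩

/-- The viscosity inequality `-tr((I - η⊗η)D²v) - σ|Dv| ≤ g` of a stationary problem. -/
def StatSignedSubsol (σ : ℝ) (g : 𝔼 → ℝ) (v : 𝔼 → ℝ) : Prop :=
  ∀ Φ : 𝔼 → ℝ, ContDiff ℝ 2 Φ → ∀ x₀ : 𝔼, IsLocalMax (fun x => v x - Φ x) x₀ →
    LevelSetBound σ (hess Φ x₀) (gradient Φ x₀) (-g x₀)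

theorem StatSignedSubsol.statSubsol {g v : 𝔼 → ℝ} (hv : StatSignedSubsol 1 g v) :
    StatSubsol g univ v := by
  intro Φ hΦ x₀ _ hmax
  obtain ⟨hne, hzero⟩ := levelSetBound_iff.1 (hv Φ hΦ x₀ hmax)
  refine ⟨fun hp => by linarith [hne hp], fun hp => ?_⟩
  obtain ⟨η, hη, hle⟩ := hzero hp
  exact ⟨η, hη, by linarith⟩

theorem StatSignedSubsol.statSupersol {g v : 𝔼 → ℝ}
    (hv : StatSignedSubsol (-1) (fun x => -g x) (fun x => -v x)) : StatSupersol g univ v := by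
  intro Φ hΦ x₀ _ hmin
  have hmax : IsLocalMax (fun x => -v x - -Φ x) x₀ := by
    refine hmin.neg.congr (.of_forall fun x => ?_)
    simp only
    ring
  have hbound := hv (fun x => -Φ x) hΦ.neg x₀ hmax
  simp only [gradient_neg, hess_neg] at hbound
  obtain ⟨hne, hzero⟩ := levelSetBound_iff.1 hbound
  simp only [Pi.neg_apply, norm_neg, smul_neg, trProj_neg_right, trProj_neg, neg_eq_zero, ne_eq]
    at hne hzero
  refine ⟨fun hp => by linarith [hne hp], fun hp => ?_⟩
  obtain ⟨η, hη, hle⟩ := hzero hp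
  exact ⟨η, hη, by linarith⟩

end LevelSet

section RadialTestFunctions

variable {n : ℕ}

local notation "𝔼" => EuclideanSpace ℝ (Fin n)

theorem contDiff_gradient {Φ : 𝔼 → ℝ} (hΦ : ContDiff ℝ 2 Φ) :
    ContDiff ℝ 1 (gradient Φ) :=
  (InnerProductSpace.toDual ℝ 𝔼).symm.contDiff.comp (hΦ.fderiv_right (by norm_num))

theorem continuous_hess {Φ : 𝔼 → ℝ} (hΦ : ContDiff ℝ 2 Φ) : Continuous (hess Φ) :=
  (contDiff_gradient hΦ).continuous_fderiv (by norm_num)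

theorem gradient_add_of_contDiff {Φ Ψ : 𝔼 → ℝ} (hΦ : ContDiff ℝ 2 Φ) (hΨ : ContDiff ℝ 2 Ψ) :
    gradient (fun x => Φ x + Ψ x) = fun x => gradient Φ x + gradient Ψ x := by
  funext x
  rw [gradient, fderiv_fun_add (hΦ.differentiable (by norm_num) x)
    (hΨ.differentiable (by norm_num) x), map_add]
  rfl

theorem hess_add_of_contDiff {Φ Ψ : 𝔼 → ℝ} (hΦ : ContDiff ℝ 2 Φ) (hΨ : ContDiff ℝ 2 Ψ) (x : 𝔼) :
    hess (fun x => Φ x + Ψ x) x = hess Φ x + hess Ψ x := by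
  rw [hess, gradient_add_of_contDiff hΦ hΨ]
  exact fderiv_fun_add ((contDiff_gradient hΦ).differentiable (by norm_num) x)
    ((contDiff_gradient hΨ).differentiable (by norm_num) x)

theorem hasFDerivAt_norm_sub_sq (z x : 𝔼) :
    HasFDerivAt (fun y => ‖y - z‖ ^ 2) (2 • innerSL ℝ (x - z)) x :=
  (hasStrictFDerivAt_norm_sq (x - z)).hasFDerivAt.comp (f := fun y => y - z) x
    ((hasFDerivAt_id x).sub_const z)

theorem gradient_comp_norm_sub_sq {ψ : ℝ → ℝ} (hψ : Differentiable ℝ ψ) (z x : 𝔼) :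
    gradient (fun y => ψ (‖y - z‖ ^ 2)) x = (2 * deriv ψ (‖x - z‖ ^ 2)) • (x - z) := by
  refine HasGradientAt.gradient (hasGradientAt_iff_hasFDerivAt.2 ?_)
  refine ((hψ _).hasDerivAt.comp_hasFDerivAt x (hasFDerivAt_norm_sub_sq z x)).congr_fderiv ?_
  ext v
  simp
  ring

theorem hess_comp_norm_sub_sq {ψ : ℝ → ℝ} (hψ : ContDiff ℝ 2 ψ) (z x : 𝔼) :
    hess (fun y => ψ (‖y - z‖ ^ 2)) x =
      (2 * deriv ψ (‖x - z‖ ^ 2)) • ContinuousLinearMap.id ℝ 𝔼 +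
        (4 * deriv (deriv ψ) (‖x - z‖ ^ 2)) • (innerSL ℝ (x - z)).smulRight (x - z) := by
  have hψ' : Differentiable ℝ (deriv ψ) :=
    (contDiff_succ_iff_deriv (n := 1).1 hψ).2.2.differentiable (by norm_num)
  rw [hess, funext (gradient_comp_norm_sub_sq (hψ.differentiable (by norm_num)) z)]
  refine HasFDerivAt.fderiv ((((hψ' _).hasDerivAt.comp_hasFDerivAt x
    (hasFDerivAt_norm_sub_sq z x)).const_mul 2).smul ((hasFDerivAt_id x).sub_const z)
      |>.congr_fderiv ?_)
  ext v
  simp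
  ring

theorem trProj_add_smulRight (a b : ℝ) (x η : 𝔼) :
    trProj (a • ContinuousLinearMap.id ℝ 𝔼 + b • (innerSL ℝ x).smulRight x) η =
      a * (n - ‖η‖ ^ 2) + b * (‖x‖ ^ 2 - ⟪x, η⟫ ^ 2) := by
  have hrank : LinearMap.trace ℝ 𝔼 ((innerSL ℝ x).smulRight x).toLinearMap = ‖x‖ ^ 2 :=
    (LinearMap.trace_smulRight _ x).trans (real_inner_self_eq_norm_sq x)
  have hid : LinearMap.trace ℝ 𝔼 (ContinuousLinearMap.id ℝ 𝔼).toLinearMap = n :=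
    (LinearMap.trace_id ℝ 𝔼).trans (by simp)
  simp only [trProj, clmTrace, ContinuousLinearMap.toLinearMap_add,
    ContinuousLinearMap.toLinearMap_smul, map_add, map_smul, hid, hrank, smul_eq_mul, add_apply,
    smul_apply, ContinuousLinearMap.id_apply, ContinuousLinearMap.smulRight_apply,
    innerSL_apply_apply, inner_add_left, inner_smul_left, conj_trivial, real_inner_self_eq_norm_sq]
  ring

theorem LevelSetBound.le_of_radial {σ α β b : ℝ} {x : 𝔼} (hx : x ≠ 0) (hαβ : α = 0 → β = 0)
    (hb : LevelSetBound σ (α • ContinuousLinearMap.id ℝ 𝔼 + β • (innerSL ℝ x).smulRight x)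
      (α • x) b) :
    b ≤ (n - 1) * α + σ * (|α| * ‖x‖) := by
  obtain ⟨η, -, hη, hle⟩ := hb
  rw [trProj_add_smulRight] at hle
  rw [norm_smul, Real.norm_eq_abs] at hη hle
  rcases eq_or_ne α 0 with rfl | hα
  · simpa [hαβ rfl] using hle
  have hx' : ‖x‖ ≠ 0 := norm_ne_zero_iff.2 hx
  have hpos : |α| * ‖x‖ ≠ 0 := mul_ne_zero (abs_ne_zero.2 hα) hx'
  have hη1 : ‖η‖ = 1 := by
    have := congrArg norm hη
    rw [norm_smul, norm_smul, Real.norm_eq_abs, Real.norm_eq_abs, abs_mul, abs_abs,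
      abs_norm] at this
    exact mul_left_cancel₀ hpos (this.trans (mul_one _).symm)
  have hinner : ⟪x, η⟫ ^ 2 = ‖x‖ ^ 2 := by
    have : |α| * ‖x‖ * ⟪x, η⟫ = α * ‖x‖ ^ 2 := by
      rw [← inner_smul_right, hη, inner_smul_right, real_inner_self_eq_norm_sq]
    refine mul_left_cancel₀ (pow_ne_zero 2 hpos) ?_
    rw [← mul_pow, this, mul_pow, mul_pow, sq_abs]
    ring
  rw [hη1, hinner] at hle
  linarith

-- The fourth power makes the Hessian vanish together with the gradient on `|x| = ρ`, so that the
-- undetermined direction `η` plays no role there.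
theorem LevelSetBound.le_of_quartic {σ k ρ b : ℝ} {x : 𝔼} (hx : x ≠ 0)
    (hb : LevelSetBound σ (hess (fun y => k * (‖y‖ ^ 2 - ρ ^ 2) ^ 4) x)
      (gradient (fun y => k * (‖y‖ ^ 2 - ρ ^ 2) ^ 4) x) b) :
    b ≤ (n - 1) * (8 * k * (‖x‖ ^ 2 - ρ ^ 2) ^ 3) +
      σ * (|8 * k * (‖x‖ ^ 2 - ρ ^ 2) ^ 3| * ‖x‖) := by
  have hψ : ContDiff ℝ 2 fun s : ℝ => k * (s - ρ ^ 2) ^ 4 := by fun_prop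
  have hderiv : deriv (fun s : ℝ => k * (s - ρ ^ 2) ^ 4) = fun s => 4 * k * (s - ρ ^ 2) ^ 3 := by
    funext s
    simp
    ring
  have hderiv₂ : deriv (fun s : ℝ => 4 * k * (s - ρ ^ 2) ^ 3) =
      fun s => 12 * k * (s - ρ ^ 2) ^ 2 := by
    funext s
    simp
    ring
  have hgrad := gradient_comp_norm_sub_sq (hψ.differentiable (by norm_num)) 0 x
  have hhess := hess_comp_norm_sub_sq hψ 0 x
  simp only [sub_zero, hderiv, hderiv₂, ← mul_assoc] at hgrad hhess
  norm_num only at hgrad hhess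
  rw [hgrad, hhess] at hb
  refine hb.le_of_radial hx fun h => ?_
  rcases mul_eq_zero.1 h with hk | hq
  · rw [show k = 0 by linarith]
    ring
  · rw [pow_eq_zero_iff (by norm_num) |>.1 hq]
    ring

end RadialTestFunctions

section RadialSubsolutions

theorem exists_penalized_maximizers {Z W : Type*} [TopologicalSpace Z] [TopologicalSpace W]
    {C : Set Z} (hC : IsCompact C) {G q : Z → ℝ} (hG : ContinuousOn G C) (hq : ContinuousOn q C)
    (hq_nonneg : ∀ z ∈ C, 0 ≤ q z) {π : Z → W} (hπ : Continuous π) {z₀ : Z} (hz₀ : z₀ ∈ C)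
    (hqz₀ : q z₀ = 0) (huniq : ∀ z ∈ C, q z = 0 → G z₀ ≤ G z → π z = π z₀) :
    ∃ z : ℕ → Z, (∀ k : ℕ, z k ∈ C ∧ IsMaxOn (fun z => G z - k * q z) C (z k)) ∧
      Tendsto (fun k => π (z k)) atTop (𝓝 (π z₀)) := by
  have hex (k : ℕ) : ∃ z ∈ C, IsMaxOn (fun z => G z - k * q z) C z :=
    hC.exists_isMaxOn ⟨z₀, hz₀⟩ (hG.sub (continuousOn_const.mul hq))
  choose z hzC hzmax using hex
  have hge (k : ℕ) : G z₀ ≤ G (z k) - k * q (z k) := by simpa [hqz₀] using hzmax k hz₀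
  refine ⟨z, fun k => ⟨hzC k, hzmax k⟩, (tendsto_iff_ultrafilter _ _ _).2 fun u hu => ?_⟩
  obtain ⟨z', hz', hlim⟩ := hC.ultrafilter_le_nhds (u.map z)
    (tendsto_principal.2 (.of_forall hzC))
  have hlimC : Tendsto z u (𝓝[C] z') := tendsto_nhdsWithin_iff.2 ⟨hlim, .of_forall hzC⟩
  have hGlim : Tendsto (fun k => G (z k)) u (𝓝 (G z')) := (hG z' hz').tendsto.comp hlimC
  have hqlim : Tendsto (fun k => q (z k)) u (𝓝 (q z')) := (hq z' hz').tendsto.comp hlimC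
  have hnat : Tendsto (fun k : ℕ => (k : ℝ)) u atTop := tendsto_natCast_atTop_atTop.mono_left hu
  have hqz' : q z' ≤ 0 := by
    refine le_of_tendsto_of_tendsto hqlim ((hGlim.sub_const (G z₀)).div_atTop hnat) ?_
    filter_upwards [hnat.eventually_gt_atTop 0] with k hk
    rw [le_div_iff₀ hk]
    linarith [hge k]
  have hGz' : G z₀ ≤ G z' := ge_of_tendsto' hGlim fun k => by
    nlinarith [hge k, hq_nonneg _ (hzC k), (Nat.cast_nonneg k : (0 : ℝ) ≤ k)]
  rw [← huniq z' hz' (hqz'.antisymm (hq_nonneg z' hz')) hGz']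
  exact (hπ.tendsto z').comp hlim

/-- `U_t - (N/r) U_r - σ|U_r| ≤ g(r)`, `r = |x| > 0`, in the viscosity sense, with test functions
`a(|x|) + h(t)`. Here `U` itself is not assumed radial: the maximum is over all `x` with `|x|` near
`|x₀|`. As the equation is of first order in `r`, it suffices that `a` is `C¹`. -/
def RadialSubsol {E : Type*} [NormedAddCommGroup E] (N σ : ℝ) (g : ℝ → ℝ) (U : E → ℝ → ℝ) : Prop :=
  ∀ (a h : ℝ → ℝ) (x₀ : E) (t₀ : ℝ), x₀ ≠ 0 → 0 < t₀ → ContDiffAt ℝ 1 a ‖x₀‖ → ContDiff ℝ 2 h →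
    IsMaxFilter (fun p : E × ℝ => U p.1 p.2 - (a ‖p.1‖ + h p.2))
      (comap (fun p => (‖p.1‖, p.2)) (𝓝 (‖x₀‖, t₀))) (x₀, t₀) →
    deriv h t₀ - (N / ‖x₀‖ * deriv a ‖x₀‖ + σ * |deriv a ‖x₀‖|) ≤ g ‖x₀‖

variable {n : ℕ}

local notation "𝔼" => EuclideanSpace ℝ (Fin n)

theorem SeparatedSubsol.le_of_isLocalMax_doubled {σ k : ℝ} {g : 𝔼 → ℝ} {u : 𝔼 → ℝ → ℝ}
    (hu : SeparatedSubsol σ g u) {a h : ℝ → ℝ} (hh : ContDiff ℝ 2 h) {x : 𝔼} {t ρ : ℝ}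
    (hx : x ≠ 0) (ht : 0 < t) (hρ : ρ ≠ 0) (ha : DifferentiableAt ℝ a ρ)
    (hmax : IsLocalMax (fun z : 𝔼 × ℝ × ℝ =>
      u z.1 z.2.1 - (a z.2.2 + h z.2.1) - k * (‖z.1‖ ^ 2 - z.2.2 ^ 2) ^ 4) (x, t, ρ)) :
    deriv h t - g x ≤ (n - 1) * (deriv a ρ / ρ) + σ * (|deriv a ρ / ρ| * ‖x‖) := by
  have hmax_xt : IsLocalMax (fun p : 𝔼 × ℝ =>
      u p.1 p.2 - (k * (‖p.1‖ ^ 2 - ρ ^ 2) ^ 4 + h p.2)) (x, t) := by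
    have hemb : Tendsto (fun p : 𝔼 × ℝ => (p.1, p.2, ρ)) (𝓝 (x, t)) (𝓝 (x, t, ρ)) :=
      Continuous.tendsto (by fun_prop) (x, t)
    filter_upwards [hemb.eventually hmax] with p hp
    linarith
  have hmax_ρ : IsLocalMax (fun s => -a s - k * (‖x‖ ^ 2 - s ^ 2) ^ 4) ρ := by
    have hemb : Tendsto (fun s : ℝ => (x, t, s)) (𝓝 ρ) (𝓝 (x, t, ρ)) :=
      Continuous.tendsto (by fun_prop) ρ
    filter_upwards [hemb.eventually hmax] with s hs
    linarith
  have hslope : deriv a ρ / ρ = 8 * k * (‖x‖ ^ 2 - ρ ^ 2) ^ 3 := by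
    have hpen : HasDerivAt (fun s => k * (‖x‖ ^ 2 - s ^ 2) ^ 4)
        (-(8 * k * (‖x‖ ^ 2 - ρ ^ 2) ^ 3 * ρ)) ρ :=
      ((((hasDerivAt_id ρ).pow 2).const_sub (‖x‖ ^ 2)).pow 4 |>.const_mul k).congr_deriv
        (by simp; ring)
    have := hmax_ρ.hasDerivAt_eq_zero (ha.hasDerivAt.neg.sub hpen)
    rw [div_eq_iff hρ]
    linarith
  rw [hslope]
  have hquartic : ContDiff ℝ 2 fun y : 𝔼 => k * (‖y‖ ^ 2 - ρ ^ 2) ^ 4 :=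
    contDiff_const.mul (((contDiff_norm_sq ℝ).sub contDiff_const).pow 4)
  exact (hu _ h hquartic hh x t ht hmax_xt).le_of_quartic hx

theorem exists_doubled_maximizers {E : Type*} [NormedAddCommGroup E] [ProperSpace E]
    {G : E × ℝ × ℝ → ℝ} {x₀ : E} {t₀ ε : ℝ} (hε : 0 < ε)
    (hG : ContinuousOn G {z | (‖z.1‖, z.2) ∈ Metric.closedBall (‖x₀‖, t₀, ‖x₀‖) ε})
    (hpos : ∀ s ∈ Metric.closedBall (‖x₀‖, t₀, ‖x₀‖) ε, 0 ≤ s.2.2)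
    (hstrict : ∀ x t, (‖x‖, t, ‖x‖) ∈ Metric.closedBall (‖x₀‖, t₀, ‖x₀‖) ε →
      G (x₀, t₀, ‖x₀‖) ≤ G (x, t, ‖x‖) → (‖x‖, t) = (‖x₀‖, t₀)) :
    ∃ z : ℕ → E × ℝ × ℝ, Tendsto (fun k => (‖(z k).1‖, (z k).2)) atTop (𝓝 (‖x₀‖, t₀, ‖x₀‖)) ∧
      ∀ᶠ k : ℕ in atTop,
        IsLocalMax (fun z => G z - k * (‖z.1‖ ^ 2 - z.2.2 ^ 2) ^ 4) (z k) := by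
  have hπ : Continuous fun z : E × ℝ × ℝ => (‖z.1‖, z.2) := by fun_prop
  have hC : IsCompact {z : E × ℝ × ℝ | (‖z.1‖, z.2) ∈ Metric.closedBall (‖x₀‖, t₀, ‖x₀‖) ε} := by
    refine Metric.isCompact_of_isClosed_isBounded (Metric.isClosed_closedBall.preimage hπ) ?_
    refine (Metric.isBounded_closedBall (x := 0)
      (r := ε + ‖(‖x₀‖, t₀, ‖x₀‖)‖)).subset fun z hz => ?_
    rw [mem_closedBall_zero_iff]
    calc ‖z‖ = ‖(‖z.1‖, z.2)‖ := by simp [Prod.norm_def]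
      _ ≤ _ := (norm_le_norm_add_norm_sub' _ _).trans
        (by rw [add_comm]; gcongr; exact mem_closedBall_iff_norm.1 hz)
  obtain ⟨z, hz, hlim⟩ := exists_penalized_maximizers hC hG
    (q := fun z => (‖z.1‖ ^ 2 - z.2.2 ^ 2) ^ 4) (by fun_prop) (fun z _ => by positivity) hπ
    (z₀ := (x₀, t₀, ‖x₀‖)) (Metric.mem_closedBall_self hε.le) (by simp) <| by
      rintro ⟨x, t, ρ⟩ hz hq hGz
      simp only [pow_eq_zero_iff (n := 4) (by norm_num), sub_eq_zero] at hq
      obtain rfl : ‖x‖ = ρ := (sq_eq_sq₀ (norm_nonneg _) (hpos _ hz)).1 hq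
      obtain ⟨hx, rfl⟩ := Prod.mk_inj.1 (hstrict x t hz hGz)
      simp only [hx]
  refine ⟨z, hlim, ?_⟩
  filter_upwards [hlim.eventually (Metric.ball_mem_nhds _ hε)] with k hk
  exact (hz k).2.isLocalMax (mem_of_superset
    ((Metric.isOpen_ball.preimage hπ).mem_nhds hk) fun w hw => Metric.ball_subset_closedBall hw)

theorem SeparatedSubsol.radial_le_of_strict {σ : ℝ} {g : ℝ → ℝ} {u : 𝔼 → ℝ → ℝ}
    (hu : SeparatedSubsol σ (fun x => g ‖x‖) u)
    (hcont : ContinuousOn (fun p : 𝔼 × ℝ => u p.1 p.2) (univ ×ˢ Ici 0))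
    {a h : ℝ → ℝ} {x₀ : 𝔼} {t₀ : ℝ} (hg : ContinuousAt g ‖x₀‖) (hx₀ : x₀ ≠ 0) (ht₀ : 0 < t₀)
    (ha : ContDiffAt ℝ 1 a ‖x₀‖) (hh : ContDiff ℝ 2 h)
    (hstrict : ∀ᶠ s : ℝ × ℝ in 𝓝 (‖x₀‖, t₀), ∀ x, ‖x‖ = s.1 →
      u x₀ t₀ - (a ‖x₀‖ + h t₀) ≤ u x s.2 - (a s.1 + h s.2) → s = (‖x₀‖, t₀)) :
    deriv h t₀ - ((n - 1) / ‖x₀‖ * deriv a ‖x₀‖ + σ * |deriv a ‖x₀‖|) ≤ g ‖x₀‖ := by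
  have hr₀ : 0 < ‖x₀‖ := norm_pos_iff.2 hx₀
  have hfst : Tendsto (fun s : ℝ × ℝ × ℝ => (s.1, s.2.1)) (𝓝 (‖x₀‖, t₀, ‖x₀‖))
      (𝓝 (‖x₀‖, t₀)) := Continuous.tendsto (by fun_prop) (‖x₀‖, t₀, ‖x₀‖)
  have hregular : ∀ᶠ s : ℝ × ℝ × ℝ in 𝓝 (‖x₀‖, t₀, ‖x₀‖),
      0 < s.1 ∧ 0 < s.2.1 ∧ 0 < s.2.2 ∧ ContDiffAt ℝ 1 a s.2.2 :=
    (continuousAt_fst.eventually (lt_mem_nhds hr₀)).and <|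
      ((continuous_snd.fst.tendsto _).eventually (lt_mem_nhds ht₀)).and <|
      ((continuous_snd.snd.tendsto _).eventually (lt_mem_nhds hr₀)).and <|
      (continuous_snd.snd.tendsto (‖x₀‖, t₀, ‖x₀‖)).eventually (ha.eventually (by simp))
  obtain ⟨ε, hε, hgood⟩ := Metric.nhds_basis_closedBall.eventually_iff.1
    (hregular.and (hfst.eventually hstrict))
  have hG : ContinuousOn (fun z : 𝔼 × ℝ × ℝ => u z.1 z.2.1 - (a z.2.2 + h z.2.1))
      {z | (‖z.1‖, z.2) ∈ Metric.closedBall (‖x₀‖, t₀, ‖x₀‖) ε} := by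
    refine ContinuousOn.sub (hcont.comp (f := fun z : 𝔼 × ℝ × ℝ => (z.1, z.2.1)) (by fun_prop)
      fun z hz => ⟨mem_univ _, (hgood hz).1.2.1.le⟩) (ContinuousOn.add (fun z hz => ?_) ?_)
    · exact ((hgood hz).1.2.2.2.continuousAt.comp (f := fun z : 𝔼 × ℝ × ℝ => z.2.2)
        (by fun_prop)).continuousWithinAt
    · exact (hh.continuous.comp continuous_snd.fst).continuousOn
  obtain ⟨z, hlim, hmax⟩ := exists_doubled_maximizers hε hG
    (fun s hs => (hgood hs).1.2.2.1.le) (fun x t hxt => (hgood hxt).2 x rfl)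
  have hslope : Tendsto (fun k => deriv a (z k).2.2 / (z k).2.2) atTop
      (𝓝 (deriv a ‖x₀‖ / ‖x₀‖)) :=
    (((ha.continuousAt_fderiv one_ne_zero).clm_apply continuousAt_const).tendsto.comp
      hlim.snd_nhds.snd_nhds).div hlim.snd_nhds.snd_nhds hr₀.ne'
  have hineq := le_of_tendsto_of_tendsto
    ((((hh.continuous_deriv (by norm_num)).tendsto t₀).comp hlim.snd_nhds.fst_nhds).sub
      (hg.tendsto.comp hlim.fst_nhds))
    ((hslope.const_mul ((n : ℝ) - 1)).add ((hslope.abs.mul hlim.fst_nhds).const_mul σ)) <| by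
      filter_upwards [hmax, hlim.eventually hregular] with k hk ⟨h₁, h₂, h₃, h₄⟩
      exact hu.le_of_isLocalMax_doubled hh (norm_pos_iff.1 h₁) h₂ h₃.ne'
        (h₄.differentiableAt (by norm_num)) hk
  rw [abs_div, abs_of_pos hr₀, div_mul_cancel₀ _ hr₀.ne', ← mul_div_assoc] at hineq
  rw [div_mul_eq_mul_div]
  linarith

theorem SeparatedSubsol.radialSubsol {σ : ℝ} {g : ℝ → ℝ} {u : 𝔼 → ℝ → ℝ}
    (hu : SeparatedSubsol σ (fun x => g ‖x‖) u)
    (hcont : ContinuousOn (fun p : 𝔼 × ℝ => u p.1 p.2) (univ ×ˢ Ici 0))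
    (hg : ContinuousOn g (Ioi 0)) : RadialSubsol (n - 1) σ g u := by
  intro a h x₀ t₀ hx₀ ht₀ ha hh hmax
  have hr₀ : 0 < ‖x₀‖ := norm_pos_iff.2 hx₀
  have ha' : HasDerivAt (fun r => a r + (r - ‖x₀‖) ^ 2) (deriv a ‖x₀‖) ‖x₀‖ :=
    ((ha.differentiableAt (by norm_num)).hasDerivAt.add
      (((hasDerivAt_id ‖x₀‖).sub_const ‖x₀‖).pow 2)).congr_deriv (by simp)
  have hh' : HasDerivAt (fun t => h t + (t - t₀) ^ 2) (deriv h t₀) t₀ :=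
    ((hh.differentiable (by norm_num) t₀).hasDerivAt.add
      (((hasDerivAt_id t₀).sub_const t₀).pow 2)).congr_deriv (by simp)
  rw [← ha'.deriv, ← hh'.deriv]
  refine hu.radial_le_of_strict hcont (hg.continuousAt (Ioi_mem_nhds hr₀)) hx₀ ht₀
    (ha.add (by fun_prop)) (hh.add (by fun_prop)) ?_
  filter_upwards [eventually_comap.1 hmax] with s hs x hx hle
  have := hs (x, s.2) (Prod.ext hx rfl)
  rw [hx] at this
  have h₁ : (s.1 - ‖x₀‖) ^ 2 = 0 := by nlinarith [sq_nonneg (s.1 - ‖x₀‖), sq_nonneg (s.2 - t₀)]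
  have h₂ : (s.2 - t₀) ^ 2 = 0 := by nlinarith [sq_nonneg (s.1 - ‖x₀‖), sq_nonneg (s.2 - t₀)]
  rw [sq_eq_zero_iff, sub_eq_zero] at h₁ h₂
  exact Prod.ext h₁ h₂

end RadialSubsolutions

section Stability

theorem exists_maximizers_of_tendstoUniformlyOn {Z : Type*} [TopologicalSpace Z] {C : Set Z}
    (hC : IsCompact C) {F : ℕ → Z → ℝ} {F₀ : Z → ℝ} (hF : ∀ k, ContinuousOn (F k) C)
    (hlim : TendstoUniformlyOn F F₀ atTop C) {z₀ : Z} (hz₀ : z₀ ∈ C)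
    (hstrict : ∀ z ∈ C, F₀ z₀ ≤ F₀ z → z = z₀) :
    ∃ z : ℕ → Z, (∀ k, IsMaxOn (F k) C (z k)) ∧ Tendsto z atTop (𝓝 z₀) := by
  have hex (k : ℕ) : ∃ z ∈ C, IsMaxOn (F k) C z := hC.exists_isMaxOn ⟨z₀, hz₀⟩ (hF k)
  choose z hzC hzmax using hex
  refine ⟨z, hzmax, (tendsto_iff_ultrafilter _ _ _).2 fun u hu => ?_⟩
  obtain ⟨z', hz', hz'lim⟩ := hC.ultrafilter_le_nhds (u.map z)
    (tendsto_principal.2 (.of_forall hzC))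
  have hF₀ : ContinuousOn F₀ C := hlim.continuousOn (Frequently.of_forall hF)
  have hvalue : Tendsto (fun k => F k (z k)) u (𝓝 (F₀ z')) :=
    tendsto_comp_of_locally_uniform_limit_within (hF₀ z' hz')
      (tendsto_nhdsWithin_iff.2 ⟨hz'lim, .of_forall hzC⟩)
      fun V hV => ⟨C, self_mem_nhdsWithin, hu (hlim V hV)⟩
  have hle : F₀ z₀ ≤ F₀ z' := le_of_tendsto_of_tendsto'
    ((hlim.tendsto_at hz₀).mono_left hu) hvalue fun k => hzmax k hz₀
  rwa [← hstrict z' hz' hle]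

theorem exists_late_maximizers {E : Type*} [TopologicalSpace E] {K : Set E} (hK : IsCompact K)
    {u : E → ℝ → ℝ} {v : E → ℝ} (hcont : ContinuousOn (fun p : E × ℝ => u p.1 p.2) (univ ×ˢ Ici 0))
    (hlim : TendstoUniformlyOn (fun t x => u x t) v atTop K) {φ : E × ℝ → ℝ} (hφ : Continuous φ)
    {z₀ : E × ℝ} (hz₀ : z₀ ∈ K ×ˢ Icc (-1 : ℝ) 1)
    (hstrict : ∀ z ∈ K ×ˢ Icc (-1 : ℝ) 1, v z₀.1 - φ z₀ ≤ v z.1 - φ z → z = z₀) :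
    ∃ z : ℕ → E × ℝ, (∀ k : ℕ,
      IsMaxOn (fun p => u p.1 (k + 1 + p.2) - φ p) (K ×ˢ Icc (-1 : ℝ) 1) (z k)) ∧
      Tendsto z atTop (𝓝 z₀) := by
  refine exists_maximizers_of_tendstoUniformlyOn (hK.prod isCompact_Icc)
    (F := fun (k : ℕ) p => u p.1 (k + 1 + p.2) - φ p) (F₀ := fun p => v p.1 - φ p)
    (fun k => ?_) ?_ hz₀ hstrict
  · refine (hcont.comp (f := fun p : E × ℝ => (p.1, k + 1 + p.2)) (by fun_prop)
      fun p hp => ⟨mem_univ _, ?_⟩).sub hφ.continuousOn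
    simp only [mem_Ici]
    linarith [hp.2.1, (k.cast_nonneg : (0 : ℝ) ≤ k)]
  · refine Metric.tendstoUniformlyOn_iff.2 fun δ hδ => ?_
    filter_upwards [(tendsto_natCast_atTop_atTop (R := ℝ)).eventually
      (eventually_forall_ge_atTop.2 (Metric.tendstoUniformlyOn_iff.1 hlim δ hδ))] with k hk p hp
    rw [dist_sub_right]
    exact hk _ (by linarith [hp.2.1]) p.1 hp.1

variable {n : ℕ}

local notation "𝔼" => EuclideanSpace ℝ (Fin n)

theorem SeparatedSubsol.sub_linear {σ : ℝ} {g : 𝔼 → ℝ} {u : 𝔼 → ℝ → ℝ}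
    (hu : SeparatedSubsol σ g u) (c : ℝ) :
    SeparatedSubsol σ (fun x => g x - c) (fun x t => u x t - c * t) := by
  intro Φ h hΦ hh x₀ t₀ ht₀ hmax
  have hderiv : deriv (fun t => h t + c * t) t₀ = deriv h t₀ + c :=
    ((hh.differentiable (by norm_num) t₀).hasDerivAt.add
      ((hasDerivAt_id t₀).const_mul c)).deriv.trans (by simp)
  have := hu Φ (fun t => h t + c * t) hΦ (hh.add (by fun_prop)) x₀ t₀ ht₀ <| by
    filter_upwards [hmax] with p hp
    linarith
  rw [hderiv] at this
  convert this using 1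
  ring

theorem gradient_hess_add_norm_sub_pow_four {Φ : 𝔼 → ℝ} (hΦ : ContDiff ℝ 2 Φ) (x₀ : 𝔼) :
    gradient (fun x => Φ x + (‖x - x₀‖ ^ 2) ^ 2) x₀ = gradient Φ x₀ ∧
      hess (fun x => Φ x + (‖x - x₀‖ ^ 2) ^ 2) x₀ = hess Φ x₀ := by
  have hψ : ContDiff ℝ 2 fun s : ℝ => s ^ 2 := by fun_prop
  have hquartic : ContDiff ℝ 2 fun x => (‖x - x₀‖ ^ 2) ^ 2 :=
    ((contDiff_id.sub contDiff_const).norm_sq ℝ).pow 2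
  have hgrad := gradient_comp_norm_sub_sq (hψ.differentiable (by norm_num)) x₀ x₀
  have hhess := hess_comp_norm_sub_sq hψ x₀ x₀
  beta_reduce at hgrad hhess
  simp only [gradient_add_of_contDiff hΦ hquartic, hess_add_of_contDiff hΦ hquartic]
  rw [hgrad, hhess]
  have hzero : (0 : ℝ) • ContinuousLinearMap.id ℝ 𝔼 = 0 := by ext; simp
  simp [hzero]

theorem SeparatedSubsol.le_of_isMaxOn {σ : ℝ} {g : 𝔼 → ℝ} {u : 𝔼 → ℝ → ℝ}
    (hu : SeparatedSubsol σ g u) {Φ : 𝔼 → ℝ} (hΦ : ContDiff ℝ 2 Φ) {T s : ℝ} (hT : 1 ≤ T)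
    {x : 𝔼} {C : Set (𝔼 × ℝ)} (hC : C ∈ 𝓝 (x, s)) (hs : s ∈ Ioo (-1 : ℝ) 1)
    (hmax : IsMaxOn (fun p : 𝔼 × ℝ => u p.1 (T + p.2) - (Φ p.1 + p.2 ^ 2)) C (x, s)) :
    LevelSetBound σ (hess Φ x) (gradient Φ x) (2 * s - g x) := by
  have hderiv : deriv (fun t => (t - T) ^ 2) (T + s) = 2 * s :=
    (((hasDerivAt_id (T + s)).sub_const T).pow 2).deriv.trans (by simp)
  rw [← hderiv]
  refine hu Φ _ hΦ (by fun_prop) x (T + s) (by linarith [hs.1]) ?_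
  have hshift : Tendsto (fun p : 𝔼 × ℝ => (p.1, p.2 - T)) (𝓝 (x, T + s)) (𝓝 (x, s)) := by
    refine Continuous.tendsto' (by fun_prop) _ _ (by simp)
  filter_upwards [hshift.eventually (hmax.isLocalMax hC)] with p hp
  simpa only [add_sub_cancel, add_sub_cancel_left] using hp

theorem SeparatedSubsol.stationary_of_tendsto {σ : ℝ} {g v : 𝔼 → ℝ} {u : 𝔼 → ℝ → ℝ}
    (hu : SeparatedSubsol σ g u) (hg : Continuous g)
    (hcont : ContinuousOn (fun p : 𝔼 × ℝ => u p.1 p.2) (univ ×ˢ Ici 0))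
    (hlim : ∀ K : Set 𝔼, IsCompact K → TendstoUniformlyOn (fun t x => u x t) v atTop K) :
    StatSignedSubsol σ g v := by
  intro Φ hΦ x₀ hmax
  let Ψ : 𝔼 → ℝ := fun x => Φ x + (‖x - x₀‖ ^ 2) ^ 2
  have hΨ : ContDiff ℝ 2 Ψ := hΦ.add (((contDiff_id.sub contDiff_const).norm_sq ℝ).pow 2)
  obtain ⟨ε, hε, hball⟩ := Metric.nhds_basis_closedBall.eventually_iff.1 hmax
  have hstrict : ∀ z ∈ Metric.closedBall x₀ ε ×ˢ Icc (-1 : ℝ) 1,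
      v x₀ - (Ψ x₀ + 0 ^ 2) ≤ v z.1 - (Ψ z.1 + z.2 ^ 2) → z = (x₀, 0) := by
    rintro ⟨x, s⟩ hz hle
    have hx := hball hz.1
    simp only [Ψ, sub_self, norm_zero] at hle hx
    have hs : s ^ 2 = 0 := by nlinarith [sq_nonneg s, sq_nonneg (‖x - x₀‖ ^ 2)]
    have hxx₀ : ‖x - x₀‖ ^ 2 = 0 := by nlinarith [sq_nonneg s, sq_nonneg (‖x - x₀‖ ^ 2)]
    rw [sq_eq_zero_iff] at hs hxx₀
    rw [hs, ← sub_eq_zero.1 (norm_eq_zero.1 hxx₀)]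
  obtain ⟨z, hz, hz₀⟩ := exists_late_maximizers (isCompact_closedBall x₀ ε) hcont
    (hlim _ (isCompact_closedBall x₀ ε)) (φ := fun p => Ψ p.1 + p.2 ^ 2)
    (by have := hΨ.continuous; fun_prop) (z₀ := (x₀, 0))
    ⟨Metric.mem_closedBall_self hε.le, by simp⟩ hstrict
  have hinterior : ∀ᶠ p in 𝓝 (x₀, (0 : ℝ)), Metric.closedBall x₀ ε ×ˢ Icc (-1 : ℝ) 1 ∈ 𝓝 p :=
    eventually_mem_nhds_iff.2 (prod_mem_nhds (Metric.closedBall_mem_nhds x₀ hε)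
      (Icc_mem_nhds (by norm_num) (by norm_num)))
  have hbound : LevelSetBound σ (hess Ψ x₀) (gradient Ψ x₀) (2 * 0 - g x₀) := by
    refine .of_tendsto (((continuous_hess hΨ).tendsto x₀).comp hz₀.fst_nhds)
      (((contDiff_gradient hΨ).continuous.tendsto x₀).comp hz₀.fst_nhds)
      ((hz₀.snd_nhds.const_mul 2).sub ((hg.tendsto x₀).comp hz₀.fst_nhds)) ?_
    filter_upwards [hz₀.eventually hinterior, hz₀.snd_nhds.eventually
      (Ioo_mem_nhds (show (-1 : ℝ) < 0 by norm_num) (show (0 : ℝ) < 1 by norm_num))] with k hk hk'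
    exact hu.le_of_isMaxOn hΨ (le_add_of_nonneg_left k.cast_nonneg) hk hk' (hz k)
  rwa [(gradient_hess_add_norm_sub_pow_four hΦ x₀).1,
    (gradient_hess_add_norm_sub_pow_four hΦ x₀).2, mul_zero, zero_sub] at hbound

end Stability

section RadialSubsolutionAlgebra

variable {E : Type*} [NormedAddCommGroup E] {N σ : ℝ} {g g' : ℝ → ℝ} {U : E → ℝ → ℝ}

namespace RadialSubsol

theorem shift (hU : RadialSubsol N σ g U) {s : ℝ} (hs : 0 ≤ s) :
    RadialSubsol N σ g (fun x t => U x (s + t)) := by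
  intro a h x₀ t₀ hx₀ ht₀ ha hh hmax
  have hderiv : deriv (fun t => h (t - s)) (s + t₀) = deriv h t₀ := by
    rw [deriv_comp_sub_const, add_sub_cancel_left]
  rw [← hderiv]
  refine hU a _ x₀ (s + t₀) hx₀ (by positivity) ha (hh.comp (contDiff_id.sub contDiff_const)) ?_
  have hshift : Tendsto (fun p : E × ℝ => (p.1, p.2 - s))
      (comap (fun p => (‖p.1‖, p.2)) (𝓝 (‖x₀‖, s + t₀)))
      (comap (fun p => (‖p.1‖, p.2)) (𝓝 (‖x₀‖, t₀))) := by
    have hcont : Tendsto (fun q : ℝ × ℝ => (q.1, q.2 - s)) (𝓝 (‖x₀‖, s + t₀)) (𝓝 (‖x₀‖, t₀)) :=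
      Continuous.tendsto' (by fun_prop) _ _ (by simp)
    exact tendsto_comap_iff.2 (hcont.comp tendsto_comap)
  filter_upwards [hshift.eventually hmax] with p hp
  simpa only [add_sub_cancel, add_sub_cancel_left] using hp

theorem const_mul (hU : RadialSubsol N σ g U) {θ : ℝ} (hθ : 0 < θ) :
    RadialSubsol N σ (fun r => θ * g r) (fun x t => θ * U x t) := by
  intro a h x₀ t₀ hx₀ ht₀ ha hh hmax
  have := hU (fun r => θ⁻¹ * a r) (fun t => θ⁻¹ * h t) x₀ t₀ hx₀ ht₀ (contDiffAt_const.mul ha)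
    (contDiff_const.mul hh) <| by
      filter_upwards [hmax] with p hp
      have := mul_le_mul_of_nonneg_left hp (inv_pos.2 hθ).le
      rwa [mul_sub, mul_sub, mul_add, mul_add, inv_mul_cancel_left₀ hθ.ne',
        inv_mul_cancel_left₀ hθ.ne'] at this
  rw [deriv_const_mul_field, deriv_const_mul_field, abs_mul, abs_of_pos (inv_pos.2 hθ)] at this
  refine le_trans (le_of_eq ?_) (mul_le_mul_of_nonneg_left this hθ.le)
  field_simp

theorem add (hU : RadialSubsol N σ g U) {Y b : ℝ → ℝ} (hY : ∀ r > 0, ContDiffAt ℝ 1 Y r)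
    (hb : ContDiff ℝ 2 b) (hg : ∀ r > 0, ∀ t > 0,
      g r + deriv b t - N / r * deriv Y r + |σ| * |deriv Y r| ≤ g' r) :
    RadialSubsol N σ g' (fun x t => U x t + Y ‖x‖ + b t) := by
  intro a h x₀ t₀ hx₀ ht₀ ha hh hmax
  have hr₀ : 0 < ‖x₀‖ := norm_pos_iff.2 hx₀
  have hYr₀ := hY _ hr₀
  have := hU (fun r => a r - Y r) (fun t => h t - b t) x₀ t₀ hx₀ ht₀ (ha.sub hYr₀)
    (hh.sub hb) <| by
      filter_upwards [hmax] with p hp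
      linarith
  rw [deriv_fun_sub (ha.differentiableAt one_ne_zero) (hYr₀.differentiableAt one_ne_zero),
    deriv_fun_sub (hh.differentiable two_ne_zero t₀) (hb.differentiable two_ne_zero t₀)] at this
  have habs : σ * (|deriv a ‖x₀‖ - deriv Y ‖x₀‖| - |deriv a ‖x₀‖|) ≤ |σ| * |deriv Y ‖x₀‖| := by
    refine (le_abs_self _).trans ?_
    rw [abs_mul]
    refine mul_le_mul_of_nonneg_left ?_ (abs_nonneg σ)
    have := abs_abs_sub_abs_le_abs_sub (deriv a ‖x₀‖ - deriv Y ‖x₀‖) (deriv a ‖x₀‖)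
    rwa [sub_sub_cancel_left, abs_neg] at this
  linarith [hg _ hr₀ t₀ ht₀]

theorem of_stationary [NormedSpace ℝ E] {Y : ℝ → ℝ}
    (hY : ∀ a : ℝ → ℝ, ∀ r > 0, DifferentiableAt ℝ a r → IsLocalMax (fun ρ => Y ρ - a ρ) r →
      -(N / r * deriv a r + σ * |deriv a r|) ≤ g r) :
    RadialSubsol N σ g (fun (x : E) _ => Y ‖x‖) := by
  intro a h x₀ t₀ hx₀ _ ha _ hmax
  have hr₀ : 0 < ‖x₀‖ := norm_pos_iff.2 hx₀
  have hmax' := eventually_comap.1 hmax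
  have htime : IsLocalMin h t₀ := by
    filter_upwards [(Continuous.prodMk_right ‖x₀‖).tendsto t₀ |>.eventually hmax'] with t ht
    linarith [ht (x₀, t) rfl]
  have hspace : IsLocalMax (fun ρ => Y ρ - a ρ) ‖x₀‖ := by
    filter_upwards [(Continuous.prodMk_left t₀).tendsto ‖x₀‖ |>.eventually hmax',
      lt_mem_nhds hr₀] with ρ hρ hρ_pos
    have hnorm : ‖(ρ / ‖x₀‖) • x₀‖ = ρ := by
      rw [norm_smul, Real.norm_of_nonneg (by positivity), div_mul_cancel₀ _ hr₀.ne']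
    have := hρ ((ρ / ‖x₀‖) • x₀, t₀) (by rw [hnorm])
    simp only [hnorm] at this
    linarith
  rw [htime.deriv_eq_zero, zero_sub]
  exact hY a _ hr₀ (ha.differentiableAt one_ne_zero) hspace

end RadialSubsol

/-- The subsolutions to which the comparison principle applies: continuous up to time `0`, bounded
above on bounded time intervals, and uniformly continuous in time there, uniformly in space. -/
structure RegularSubsol (N σ : ℝ) (g : ℝ → ℝ) (U : E → ℝ → ℝ) : Prop where
  subsol : RadialSubsol N σ g U
  continuousOn : ContinuousOn (fun p : E × ℝ => U p.1 p.2) (univ ×ˢ Ici 0)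
  bddAbove : ∀ T, ∃ M, ∀ x, ∀ t ∈ Icc 0 T, U x t ≤ M
  equicontinuous : ∀ T, ∀ ε > 0, ∃ τ > 0, ∀ x, ∀ t ∈ Icc 0 T, ∀ s ∈ Icc 0 T,
    |t - s| < τ → |U x t - U x s| < ε

namespace RegularSubsol

theorem shift (hU : RegularSubsol N σ g U) {s : ℝ} (hs : 0 ≤ s) :
    RegularSubsol N σ g (fun x t => U x (s + t)) where
  subsol := hU.subsol.shift hs
  continuousOn := hU.continuousOn.comp (f := fun p : E × ℝ => (p.1, s + p.2)) (by fun_prop)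
    fun _ hp => ⟨mem_univ _, add_nonneg hs hp.2⟩
  bddAbove T := (hU.bddAbove (s + T)).imp fun _ hM x t ht =>
    hM x _ ⟨add_nonneg hs ht.1, by linarith [ht.2]⟩
  equicontinuous T ε hε := by
    obtain ⟨τ, hτ, h⟩ := hU.equicontinuous (s + T) ε hε
    refine ⟨τ, hτ, fun x t ht t' ht' htt' => h x _ ⟨add_nonneg hs ht.1, by linarith [ht.2]⟩
      _ ⟨add_nonneg hs ht'.1, by linarith [ht'.2]⟩ (by rwa [add_sub_add_left_eq_sub])⟩

theorem const_mul (hU : RegularSubsol N σ g U) {θ : ℝ} (hθ : 0 < θ) :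
    RegularSubsol N σ (fun r => θ * g r) (fun x t => θ * U x t) where
  subsol := hU.subsol.const_mul hθ
  continuousOn := hU.continuousOn.const_smul θ
  bddAbove T := by
    obtain ⟨M, hM⟩ := hU.bddAbove T
    exact ⟨θ * M, fun x t ht => mul_le_mul_of_nonneg_left (hM x t ht) hθ.le⟩
  equicontinuous T ε hε := by
    obtain ⟨τ, hτ, h⟩ := hU.equicontinuous T (ε / θ) (by positivity)
    refine ⟨τ, hτ, fun x t ht s hs hts => ?_⟩
    rw [← mul_sub, abs_mul, abs_of_pos hθ, ← lt_div_iff₀' hθ]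
    exact h x t ht s hs hts

theorem add (hU : RegularSubsol N σ g U) {Y b : ℝ → ℝ} (hY : ContDiff ℝ 1 Y)
    (hY_nonpos : ∀ r, Y r ≤ 0) (hb : ContDiff ℝ 2 b) (hg : ∀ r > 0, ∀ t > 0,
      g r + deriv b t - N / r * deriv Y r + |σ| * |deriv Y r| ≤ g' r) :
    RegularSubsol N σ g' (fun x t => U x t + Y ‖x‖ + b t) where
  subsol := hU.subsol.add (fun _ _ => hY.contDiffAt) hb hg
  continuousOn := by
    have hYc := hY.continuous
    have hbc := hb.continuous
    exact (hU.continuousOn.add (by fun_prop)).add (by fun_prop)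
  bddAbove T := by
    obtain ⟨M, hM⟩ := hU.bddAbove T
    obtain ⟨M', hM'⟩ := isCompact_Icc.bddAbove_image (K := Icc 0 T) hb.continuous.continuousOn
    exact ⟨M + M', fun x t ht => by
      linarith [hM x t ht, hM' (mem_image_of_mem b ht), hY_nonpos ‖x‖]⟩
  equicontinuous T ε hε := by
    obtain ⟨τ, hτ, h⟩ := hU.equicontinuous T (ε / 2) (by positivity)
    obtain ⟨τ', hτ', h'⟩ := Metric.uniformContinuousOn_iff.1
      (isCompact_Icc.uniformContinuousOn_of_continuous (s := Icc 0 T) hb.continuous.continuousOn)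
      (ε / 2) (by positivity)
    refine ⟨min τ τ', by positivity, fun x t ht s hs hts => ?_⟩
    have h₁ := h x t ht s hs (hts.trans_le (min_le_left _ _))
    have h₂ := h' t ht s hs (hts.trans_le (min_le_right _ _))
    rw [Real.dist_eq] at h₂
    rw [abs_lt] at h₁ h₂ ⊢
    constructor <;> linarith [h₁.1, h₁.2, h₂.1, h₂.2]

theorem of_stationary [NormedSpace ℝ E] {Y : ℝ → ℝ} (hYc : Continuous Y)
    (hY_nonpos : ∀ r, Y r ≤ 0) (hY : ∀ a : ℝ → ℝ, ∀ r > 0, DifferentiableAt ℝ a r →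
      IsLocalMax (fun ρ => Y ρ - a ρ) r → -(N / r * deriv a r + σ * |deriv a r|) ≤ g r) :
    RegularSubsol N σ g (fun (x : E) _ => Y ‖x‖) where
  subsol := .of_stationary hY
  continuousOn := by fun_prop
  bddAbove _ := ⟨0, fun x _ _ => hY_nonpos ‖x‖⟩
  equicontinuous _ ε hε := ⟨1, one_pos, fun x _ _ _ _ _ => by simpa using hε⟩

end RegularSubsol

end RadialSubsolutionAlgebra

section Comparison

/-- A smooth approximation of `|d|`, used as the penalization of `‖x‖ - ‖y‖`. -/
noncomputable def softAbs (δ d : ℝ) : ℝ := √(d ^ 2 + δ ^ 2)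

theorem softAbs_pos {δ : ℝ} (hδ : 0 < δ) (d : ℝ) : 0 < softAbs δ d :=
  Real.sqrt_pos.2 (by positivity)

theorem abs_le_softAbs (δ d : ℝ) : |d| ≤ softAbs δ d :=
  Real.abs_le_sqrt (le_add_of_nonneg_right (sq_nonneg δ))

theorem softAbs_le_abs_add {δ : ℝ} (hδ : 0 ≤ δ) (d : ℝ) : softAbs δ d ≤ |d| + δ :=
  Real.sqrt_le_iff.2 ⟨by positivity, by nlinarith [sq_abs d, abs_nonneg d]⟩

theorem contDiff_softAbs {δ : ℝ} (hδ : 0 < δ) : ContDiff ℝ 1 (softAbs δ) :=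
  ContDiff.sqrt (by fun_prop) fun d => by positivity

theorem deriv_softAbs {δ : ℝ} (hδ : 0 < δ) (d : ℝ) : deriv (softAbs δ) d = d / softAbs δ d := by
  have hsq : HasDerivAt (fun d => d ^ 2 + δ ^ 2) (2 * d) d :=
    (((hasDerivAt_id d).pow 2).add_const _).congr_deriv (by simp)
  exact (hsq.sqrt (by positivity)).deriv.trans (mul_div_mul_left _ _ two_ne_zero)

theorem half_le_abs_deriv_softAbs {δ d : ℝ} (hδ : 0 < δ) (hd : δ ≤ |d|) :
    1 / 2 ≤ |deriv (softAbs δ) d| := by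
  rw [deriv_softAbs hδ, abs_div, abs_of_pos (softAbs_pos hδ d),
    div_le_div_iff₀ two_pos (softAbs_pos hδ d)]
  linarith [softAbs_le_abs_add hδ.le d]

/-- A radial source that is Lipschitz both in `r` and, up to `r = 0`, in the curvature `1 / r`. -/
structure RadialLipschitz (C L : ℝ) (g : ℝ → ℝ) : Prop where
  abs_sub_le : ∀ r > 0, ∀ s > 0, |g r - g s| ≤ C * |r - s|
  abs_sub_le_inv : ∀ r > 0, ∀ s > 0, |g r - g s| ≤ L * |r⁻¹ - s⁻¹|

-- A slope of size `K ≥ 2 L / N` makes the curvature term absorb the variation of the source.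
theorem RadialLipschitz.sub_add_curvature_le {C L N K δ r s : ℝ} {g : ℝ → ℝ}
    (hg : RadialLipschitz C L g) (hNK : 2 * L ≤ N * K) (hNK_nonneg : 0 ≤ N * K) (hδ : 0 < δ)
    (hr : 0 < r) (hs : 0 < s) :
    g r - g s + N * K * (deriv (softAbs δ) (r - s) * (r⁻¹ - s⁻¹)) ≤ |C| * δ := by
  have hsign : deriv (softAbs δ) (r - s) * (r⁻¹ - s⁻¹) =
      -(|deriv (softAbs δ) (r - s)| * |r⁻¹ - s⁻¹|) := by
    have hrs : (r - s) * (r⁻¹ - s⁻¹) = -((r - s) ^ 2 / (r * s)) := by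
      field_simp
      ring
    rw [← abs_mul, abs_of_nonpos, neg_neg]
    rw [deriv_softAbs hδ, div_mul_eq_mul_div, hrs]
    exact div_nonpos_of_nonpos_of_nonneg (neg_nonpos.2 (by positivity)) (softAbs_pos hδ _).le
  rw [hsign]
  have hvar := le_abs_self (g r - g s)
  rcases le_total δ |r - s| with hfar | hnear
  · have := mul_le_mul_of_nonneg_left (half_le_abs_deriv_softAbs hδ hfar) hNK_nonneg
    have := mul_le_mul_of_nonneg_right this (abs_nonneg (r⁻¹ - s⁻¹))
    have := mul_le_mul_of_nonneg_right hNK (abs_nonneg (r⁻¹ - s⁻¹))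
    have : 0 ≤ |C| * δ := by positivity
    linarith [hg.abs_sub_le_inv r hr s hs]
  · have : C * |r - s| ≤ |C| * δ := mul_le_mul (le_abs_self C) hnear (abs_nonneg _) (abs_nonneg _)
    have : 0 ≤ N * K * (|deriv (softAbs δ) (r - s)| * |r⁻¹ - s⁻¹|) := by positivity
    linarith [hg.abs_sub_le r hr s hs]

variable {E : Type*} [NormedAddCommGroup E] {N σ K T : ℝ} {g g₁ g₂ : ℝ → ℝ} {U W : E → ℝ → ℝ}

theorem RadialSubsol.nonneg_of_isMaxOn_doubled (hU : RadialSubsol N 1 g₁ U)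
    (hW : RadialSubsol N (-1) g₂ W) {ψ : ℝ → ℝ} (hψ : ContDiff ℝ 1 ψ) {T β t s : ℝ} {x y : E}
    (hx : x ≠ 0) (hy : y ≠ 0) (ht : t ∈ Ioo 0 T) (hs : s ∈ Ioo 0 T)
    (hmax : IsMaxOn (fun z : (E × ℝ) × E × ℝ => U z.1.1 z.1.2 + W z.2.1 z.2.2
      - ψ (‖z.1.1‖ - ‖z.2.1‖) - (z.1.2 - z.2.2) ^ 2 / β)
      (({0}ᶜ ×ˢ Icc 0 T) ×ˢ ({0}ᶜ ×ˢ Icc 0 T)) ((x, t), y, s)) :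
    0 ≤ g₁ ‖x‖ + g₂ ‖y‖ + N * (deriv ψ (‖x‖ - ‖y‖) * (‖x‖⁻¹ - ‖y‖⁻¹)) := by
  have hnhds (z : E) (τ : ℝ) (hz : z ≠ 0) (hτ : τ ∈ Ioo 0 T) :
      ({0}ᶜ ×ˢ Icc 0 T : Set (E × ℝ)) ∈ comap (fun p => (‖p.1‖, p.2)) (𝓝 (‖z‖, τ)) :=
    ⟨Ioi 0 ×ˢ Icc 0 T, prod_mem_nhds (Ioi_mem_nhds (norm_pos_iff.2 hz))
      (Icc_mem_nhds hτ.1 hτ.2), fun p hp => ⟨norm_pos_iff.1 hp.1, hp.2⟩⟩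
  have hfst := hU (fun r => ψ (r - ‖y‖)) (fun τ => (τ - s) ^ 2 / β) x t hx ht.1
    (by fun_prop) (by fun_prop) <| by
      filter_upwards [hnhds x t hx ht] with p hp
      have := hmax (a := (p, y, s)) ⟨hp, hy, Ioo_subset_Icc_self hs⟩
      simp only [mem_ofPred_eq] at this
      linarith
  have hsnd := hW (fun r => ψ (‖x‖ - r)) (fun τ => (t - τ) ^ 2 / β) y s hy hs.1
    (by fun_prop) (by fun_prop) <| by
      filter_upwards [hnhds y s hy hs] with p hp
      have := hmax (a := ((x, t), p)) ⟨⟨hx, Ioo_subset_Icc_self ht⟩, hp⟩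
      simp only [mem_ofPred_eq] at this
      linarith
  have ht' : deriv (fun τ => (τ - s) ^ 2 / β) t = 2 * (t - s) / β :=
    ((((hasDerivAt_id t).sub_const s).pow 2).div_const β).deriv.trans (by simp)
  have hs' : deriv (fun τ => (t - τ) ^ 2 / β) s = -(2 * (t - s) / β) :=
    ((((hasDerivAt_id s).const_sub t).pow 2).div_const β).deriv.trans (by simp; ring)
  rw [ht', deriv_comp_sub_const] at hfst
  rw [hs', deriv_comp_const_sub, abs_neg] at hsnd
  ring_nf at hfst hsnd ⊢
  linarith

theorem isCompact_norm_add_inv_le [ProperSpace E] (R : ℝ) :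
    IsCompact {x : E | x ≠ 0 ∧ ‖x‖ + ‖x‖⁻¹ ≤ R} := by
  have hset : {x : E | x ≠ 0 ∧ ‖x‖ + ‖x‖⁻¹ ≤ R} = {x | ‖x‖ ^ 2 + 1 ≤ R * ‖x‖} := by
    ext x
    rcases eq_or_ne x 0 with rfl | hx
    · simp [not_le.2 one_pos]
    · have hx' : 0 < ‖x‖ := norm_pos_iff.2 hx
      rw [mem_ofPred_eq, mem_ofPred_eq, ← mul_le_mul_iff_left₀ hx', add_mul,
        inv_mul_cancel₀ hx'.ne', sq]
      simp [hx]
  refine Metric.isCompact_of_isClosed_isBounded ?_ ?_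
  · rw [hset]
    exact isClosed_le (by fun_prop) (by fun_prop)
  · refine (Metric.isBounded_closedBall (x := (0 : E)) (r := R)).subset fun x hx => ?_
    rw [mem_closedBall_zero_iff]
    exact (le_add_of_nonneg_right (by positivity)).trans hx.2

theorem exists_isMaxOn_of_le_sub_norm_add_inv [ProperSpace E] {T M μ : ℝ} (hμ : 0 < μ)
    {F : (E × ℝ) × E × ℝ → ℝ} {z₀ : (E × ℝ) × E × ℝ}
    (hz₀ : z₀ ∈ (({0}ᶜ ×ˢ Icc 0 T) ×ˢ ({0}ᶜ ×ˢ Icc 0 T) : Set ((E × ℝ) × E × ℝ)))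
    (hF : ContinuousOn F (({0}ᶜ ×ˢ Icc 0 T) ×ˢ ({0}ᶜ ×ˢ Icc 0 T)))
    (hle : ∀ z ∈ (({0}ᶜ ×ˢ Icc 0 T) ×ˢ ({0}ᶜ ×ˢ Icc 0 T) : Set ((E × ℝ) × E × ℝ)),
      F z ≤ M - μ * (‖z.1.1‖ + ‖z.1.1‖⁻¹) - μ * (‖z.2.1‖ + ‖z.2.1‖⁻¹)) :
    ∃ z ∈ (({0}ᶜ ×ˢ Icc 0 T) ×ˢ ({0}ᶜ ×ˢ Icc 0 T) : Set ((E × ℝ) × E × ℝ)),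
      IsMaxOn F (({0}ᶜ ×ˢ Icc 0 T) ×ˢ ({0}ᶜ ×ˢ Icc 0 T)) z := by
  let A : Set E := {x | x ≠ 0 ∧ ‖x‖ + ‖x‖⁻¹ ≤ (M - F z₀) / μ}
  have hA : IsCompact A := isCompact_norm_add_inv_le _
  have hlarge : ∀ z ∈ (({0}ᶜ ×ˢ Icc 0 T) ×ˢ ({0}ᶜ ×ˢ Icc 0 T) : Set ((E × ℝ) × E × ℝ)),
      F z₀ ≤ F z → z ∈ (A ×ˢ Icc 0 T) ×ˢ (A ×ˢ Icc 0 T) := by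
    intro z hz hFz
    have h₁ : 0 ≤ μ * (‖z.1.1‖ + ‖z.1.1‖⁻¹) := by positivity
    have h₂ : 0 ≤ μ * (‖z.2.1‖ + ‖z.2.1‖⁻¹) := by positivity
    have hle := hle z hz
    refine ⟨⟨⟨hz.1.1, ?_⟩, hz.1.2⟩, ⟨hz.2.1, ?_⟩, hz.2.2⟩ <;>
    · rw [le_div_iff₀' hμ]
      linarith
  have hsub : (A ×ˢ Icc 0 T) ×ˢ (A ×ˢ Icc 0 T) ⊆ ({0}ᶜ ×ˢ Icc 0 T) ×ˢ ({0}ᶜ ×ˢ Icc 0 T) :=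
    fun z hz => ⟨⟨hz.1.1.1, hz.1.2⟩, hz.2.1.1, hz.2.2⟩
  obtain ⟨z, hz, hmax⟩ := ((hA.prod isCompact_Icc).prod (hA.prod isCompact_Icc)).exists_isMaxOn
    ⟨z₀, hlarge z₀ hz₀ le_rfl⟩ (hF.mono hsub)
  refine ⟨z, hsub hz, fun w hw => ?_⟩
  rcases le_total (F z₀) (F w) with h | h
  · exact hmax (hlarge w hw h)
  · exact h.trans (hmax (hlarge z₀ hz₀ le_rfl))

theorem exists_terminal_penalty {t₀ T ε : ℝ} (ht₀ : t₀ < T) (hε : 0 < ε) (M : ℝ) :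
    ∃ b : ℝ → ℝ, ContDiff ℝ 2 b ∧ (∀ t, 0 ≤ b t) ∧ (∀ t, 0 ≤ deriv b t) ∧ b t₀ ≤ ε ∧ M ≤ b T := by
  have hT : 0 < ε * (T - t₀) := mul_pos hε (sub_pos.2 ht₀)
  let S := |M| / (ε * (T - t₀))
  refine ⟨fun t => ε * Real.exp (S * (t - t₀)), by fun_prop, fun t => by positivity, fun t => ?_,
    by simp, ?_⟩
  · have : HasDerivAt (fun t => ε * Real.exp (S * (t - t₀)))
        (ε * (Real.exp (S * (t - t₀)) * (S * 1))) t :=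
      (((hasDerivAt_id t).sub_const t₀).const_mul S).exp.const_mul ε
    rw [this.deriv]
    positivity
  · calc M ≤ ε * (S * (T - t₀)) := by
          rw [mul_left_comm, div_mul_cancel₀ _ hT.ne']
          exact le_abs_self M
      _ ≤ ε * Real.exp (S * (T - t₀)) := by
          gcongr
          linarith [Real.add_one_le_exp (S * (T - t₀))]

theorem curvature_penalty_le (hN : 1 ≤ N) {r : ℝ} (hr : 0 < r) :
    N / r * (1 - (r ^ 2)⁻¹) + |1 - (r ^ 2)⁻¹| ≤ N + 2 := by
  obtain ⟨k, rfl⟩ : ∃ k, r = k⁻¹ := ⟨r⁻¹, (inv_inv r).symm⟩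
  have hk : 0 < k := inv_pos.1 hr
  rw [div_inv_eq_mul, inv_pow, inv_inv]
  rcases le_total 1 (k ^ 2) with h | h
  · rw [abs_of_nonpos (by linarith)]
    have hk₁ : 1 ≤ k := by nlinarith
    nlinarith [mul_nonneg (mul_nonneg (by linarith : 0 ≤ N - 1) hk.le) (sub_nonneg.2 h),
      mul_nonneg (sub_nonneg.2 hk₁) (sub_nonneg.2 h)]
  · rw [abs_of_nonneg (by linarith)]
    have hk₁ : k ≤ 1 := by nlinarith
    nlinarith [mul_nonneg (by linarith : 0 ≤ N) (pow_nonneg hk.le 3),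
      mul_nonneg (by linarith : 0 ≤ N) (sub_nonneg.2 hk₁)]

theorem RadialSubsol.sub_penalty (hU : RadialSubsol N σ g U) (hN : 1 ≤ N) (hσ : |σ| ≤ 1)
    {μ ν : ℝ} (hμ : 0 ≤ μ) {b : ℝ → ℝ} (hb : ContDiff ℝ 2 b) (hν : ∀ t, ν ≤ deriv b t) :
    RadialSubsol N σ (fun r => g r - ν + μ * (N + 2))
      (fun x t => U x t - μ * (‖x‖ + ‖x‖⁻¹) - b t) := by
  have hderiv (r : ℝ) (hr : 0 < r) :
      deriv (fun r => -(μ * (r + r⁻¹))) r = -(μ * (1 - (r ^ 2)⁻¹)) :=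
    (((hasDerivAt_id r).add (hasDerivAt_inv hr.ne')).const_mul μ).neg.deriv.trans (by ring)
  have hsmooth (r : ℝ) (hr : 0 < r) : ContDiffAt ℝ 1 (fun r => -(μ * (r + r⁻¹))) r :=
    (contDiffAt_const.mul (contDiffAt_id.add (contDiffAt_inv ℝ hr.ne'))).neg
  simp only [sub_eq_add_neg (U _ _), sub_eq_add_neg _ (b _)]
  refine hU.add hsmooth hb.neg fun r hr t _ => ?_
  rw [hderiv r hr, deriv.fun_neg, abs_neg, abs_mul, abs_of_nonneg hμ]
  have habs : |σ| * (μ * |1 - (r ^ 2)⁻¹|) ≤ μ * |1 - (r ^ 2)⁻¹| :=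
    mul_le_of_le_one_left (by positivity) hσ
  linarith [mul_le_mul_of_nonneg_left (curvature_penalty_le hN hr) hμ, hν t]

theorem RegularSubsol.exists_mem_interior_of_le_doubled (hU : RegularSubsol N 1 g₁ U)
    (hW : RegularSubsol N (-1) g₂ W) {B : Set ℝ} {E₀ η : ℝ} (hK : 0 ≤ K) (hη : 0 < η)
    (hbdry : ∀ t ∈ Ico 0 T, ∀ x y : E, x ≠ 0 → y ≠ 0 → t = 0 ∨ ‖y‖ ∈ B →
      U x t + W y t ≤ E₀ + K * |‖x‖ - ‖y‖|) :
    ∃ β > 0, ∃ M, ∀ b : ℝ → ℝ, (∀ t, 0 ≤ b t) → M ≤ b T →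
      ∀ x y : E, x ≠ 0 → y ≠ 0 → ∀ t ∈ Icc 0 T, ∀ s ∈ Icc 0 T,
        E₀ + η ≤ U x t + W y s - K * |‖x‖ - ‖y‖| - (t - s) ^ 2 / β - b t - b s →
        t ∈ Ioo 0 T ∧ s ∈ Ioo 0 T ∧ ‖y‖ ∉ B := by
  obtain ⟨M₁, hM₁⟩ := hU.bddAbove T
  obtain ⟨M₂, hM₂⟩ := hW.bddAbove T
  obtain ⟨τ₁, hτ₁, hosc₁⟩ := hU.equicontinuous T η hη
  obtain ⟨τ₂, hτ₂, hosc₂⟩ := hW.equicontinuous T η hη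
  let M := |M₁ + M₂ - E₀| + 1
  have hM : M₁ + M₂ - E₀ < M := (le_abs_self _).trans_lt (lt_add_one _)
  have hM_pos : 0 < M := by positivity
  have hβ : 0 < min τ₁ τ₂ ^ 2 / M := by positivity
  refine ⟨min τ₁ τ₂ ^ 2 / M, hβ, M, fun b hb hbT x y hx hy t ht s hs hle => ?_⟩
  have hpen : 0 ≤ K * |‖x‖ - ‖y‖| := by positivity
  have hbt := hb t
  have hbs := hb s
  have hUx := hM₁ x t ht
  have hWy := hM₂ y s hs
  have hsq : 0 ≤ (t - s) ^ 2 / (min τ₁ τ₂ ^ 2 / M) := by positivity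
  have hts : |t - s| < min τ₁ τ₂ := by
    refine abs_lt_of_sq_lt_sq ?_ (by positivity)
    have : (t - s) ^ 2 / (min τ₁ τ₂ ^ 2 / M) < M := by linarith
    rwa [div_lt_iff₀ hβ, mul_div_cancel₀ _ hM_pos.ne'] at this
  have ht_lt : t < T := ht.2.lt_of_ne fun h => by
    rw [← h] at hbT
    linarith
  have hs_lt : s < T := hs.2.lt_of_ne fun h => by
    rw [← h] at hbT
    linarith
  have hinside : ¬(s = 0 ∨ ‖y‖ ∈ B) := fun h => by
    linarith [hbdry s ⟨hs.1, hs_lt⟩ x y hx hy h,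
      (abs_lt.1 (hosc₁ x t ht s hs (hts.trans_le (min_le_left _ _)))).2]
  have ht_ne : t ≠ 0 := fun h => by
    linarith [hbdry t ⟨ht.1, ht_lt⟩ x y hx hy (.inl h),
      (abs_lt.1 (hosc₂ y t ht s hs (hts.trans_le (min_le_right _ _)))).1]
  exact ⟨⟨ht.1.lt_of_ne' ht_ne, ht_lt⟩,
    ⟨hs.1.lt_of_ne' fun h => hinside (.inl h), hs_lt⟩, fun h => hinside (.inr h)⟩

theorem RegularSubsol.exists_isMaxOn_doubled [ProperSpace E] (hU : RegularSubsol N 1 g₁ U)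
    (hW : RegularSubsol N (-1) g₂ W) {μ β : ℝ} (hμ : 0 < μ) (hβ : 0 < β) {ψ b₁ b₂ : ℝ → ℝ}
    (hψ : Continuous ψ) (hψ_nonneg : ∀ d, 0 ≤ ψ d) (hb₁ : Continuous b₁)
    (hb₁_nonneg : ∀ t ∈ Icc 0 T, 0 ≤ b₁ t) (hb₂ : Continuous b₂) (hb₂_nonneg : ∀ t, 0 ≤ b₂ t)
    {t₀ : ℝ} (ht₀ : t₀ ∈ Icc 0 T) {x₀ : E} (hx₀ : x₀ ≠ 0) :
    ∃ x y : E, x ≠ 0 ∧ y ≠ 0 ∧ ∃ t ∈ Icc 0 T, ∃ s ∈ Icc 0 T,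
      IsMaxOn (fun z : (E × ℝ) × E × ℝ => U z.1.1 z.1.2 - μ * (‖z.1.1‖ + ‖z.1.1‖⁻¹) - b₁ z.1.2
        + (W z.2.1 z.2.2 - μ * (‖z.2.1‖ + ‖z.2.1‖⁻¹) - b₂ z.2.2)
        - ψ (‖z.1.1‖ - ‖z.2.1‖) - (z.1.2 - z.2.2) ^ 2 / β)
        (({0}ᶜ ×ˢ Icc 0 T) ×ˢ ({0}ᶜ ×ˢ Icc 0 T)) ((x, t), y, s) := by
  obtain ⟨M₁, hM₁⟩ := hU.bddAbove T
  obtain ⟨M₂, hM₂⟩ := hW.bddAbove T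
  have hUc : ContinuousOn (fun z : (E × ℝ) × E × ℝ => U z.1.1 z.1.2)
      (({0}ᶜ ×ˢ Icc 0 T) ×ˢ ({0}ᶜ ×ˢ Icc 0 T)) :=
    hU.continuousOn.comp continuousOn_fst fun _ hz => ⟨mem_univ _, hz.1.2.1⟩
  have hWc : ContinuousOn (fun z : (E × ℝ) × E × ℝ => W z.2.1 z.2.2)
      (({0}ᶜ ×ˢ Icc 0 T) ×ˢ ({0}ᶜ ×ˢ Icc 0 T)) :=
    hW.continuousOn.comp continuousOn_snd fun _ hz => ⟨mem_univ _, hz.2.2.1⟩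
  have hinv₁ : ContinuousOn (fun z : (E × ℝ) × E × ℝ => ‖z.1.1‖⁻¹)
      (({0}ᶜ ×ˢ Icc 0 T) ×ˢ ({0}ᶜ ×ˢ Icc 0 T)) :=
    ContinuousOn.inv₀ (by fun_prop) fun z hz => norm_ne_zero_iff.2 hz.1.1
  have hinv₂ : ContinuousOn (fun z : (E × ℝ) × E × ℝ => ‖z.2.1‖⁻¹)
      (({0}ᶜ ×ˢ Icc 0 T) ×ˢ ({0}ᶜ ×ˢ Icc 0 T)) :=
    ContinuousOn.inv₀ (by fun_prop) fun z hz => norm_ne_zero_iff.2 hz.2.1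
  obtain ⟨⟨⟨x, t⟩, y, s⟩, ⟨⟨hx, ht⟩, hy, hs⟩, hmax⟩ := exists_isMaxOn_of_le_sub_norm_add_inv
    (T := T) (M := M₁ + M₂) (z₀ := ((x₀, t₀), x₀, t₀)) hμ ⟨⟨hx₀, ht₀⟩, hx₀, ht₀⟩
    (F := fun z : (E × ℝ) × E × ℝ => U z.1.1 z.1.2 - μ * (‖z.1.1‖ + ‖z.1.1‖⁻¹) - b₁ z.1.2
      + (W z.2.1 z.2.2 - μ * (‖z.2.1‖ + ‖z.2.1‖⁻¹) - b₂ z.2.2)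
      - ψ (‖z.1.1‖ - ‖z.2.1‖) - (z.1.2 - z.2.2) ^ 2 / β)
    (by refine ((((hUc.sub ?_).sub ?_).add ((hWc.sub ?_).sub ?_)).sub ?_).sub ?_ <;> fun_prop)
    fun z hz => by
        have := hM₁ z.1.1 z.1.2 hz.1.2
        have := hM₂ z.2.1 z.2.2 hz.2.2
        have := hψ_nonneg (‖z.1.1‖ - ‖z.2.1‖)
        have := hb₁_nonneg z.1.2 hz.1.2
        have := hb₂_nonneg z.2.2
        have : 0 ≤ (z.1.2 - z.2.2) ^ 2 / β := by positivity
        linarith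
  exact ⟨x, y, hx, hy, t, ht, s, hs, hmax⟩

theorem RadialSubsol.le_of_isMaxOn_doubled {C L : ℝ} (hN : 1 ≤ N) (hg : RadialLipschitz C L g₁)
    (hU : RadialSubsol N 1 g₁ U) (hW : RadialSubsol N (-1) g₂ W) (hK : 0 ≤ K)
    (hLK : 2 * L ≤ N * K) {δ μ ν β : ℝ} (hδ : 0 < δ) (hμ : 0 ≤ μ) {b₁ b₂ : ℝ → ℝ}
    (hb₁ : ContDiff ℝ 2 b₁) (hb₁_deriv : ∀ t, ν ≤ deriv b₁ t) (hb₂ : ContDiff ℝ 2 b₂)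
    (hb₂_deriv : ∀ t, 0 ≤ deriv b₂ t) {t s : ℝ} {x y : E} (hx : x ≠ 0) (hy : y ≠ 0)
    (ht : t ∈ Ioo 0 T) (hs : s ∈ Ioo 0 T) (hsum : g₁ ‖y‖ + g₂ ‖y‖ ≤ 0)
    (hmax : IsMaxOn (fun z : (E × ℝ) × E × ℝ =>
        U z.1.1 z.1.2 - μ * (‖z.1.1‖ + ‖z.1.1‖⁻¹) - b₁ z.1.2
          + (W z.2.1 z.2.2 - μ * (‖z.2.1‖ + ‖z.2.1‖⁻¹) - b₂ z.2.2)
          - K * softAbs δ (‖z.1.1‖ - ‖z.2.1‖) - (z.1.2 - z.2.2) ^ 2 / β)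
        (({0}ᶜ ×ˢ Icc 0 T) ×ˢ ({0}ᶜ ×ˢ Icc 0 T)) ((x, t), y, s)) :
    ν ≤ |C| * δ + 2 * (N + 2) * μ := by
  have hN₀ : 0 ≤ N := zero_le_one.trans hN
  have hmax_le := (hU.sub_penalty hN (by simp) hμ hb₁ hb₁_deriv).nonneg_of_isMaxOn_doubled
    (hW.sub_penalty hN (by simp) hμ hb₂ hb₂_deriv)
    (contDiff_const.mul (contDiff_softAbs hδ)) hx hy ht hs hmax
  have hcurv := hg.sub_add_curvature_le hLK (mul_nonneg hN₀ hK) hδ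
    (norm_pos_iff.2 hx) (norm_pos_iff.2 hy)
  rw [deriv_const_mul_field] at hmax_le
  linarith

theorem exists_pos_mul_lt_and_mul_lt {ε ε' : ℝ} (hε : 0 < ε) (hε' : 0 < ε') (a b : ℝ) :
    ∃ c > 0, a * c < ε ∧ b * c < ε' := by
  obtain ⟨c, hc, hlt⟩ := exists_pos_mul_lt (lt_min hε hε') (max a b)
  rw [max_mul_of_nonneg _ _ hc.le, max_lt_iff, lt_min_iff, lt_min_iff] at hlt
  exact ⟨c, hc, hlt.1.1, hlt.2.2⟩

-- Doubling of variables: the penalty `K softAbs δ (‖x‖ - ‖y‖)` tends to `K |‖x‖ - ‖y‖|`, whose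
-- curvature term has the favourable sign and dominates `g₁ ‖x‖ - g₁ ‖y‖`.
theorem RegularSubsol.add_le_of_ne_zero [ProperSpace E] {C L E₀ : ℝ} {B : Set ℝ} (hN : 1 ≤ N)
    (hg : RadialLipschitz C L g₁) (hU : RegularSubsol N 1 g₁ U) (hW : RegularSubsol N (-1) g₂ W)
    (hsum : ∀ r > 0, r ∉ B → g₁ r + g₂ r ≤ 0) (hK : 0 ≤ K) (hLK : 2 * L ≤ N * K)
    (hbdry : ∀ t ∈ Ico 0 T, ∀ x y : E, x ≠ 0 → y ≠ 0 → t = 0 ∨ ‖y‖ ∈ B →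
      U x t + W y t ≤ E₀ + K * |‖x‖ - ‖y‖|) :
    ∀ t ∈ Ico 0 T, ∀ x y : E, x ≠ 0 → y ≠ 0 → U x t + W y t ≤ E₀ + K * |‖x‖ - ‖y‖| := by
  intro t₀ ht₀ x₀ y₀ hx₀ hy₀
  by_contra! hlt
  have hT : 0 < T := ht₀.1.trans_lt ht₀.2
  obtain ⟨η, hη⟩ : ∃ η, U x₀ t₀ + W y₀ t₀ = E₀ + K * |‖x₀‖ - ‖y₀‖| + 6 * η :=
    ⟨(U x₀ t₀ + W y₀ t₀ - E₀ - K * |‖x₀‖ - ‖y₀‖|) / 6, by ring⟩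
  have hη_pos : 0 < η := by linarith
  have hν : 0 < η / T := by positivity
  obtain ⟨β, hβ, M, hinterior⟩ := hU.exists_mem_interior_of_le_doubled hW hK hη_pos hbdry
  obtain ⟨b, hb, hb_nonneg, hb_mono, hbt₀, hbT⟩ := exists_terminal_penalty ht₀.2 hη_pos M
  obtain ⟨δ, hδ, hKδ, hCδ⟩ :=
    exists_pos_mul_lt_and_mul_lt hη_pos (by positivity : 0 < η / T / 3) K |C|
  obtain ⟨μ, hμ, hQμ, hNμ⟩ := exists_pos_mul_lt_and_mul_lt hη_pos
    (by positivity : 0 < η / T / 3) (‖x₀‖ + ‖x₀‖⁻¹ + (‖y₀‖ + ‖y₀‖⁻¹)) (2 * (N + 2))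
  obtain ⟨x, y, hx, hy, t, ht, s, hs, hmax⟩ := hU.exists_isMaxOn_doubled hW hμ hβ
    (ψ := fun d => K * softAbs δ d) (continuous_const.mul (contDiff_softAbs hδ).continuous)
    (fun d => mul_nonneg hK (softAbs_pos hδ d).le) (b₁ := fun t => η / T * t + b t)
    (by fun_prop) (fun t ht => add_nonneg (mul_nonneg hν.le ht.1) (hb_nonneg t)) hb.continuous
    hb_nonneg (Ico_subset_Icc_self ht₀) hx₀
  have hvalue := hmax (a := ((x₀, t₀), y₀, t₀))
    ⟨⟨hx₀, Ico_subset_Icc_self ht₀⟩, hy₀, Ico_subset_Icc_self ht₀⟩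
  simp only [mem_ofPred_eq, sub_self, zero_pow two_ne_zero, zero_div, sub_zero] at hvalue
  obtain ⟨ht', hs', hyB⟩ := hinterior b hb_nonneg hbT x y hx hy t ht s hs <| by
    have := mul_le_mul_of_nonneg_left (abs_le_softAbs δ (‖x‖ - ‖y‖)) hK
    have := mul_le_mul_of_nonneg_left (softAbs_le_abs_add hδ.le (‖x₀‖ - ‖y₀‖)) hK
    have : η / T * t₀ ≤ η := by
      rw [div_mul_eq_mul_div, div_le_iff₀ hT]
      exact mul_le_mul_of_nonneg_left ht₀.2.le hη_pos.le
    have : 0 ≤ η / T * t := mul_nonneg hν.le ht.1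
    have : 0 ≤ μ * (‖x‖ + ‖x‖⁻¹) := by positivity
    have : 0 ≤ μ * (‖y‖ + ‖y‖⁻¹) := by positivity
    linarith
  have hderiv (t : ℝ) : η / T ≤ deriv (fun t => η / T * t + b t) t := by
    rw [deriv_fun_add (by fun_prop) (hb.differentiable two_ne_zero t), deriv_const_mul_field,
      deriv_id'', mul_one]
    linarith [hb_mono t]
  have := hU.subsol.le_of_isMaxOn_doubled hN hg hW.subsol hK hLK hδ hμ.le (by fun_prop) hderiv hb
    hb_mono hx hy ht' hs' (hsum _ (norm_pos_iff.2 hy) hyB) hmax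
  linarith

theorem RegularSubsol.add_le [NormedSpace ℝ E] [Nontrivial E] [ProperSpace E] {C L E₀ : ℝ}
    {B : Set ℝ} (hN : 1 ≤ N) (hg : RadialLipschitz C L g₁) (hU : RegularSubsol N 1 g₁ U)
    (hW : RegularSubsol N (-1) g₂ W) (hsum : ∀ r > 0, r ∉ B → g₁ r + g₂ r ≤ 0) (hK : 0 ≤ K)
    (hLK : 2 * L ≤ N * K) (hbdry : ∀ t ∈ Ico 0 T, ∀ x y : E, x ≠ 0 → y ≠ 0 → t = 0 ∨ ‖y‖ ∈ B →
      U x t + W y t ≤ E₀ + K * |‖x‖ - ‖y‖|) :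
    ∀ t ∈ Ico 0 T, ∀ x y : E, U x t + W y t ≤ E₀ + K * |‖x‖ - ‖y‖| := by
  intro t ht x y
  have hUt : Continuous fun x => U x t := hU.continuousOn.comp_continuous
    (Continuous.prodMk_left t) fun _ => ⟨mem_univ _, ht.1⟩
  have hWt : Continuous fun x => W x t := hW.continuousOn.comp_continuous
    (Continuous.prodMk_left t) fun _ => ⟨mem_univ _, ht.1⟩
  refine ((dense_compl_singleton (0 : E)).prod (dense_compl_singleton (0 : E))).induction
    (P := fun z : E × E => U z.1 t + W z.2 t ≤ E₀ + K * |‖z.1‖ - ‖z.2‖|) ?_ ?_ (x, y)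
  · exact fun z hz => hU.add_le_of_ne_zero hN hg hW hsum hK hLK hbdry t ht z.1 z.2 hz.1 hz.2
  · exact isClosed_le (by fun_prop) (by fun_prop)

end Comparison

section Barriers

variable {N C L : ℝ} {g : ℝ → ℝ}

theorem RadialLipschitz.nonneg (hg : RadialLipschitz C L g) : 0 ≤ L := by
  have := hg.abs_sub_le_inv 1 one_pos 2 two_pos
  norm_num at this
  linarith [abs_nonneg (g 1 - g 2)]

theorem RadialLipschitz.continuousOn (hg : RadialLipschitz C L g) : ContinuousOn g (Ioi 0) := by
  refine (LipschitzOnWith.of_dist_le_mul (K := C.toNNReal) fun r hr s hs => ?_).continuousOn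
  rw [Real.dist_eq, Real.dist_eq]
  exact (hg.abs_sub_le r hr s hs).trans
    (mul_le_mul_of_nonneg_right (Real.le_coe_toNNReal C) (abs_nonneg _))

/-- A source, reduced by the ergodic constant `c`, so that it is nonpositive outside the ball of
radius `N = n - 1` with maximum `0` there. The zeros `r ≥ N` are the contact radii, at which
solutions are nondecreasing in time. -/
structure ContactSource (N C L : ℝ) (g : ℝ → ℝ) : Prop where
  lipschitz : RadialLipschitz C L g
  nonpos : ∀ r ≥ N, g r ≤ 0
  exists_eq_zero : ∃ r ≥ N, g r = 0
  eventually_const : ∃ R, ∀ r ≥ R, g r = g R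

theorem ContactSource.le_mul_div_sub_one (hg : ContactSource N C L g) (hN : 1 ≤ N) {r : ℝ}
    (hr : 0 < r) (hrN : r ≤ N) : g r ≤ L * (N / r - 1) := by
  have hN_pos : 0 < N := one_pos.trans_le hN
  have hL := hg.lipschitz.nonneg
  have hvar := (le_abs_self _).trans (hg.lipschitz.abs_sub_le_inv r hr N hN_pos)
  have hinv : N⁻¹ ≤ r⁻¹ := inv_anti₀ hr hrN
  calc g r ≤ L * (r⁻¹ - N⁻¹) := by
        rw [abs_of_nonneg (sub_nonneg.2 hinv)] at hvar
        linarith [hg.nonpos N le_rfl]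
    _ ≤ L * (N * (r⁻¹ - N⁻¹)) :=
        mul_le_mul_of_nonneg_left (le_mul_of_one_le_left (sub_nonneg.2 hinv) hN) hL
    _ = L * (N / r - 1) := by rw [mul_sub, mul_inv_cancel₀ hN_pos.ne', div_eq_mul_inv]

theorem ContactSource.add_le_of_gap (hg : ContactSource N C L g) (hN : 1 ≤ N) {A κ r : ℝ}
    (hκ : 0 ≤ κ) (hA : L + N ≤ 2 * A * κ) (hr : 0 < r) (hA_nonneg : 0 ≤ A)
    (hgap : κ ≤ -g r ∨ κ ≤ N - r) : g r + κ ≤ 2 * A * (N / r - 1) * max (N - r) 0 := by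
  rcases hgap with hneg | hinner
  · refine (by linarith : g r + κ ≤ 0).trans ?_
    rcases le_total r N with hrN | hrN
    · have := sub_nonneg.2 ((one_le_div hr).2 hrN)
      positivity
    · rw [max_eq_right (sub_nonpos.2 hrN), mul_zero]
  · have hrN : r ≤ N := by linarith
    have hslope : 0 ≤ N / r - 1 := sub_nonneg.2 ((one_le_div hr).2 hrN)
    have hκ_le : κ ≤ N * (N / r - 1) := by
      rw [div_sub_one hr.ne', mul_div_left_comm]
      exact hinner.trans (le_mul_of_one_le_right (by linarith) ((one_le_div hr).2 hrN))
    calc g r + κ ≤ (L + N) * (N / r - 1) := by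
          linarith [hg.le_mul_div_sub_one hN hr hrN]
      _ ≤ 2 * A * κ * (N / r - 1) := mul_le_mul_of_nonneg_right hA hslope
      _ = 2 * A * (N / r - 1) * κ := by ring
      _ ≤ _ := mul_le_mul_of_nonneg_left (hinner.trans (le_max_left _ _)) (by positivity)

theorem ContactSource.exists_finite_contact_gap_of_le (hg : ContactSource N C L g) (hN : 0 < N)
    {ρ : ℝ} (hρ : 0 < ρ) (R : ℝ) : ∃ F : Set ℝ, F.Finite ∧ (∀ a ∈ F, N ≤ a ∧ g a = 0) ∧
      ∃ κ > 0, ∀ r ∈ Icc 0 R, (∃ a ∈ F, |r - a| < ρ) ∨ κ ≤ -g r ∨ κ ≤ N - r := by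
  refine isCompact_Icc.induction_on (p := fun s => ∃ F : Set ℝ, F.Finite ∧
    (∀ a ∈ F, N ≤ a ∧ g a = 0) ∧ ∃ κ > 0, ∀ r ∈ s, (∃ a ∈ F, |r - a| < ρ) ∨ κ ≤ -g r ∨ κ ≤ N - r)
    ?_ ?_ ?_ ?_
  · exact ⟨∅, finite_empty, by simp, 1, one_pos, by simp⟩
  · rintro s t hst ⟨F, hF, hFg, κ, hκ, h⟩
    exact ⟨F, hF, hFg, κ, hκ, fun r hr => h r (hst hr)⟩
  · rintro s t ⟨F, hF, hFg, κ, hκ, h⟩ ⟨F', hF', hFg', κ', hκ', h'⟩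
    refine ⟨F ∪ F', hF.union hF', fun a ha => ha.elim (hFg a) (hFg' a), min κ κ',
      lt_min hκ hκ', fun r hr => ?_⟩
    rcases hr with hr | hr
    · exact (h r hr).imp (fun ⟨a, ha, har⟩ => ⟨a, .inl ha, har⟩)
        (.imp (min_le_left _ _).trans (min_le_left _ _).trans)
    · exact (h' r hr).imp (fun ⟨a, ha, har⟩ => ⟨a, .inr ha, har⟩)
        (.imp (min_le_right _ _).trans (min_le_right _ _).trans)
  · intro r _
    rcases lt_or_ge r N with hrN | hrN
    · exact ⟨Iio ((r + N) / 2), mem_nhdsWithin_of_mem_nhds (Iio_mem_nhds (by linarith)), ∅,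
        finite_empty, by simp, (N - r) / 2, by linarith, fun s hs => .inr (.inr (by
          linarith [mem_Iio.1 hs]))⟩
    rcases (hg.nonpos r hrN).lt_or_eq with hneg | hzero
    · have hcont : ContinuousAt g r :=
        hg.lipschitz.continuousOn.continuousAt (Ioi_mem_nhds (hN.trans_le hrN))
      exact ⟨{s | g s < g r / 2}, mem_nhdsWithin_of_mem_nhds
        (hcont.eventually_lt_const (by linarith)), ∅, finite_empty, by simp, -g r / 2,
        by linarith, fun s (hs : g s < g r / 2) => .inr (.inl (by linarith))⟩
    · exact ⟨Metric.ball r ρ, mem_nhdsWithin_of_mem_nhds (Metric.ball_mem_nhds r hρ), {r},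
        finite_singleton r, by simpa using ⟨hrN, hzero⟩, 1, one_pos,
        fun s hs => .inl ⟨r, rfl, by simpa [Real.dist_eq] using hs⟩⟩

-- Away from finitely many contact radii the strict barrier has room, except where the source
-- vanishes identically near infinity.
theorem ContactSource.exists_finite_contact_gap (hg : ContactSource N C L g) (hN : 0 < N) {ρ : ℝ}
    (hρ : 0 < ρ) {R : ℝ} (hNR : N ≤ R) (hR : ∀ r ≥ R, g r = g R) :
    ∃ F : Set ℝ, F.Finite ∧ (∀ a ∈ F, N ≤ a ∧ g a = 0) ∧ ∃ κ > 0, ∀ r > 0,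
      (∃ a ∈ F, |r - a| < ρ) ∨ (κ ≤ -g r ∨ κ ≤ N - r) ∨ R + 1 < r ∧ g R = 0 := by
  obtain ⟨F, hF, hFg, κ, hκ, hgap⟩ := hg.exists_finite_contact_gap_of_le hN hρ (R + 1)
  have hinner (r : ℝ) (hr : 0 < r) (hrR : r ≤ R + 1) := hgap r ⟨hr.le, hrR⟩
  rcases (hg.nonpos R hNR).lt_or_eq with hneg | hzero
  · refine ⟨F, hF, hFg, min κ (-g R), lt_min hκ (by linarith), fun r hr => ?_⟩
    rcases le_or_gt r (R + 1) with hrR | hrR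
    · exact (hinner r hr hrR).imp id fun h =>
        .inl (h.imp (min_le_left _ _).trans (min_le_left _ _).trans)
    · exact .inr (.inl (.inl ((min_le_right _ _).trans_eq (by rw [hR r (by linarith)]))))
  · refine ⟨F, hF, hFg, κ, hκ, fun r hr => ?_⟩
    rcases le_or_gt r (R + 1) with hrR | hrR
    · exact (hinner r hr hrR).imp id .inl
    · exact .inr (.inr ⟨hrR, hzero⟩)

theorem hasDerivAt_max_zero_sq (z : ℝ) :
    HasDerivAt (fun z : ℝ => max z 0 ^ 2) (2 * max z 0) z := by
  rcases lt_trichotomy z 0 with hz | rfl | hz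
  · have : (fun z : ℝ => max z 0 ^ 2) =ᶠ[𝓝 z] fun _ => 0 := by
      filter_upwards [Iio_mem_nhds hz] with s hs
      rw [max_eq_right (mem_Iio.1 hs).le, zero_pow two_ne_zero]
    simpa [max_eq_right hz.le] using (hasDerivAt_const z (0 : ℝ)).congr_of_eventuallyEq this
  · have hbig : (fun z : ℝ => max z 0 ^ 2) =O[𝓝 0] fun z : ℝ => z ^ 2 :=
      .of_norm_le fun z => by
        rw [Real.norm_of_nonneg (by positivity), ← sq_abs z]
        gcongr
        exact max_le (le_abs_self z) (abs_nonneg z)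
    have : HasDerivAt (fun z : ℝ => max z 0 ^ 2) 0 0 := by
      simpa [hasDerivAt_iff_isLittleO] using
        hbig.trans_isLittleO (Asymptotics.isLittleO_pow_id one_lt_two)
    simpa using this
  · have : (fun z : ℝ => max z 0 ^ 2) =ᶠ[𝓝 z] fun s => s ^ 2 := by
      filter_upwards [Ioi_mem_nhds hz] with s hs
      rw [max_eq_left (mem_Ioi.1 hs).le]
    simpa [max_eq_left hz.le] using (hasDerivAt_pow 2 z).congr_of_eventuallyEq this

theorem contDiff_max_zero_sq : ContDiff ℝ 1 fun z : ℝ => max z 0 ^ 2 := by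
  rw [contDiff_one_iff_deriv]
  refine ⟨fun z => (hasDerivAt_max_zero_sq z).differentiableAt, ?_⟩
  rw [show deriv (fun z : ℝ => max z 0 ^ 2) = fun z => 2 * max z 0 from
    funext fun z => (hasDerivAt_max_zero_sq z).deriv]
  fun_prop

variable {E : Type*} [NormedAddCommGroup E] [NormedSpace ℝ E]

theorem ContactSource.regularSubsol_upperBarrier (hg : ContactSource N C L g) (hN : 1 ≤ N) :
    RegularSubsol N (-1) (fun r => -g r) (fun (x : E) _ => -(L * max (N - ‖x‖) 0)) := by
  have hL := hg.lipschitz.nonneg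
  refine .of_stationary (Y := fun r => -(L * max (N - r) 0)) (by fun_prop)
    (fun r => neg_nonpos.2 (by positivity)) fun a r hr ha hmax => ?_
  rcases lt_trichotomy r N with hrN | rfl | hrN
  · have hY : HasDerivAt (fun ρ => -(L * max (N - ρ) 0)) L r := by
      refine HasDerivAt.congr_of_eventuallyEq (f := fun ρ => -(L * (N - ρ))) ?_ ?_
      · exact (((hasDerivAt_id r).const_sub N).const_mul L).neg.congr_deriv (by ring)
      · filter_upwards [Iio_mem_nhds hrN] with ρ hρ
        rw [max_eq_left (sub_nonneg.2 (mem_Iio.1 hρ).le)]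
    have hslope := hmax.hasDerivAt_eq_zero (hY.sub ha.hasDerivAt)
    rw [← sub_eq_zero.1 hslope, abs_of_nonneg hL]
    linarith [hg.le_mul_div_sub_one hN hr hrN.le]
  · have ha_nonneg : 0 ≤ deriv a r := by
      refine ge_of_tendsto (ha.hasDerivAt.tendsto_slope.mono_left (nhdsGT_le_nhdsNE r)) ?_
      filter_upwards [hmax.filter_mono nhdsWithin_le_nhds, self_mem_nhdsWithin] with ρ hρ hrρ
      rw [max_eq_right (sub_nonpos.2 (le_of_lt hrρ)), max_eq_right (sub_self r).le] at hρ
      rw [slope_def_field]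
      exact div_nonneg (by linarith) (sub_nonneg.2 (le_of_lt hrρ))
    rw [div_self hr.ne', abs_of_nonneg ha_nonneg]
    linarith [hg.nonpos r le_rfl]
  · have hY : HasDerivAt (fun ρ => -(L * max (N - ρ) 0)) 0 r := by
      refine (hasDerivAt_const r (0 : ℝ)).congr_of_eventuallyEq ?_
      filter_upwards [Ioi_mem_nhds hrN] with ρ hρ
      rw [max_eq_right (sub_nonpos.2 (mem_Ioi.1 hρ).le), mul_zero, neg_zero]
    have hslope := hmax.hasDerivAt_eq_zero (hY.sub ha.hasDerivAt)
    rw [← sub_eq_zero.1 hslope]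
    simpa using hg.nonpos r hrN.le

theorem hasDerivAt_neg_mul_abs_sub {K r r₀ : ℝ} (h : r ≠ r₀) :
    HasDerivAt (fun ρ => -(K * |ρ - r₀|)) (-(K * SignType.sign (r - r₀))) r :=
  (((hasDerivAt_abs (sub_ne_zero.2 h)).comp_sub_const r r₀).const_mul K).neg

theorem ContactSource.regularSubsol_cone (hg : ContactSource N C L g) (hN : 1 ≤ N) {K r₀ : ℝ}
    (hK : 0 ≤ K) (hLK : L ≤ N * K) (hr₀ : N ≤ r₀) (hzero : g r₀ = 0) :
    RegularSubsol N 1 g (fun (x : E) _ => -(K * |‖x‖ - r₀|)) := by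
  have hr₀_pos : 0 < r₀ := by linarith
  refine .of_stationary (Y := fun r => -(K * |r - r₀|)) (by fun_prop)
    (fun r => neg_nonpos.2 (by positivity)) fun a r hr ha hmax => ?_
  rcases eq_or_ne r r₀ with rfl | hne
  · have hcurv : |N / r * deriv a r| ≤ |deriv a r| := by
      rw [abs_mul, abs_of_nonneg (by positivity)]
      exact mul_le_of_le_one_left (abs_nonneg _) ((div_le_one hr).2 hr₀)
    rw [hzero]
    linarith [neg_abs_le (N / r * deriv a r)]
  have hslope := hmax.hasDerivAt_eq_zero ((hasDerivAt_neg_mul_abs_sub hne).sub ha.hasDerivAt)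
  rw [← sub_eq_zero.1 hslope, one_mul, abs_neg, abs_mul, abs_of_nonneg hK]
  have hvar := hg.lipschitz.abs_sub_le_inv r hr r₀ hr₀_pos
  have hvarK := hvar.trans (mul_le_mul_of_nonneg_right hLK (abs_nonneg _))
  have := neg_abs_le (g r - g r₀)
  rw [hzero] at this hvarK
  have hNr₀ : N * K * r₀⁻¹ ≤ K := by
    rw [mul_right_comm, ← div_eq_mul_inv]
    exact mul_le_of_le_one_left hK ((div_le_one hr₀_pos).2 hr₀)
  rcases hne.lt_or_gt with hlt | hgt
  · rw [abs_of_nonneg (sub_nonneg.2 (inv_anti₀ hr hlt.le))] at hvarK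
    rw [sign_neg (sub_neg.2 hlt)]
    have : 0 ≤ N * K * r₀⁻¹ := by positivity
    simp only [SignType.coe_neg, SignType.coe_one, mul_neg, mul_one, abs_neg, abs_one]
    rw [div_mul_eq_mul_div, div_eq_mul_inv]
    linarith
  · rw [abs_sub_comm r⁻¹, abs_of_nonneg (sub_nonneg.2 (inv_anti₀ hr₀_pos hgt.le))] at hvarK
    rw [sign_pos (sub_pos.2 hgt)]
    simp only [SignType.coe_one, mul_neg, mul_one, abs_one]
    rw [div_mul_eq_mul_div, div_eq_mul_inv]
    linarith

end Barriers

section LongTime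

variable {E : Type*} [NormedAddCommGroup E] {N C L : ℝ} {g : ℝ → ℝ}

/-- A solution of the radial equation with source `g`, in the variables `r = ‖x‖` and `t`, whose
initial value is uniformly continuous as a function of `‖x‖`. -/
structure RadialFlow (N : ℝ) (g : ℝ → ℝ) (w : E → ℝ → ℝ) : Prop where
  subsol : RegularSubsol N 1 g w
  neg_subsol : RegularSubsol N (-1) (fun r => -g r) (fun x t => -w x t)
  initial : ∀ ε > 0, ∃ δ > 0, ∀ x y, |‖x‖ - ‖y‖| < δ → w x 0 - w y 0 < ε

theorem RadialFlow.exists_initial_modulus {w : E → ℝ → ℝ} (hw : RadialFlow N g w)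
    (hN : 1 ≤ N) (hL : 0 ≤ L) {ε : ℝ} (hε : 0 < ε) : ∃ K ≥ 0, 2 * L ≤ N * K ∧
      ∀ x y, w x 0 ≤ w y 0 + ε + K * |‖x‖ - ‖y‖| := by
  obtain ⟨δ, hδ, hmod⟩ := hw.initial ε hε
  obtain ⟨M, hM⟩ := hw.subsol.bddAbove 0
  obtain ⟨M', hM'⟩ := hw.neg_subsol.bddAbove 0
  refine ⟨2 * L + |M + M'| / δ, by positivity, ?_, fun x y => ?_⟩
  · refine le_trans ?_ (le_mul_of_one_le_left (by positivity) hN)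
    exact le_add_of_nonneg_right (by positivity)
  · rcases lt_or_ge |‖x‖ - ‖y‖| δ with hnear | hfar
    · have : 0 ≤ (2 * L + |M + M'| / δ) * |‖x‖ - ‖y‖| := by positivity
      linarith [hmod x y hnear]
    · have hosc : M + M' ≤ |M + M'| / δ * |‖x‖ - ‖y‖| := by
        refine (le_abs_self _).trans ?_
        rw [div_mul_eq_mul_div, le_div_iff₀ hδ]
        exact mul_le_mul_of_nonneg_left hfar (abs_nonneg _)
      have : 0 ≤ 2 * L * |‖x‖ - ‖y‖| := by positivity
      linarith [hM x 0 ⟨le_rfl, le_rfl⟩, hM' y 0 ⟨le_rfl, le_rfl⟩]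

variable [NormedSpace ℝ E] [Nontrivial E] [ProperSpace E] {U W w : E → ℝ → ℝ}

theorem RegularSubsol.add_le_of_initial (hN : 1 ≤ N) (hg : RadialLipschitz C L g)
    (hU : RegularSubsol N 1 g U) (hW : RegularSubsol N (-1) (fun r => -g r) W) {E₀ K : ℝ}
    (hK : 0 ≤ K) (hLK : 2 * L ≤ N * K)
    (hinit : ∀ x y, U x 0 + W y 0 ≤ E₀ + K * |‖x‖ - ‖y‖|) {t : ℝ} (ht : 0 ≤ t) (x y : E) :
    U x t + W y t ≤ E₀ + K * |‖x‖ - ‖y‖| := by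
  refine hU.add_le (B := ∅) (T := t + 1) hN hg hW (fun r _ _ => (add_neg_cancel (g r)).le) hK hLK
    (fun s _ x y _ _ hs => ?_) t ⟨ht, lt_add_one t⟩ x y
  obtain rfl | hs := hs
  exacts [hinit x y, hs.elim]

namespace RadialFlow

theorem exists_modulus (hw : RadialFlow N g w) (hN : 1 ≤ N) (hg : RadialLipschitz C L g) {ε : ℝ}
    (hε : 0 < ε) : ∃ K ≥ 0, 2 * L ≤ N * K ∧
      ∀ t ≥ 0, ∀ x y, w x t ≤ w y t + ε + K * |‖x‖ - ‖y‖| := by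
  obtain ⟨K, hK, hLK, hinit⟩ := hw.exists_initial_modulus hN hg.nonneg hε
  refine ⟨K, hK, hLK, fun t ht x y => ?_⟩
  linarith [hw.subsol.add_le_of_initial (E₀ := ε) hN hg hw.neg_subsol hK hLK
    (fun x y => by linarith [hinit x y]) ht x y]

theorem exists_upper_bound (hw : RadialFlow N g w) (hN : 1 ≤ N) (hg : ContactSource N C L g) :
    ∃ M ≥ 0, ∀ t ≥ 0, ∀ x, w x t ≤ M := by
  obtain ⟨M, hM⟩ := hw.subsol.bddAbove 0
  have hL := hg.lipschitz.nonneg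
  refine ⟨|M| + L * N, by positivity, fun t ht x => ?_⟩
  have hcompare := hw.subsol.add_le_of_initial (E₀ := |M|) (K := 2 * L) hN hg.lipschitz
    (hg.regularSubsol_upperBarrier hN) (by positivity)
    (le_mul_of_one_le_left (by positivity) hN) (fun x y => ?_) ht x x
  · have : max (N - ‖x‖) 0 ≤ N := max_le (by linarith [norm_nonneg x]) (by linarith)
    have := mul_le_mul_of_nonneg_left this hL
    simp only [sub_self, abs_zero, mul_zero, add_zero] at hcompare
    linarith
  · have : 0 ≤ L * max (N - ‖y‖) 0 := by positivity
    have : 0 ≤ 2 * L * |‖x‖ - ‖y‖| := by positivity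
    linarith [hM x 0 ⟨le_rfl, le_rfl⟩, le_abs_self M]

theorem exists_increment_bound (hw : RadialFlow N g w) (hN : 1 ≤ N) (hg : ContactSource N C L g) :
    ∃ M ≥ 0, ∀ K ≥ 0, 2 * L ≤ N * K → ∀ h ≥ 0, ∀ t ≥ 0, ∀ x y,
      w x (h + t) ≤ w y t + M + K * |‖x‖ - ‖y‖| := by
  obtain ⟨M, hM, hw_le⟩ := hw.exists_upper_bound hN hg
  obtain ⟨M', hM'⟩ := hw.neg_subsol.bddAbove 0
  refine ⟨M + |M'|, by positivity, fun K hK hLK h hh t ht x y => ?_⟩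
  have := (hw.subsol.shift hh).add_le_of_initial (E₀ := M + |M'|) hN hg.lipschitz hw.neg_subsol hK
    hLK (fun x y => ?_) ht x y
  · linarith
  · have : 0 ≤ K * |‖x‖ - ‖y‖| := by positivity
    rw [add_zero]
    linarith [hw_le h hh x, hM' y 0 ⟨le_rfl, le_rfl⟩, le_abs_self M']

theorem le_add_of_contact (hw : RadialFlow N g w) (hN : 1 ≤ N) (hg : ContactSource N C L g)
    {x₀ : E} (hx₀ : N ≤ ‖x₀‖) (hzero : g ‖x₀‖ = 0) {h t : ℝ} (hh : 0 ≤ h) (ht : 0 ≤ t) :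
    w x₀ t ≤ w x₀ (t + h) := by
  refine le_of_forall_pos_le_add fun ε hε => ?_
  obtain ⟨K, hK, hLK, hmod⟩ := hw.exists_modulus hN hg.lipschitz hε
  have hcone := hg.regularSubsol_cone (E := E) hN hK
    (by linarith [hg.lipschitz.nonneg]) hx₀ hzero
  have := hcone.add_le_of_initial (E₀ := ε - w x₀ t) hN hg.lipschitz (hw.neg_subsol.shift ht) hK
    hLK (fun x y => ?_) hh x₀ x₀
  · simp only [sub_self, abs_zero, mul_zero, add_zero] at this
    linarith
  · have := mul_le_mul_of_nonneg_left (abs_sub_le ‖x₀‖ ‖x‖ ‖y‖) hK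
    rw [abs_sub_comm ‖x₀‖ ‖x‖] at this
    rw [add_zero]
    linarith [hmod t ht x₀ y]

theorem exists_lower_bound (hw : RadialFlow N g w) (hN : 1 ≤ N) (hg : ContactSource N C L g)
    (x : E) : ∃ M, ∀ t ≥ 0, M ≤ w x t := by
  obtain ⟨r, hr, hzero⟩ := hg.exists_eq_zero
  obtain ⟨x₀, rfl⟩ := exists_norm_eq E (by linarith : 0 ≤ r)
  obtain ⟨K, -, -, hmod⟩ := hw.exists_modulus hN hg.lipschitz one_pos
  refine ⟨w x₀ 0 - 1 - K * |‖x₀‖ - ‖x‖|, fun t ht => ?_⟩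
  have := hw.le_add_of_contact hN hg hr hzero ht le_rfl
  rw [zero_add] at this
  linarith [hmod t ht x₀ x]

theorem eventually_le_of_contact (hw : RadialFlow N g w) (hN : 1 ≤ N) (hg : ContactSource N C L g)
    {x₀ : E} (hx₀ : N ≤ ‖x₀‖) (hzero : g ‖x₀‖ = 0) {ε : ℝ} (hε : 0 < ε) :
    ∀ᶠ t in atTop, ∀ h ≥ 0, w x₀ (h + t) ≤ w x₀ t + ε := by
  obtain ⟨M, -, hM⟩ := hw.exists_upper_bound hN hg
  have hbdd : BddAbove (w x₀ '' Ici 0) := ⟨M, forall_mem_image.2 fun t ht => hM t ht x₀⟩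
  obtain ⟨_, ⟨T, hT, rfl⟩, hlt⟩ :=
    exists_lt_of_lt_csSup (nonempty_Ici.image (w x₀)) (sub_lt_self (sSup (w x₀ '' Ici 0)) hε)
  filter_upwards [eventually_ge_atTop T] with t ht h hh
  have hT_le := hw.le_add_of_contact hN hg hx₀ hzero (sub_nonneg.2 ht) hT
  rw [add_sub_cancel] at hT_le
  linarith [le_csSup hbdd (mem_image_of_mem (w x₀) (add_nonneg hh (le_trans hT ht)))]

theorem eventually_le_near_contact (hw : RadialFlow N g w) (hN : 1 ≤ N)
    (hg : ContactSource N C L g) {ε K ρ : ℝ} (hε : 0 < ε) (hK : 0 ≤ K) (hKρ : K * ρ ≤ ε)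
    (hmod : ∀ t ≥ 0, ∀ x y, w x t ≤ w y t + ε + K * |‖x‖ - ‖y‖|) {F : Set ℝ} (hF : F.Finite)
    (hFg : ∀ a ∈ F, N ≤ a ∧ g a = 0) : ∀ᶠ t in atTop, ∀ h ≥ 0, ∀ x y,
      (∃ a ∈ F, |‖y‖ - a| < ρ) → w x (h + t) ≤ w y t + 5 * ε + K * |‖x‖ - ‖y‖| := by
  have hcontact : ∀ᶠ t in atTop, ∀ a ∈ F, ∃ e : E, ‖e‖ = a ∧ ∀ h ≥ 0, w e (h + t) ≤ w e t + ε := by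
    refine (eventually_all_finite hF).2 fun a ha => ?_
    obtain ⟨hNa, hzero⟩ := hFg a ha
    obtain ⟨e, rfl⟩ := exists_norm_eq E (by linarith : 0 ≤ a)
    exact (hw.eventually_le_of_contact hN hg hNa hzero hε).mono fun t ht => ⟨e, rfl, ht⟩
  filter_upwards [hcontact, eventually_ge_atTop 0] with t hcontact ht h hh x y ⟨a, ha, hya⟩
  obtain ⟨e, rfl, he⟩ := hcontact a ha
  have hnear : K * |‖y‖ - ‖e‖| ≤ ε := (mul_le_mul_of_nonneg_left hya.le hK).trans hKρ
  have htri := mul_le_mul_of_nonneg_left (abs_sub_le ‖x‖ ‖y‖ ‖e‖) hK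
  have hey := hmod t ht e y
  rw [abs_sub_comm] at hey
  linarith [hmod (h + t) (add_nonneg hh ht) x e, he h hh]

end RadialFlow

end LongTime

section Penalty

variable {E : Type*} [NormedAddCommGroup E] {N C L : ℝ} {g : ℝ → ℝ}

/-- A radial penalty: strict (inside the ball of radius `N`) where the curvature term dominates,
and negative beyond `R` when `b > 0`. -/
def radialPenalty (N A R b r : ℝ) : ℝ := -(A * max (N - r) 0 ^ 2) - b * max (r - R) 0 ^ 2

theorem contDiff_radialPenalty (N A R b : ℝ) : ContDiff ℝ 1 (radialPenalty N A R b) :=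
  (contDiff_const.mul (contDiff_max_zero_sq.comp (by fun_prop : ContDiff ℝ 1 (N - ·)))).neg.sub
    (contDiff_const.mul (contDiff_max_zero_sq.comp (by fun_prop : ContDiff ℝ 1 (· - R))))

theorem deriv_radialPenalty (N A R b r : ℝ) :
    deriv (radialPenalty N A R b) r = 2 * A * max (N - r) 0 - 2 * (b * max (r - R) 0) := by
  have hinner := (hasDerivAt_max_zero_sq (N - r)).comp r ((hasDerivAt_id' r).const_sub N)
  have houter := (hasDerivAt_max_zero_sq (r - R)).comp r ((hasDerivAt_id' r).sub_const R)
  refine ((hinner.const_mul A).neg.sub (houter.const_mul b)).deriv.trans ?_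
  ring

theorem radialPenalty_le {N A R b : ℝ} (hA : 0 ≤ A) (r : ℝ) :
    radialPenalty N A R b r ≤ -(b * max (r - R) 0 ^ 2) := by
  have : 0 ≤ A * max (N - r) 0 ^ 2 := by positivity
  rw [radialPenalty]
  linarith

theorem radialPenalty_nonpos {N A R b : ℝ} (hA : 0 ≤ A) (hb : 0 ≤ b) (r : ℝ) :
    radialPenalty N A R b r ≤ 0 :=
  (radialPenalty_le hA r).trans (neg_nonpos.2 (by positivity))

theorem neg_mul_sq_le_radialPenalty {N A R b r : ℝ} (hN : 0 ≤ N) (hA : 0 ≤ A) (hr : 0 ≤ r)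
    (hrR : r ≤ R) : -(A * N ^ 2) ≤ radialPenalty N A R b r := by
  rw [radialPenalty, max_eq_right (sub_nonpos.2 hrR), zero_pow two_ne_zero, mul_zero, sub_zero]
  have : max (N - r) 0 ≤ N := max_le (by linarith) hN
  gcongr

theorem ContactSource.penalized_le (hg : ContactSource N C L g) (hN : 1 ≤ N) {A R b κ μ m r : ℝ}
    (hA : 0 ≤ A) (hAκ : L + N ≤ 2 * A * κ) (hκ : 0 ≤ κ) (hμ : 0 ≤ μ) (hm : m ≤ μ * κ) (hr : 0 < r)
    (hgap : κ ≤ -g r ∨ κ ≤ N - r) (hb : b * max (r - R) 0 = 0) :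
    (1 - μ) * -g r + m - N / r * deriv (radialPenalty N (μ * A) R b) r +
      |-1| * |deriv (radialPenalty N (μ * A) R b) r| ≤ -g r := by
  have hslope : deriv (radialPenalty N (μ * A) R b) r = μ * (2 * A * max (N - r) 0) := by
    rw [deriv_radialPenalty, hb]
    ring
  rw [hslope, abs_neg, abs_one, one_mul, abs_of_nonneg (by positivity)]
  have := mul_le_mul_of_nonneg_left (hg.add_le_of_gap hN hκ hAκ hr hA hgap) hμ
  linarith

variable [NormedSpace ℝ E] [Nontrivial E] [ProperSpace E] {w : E → ℝ → ℝ}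

namespace RadialFlow

-- Where the source vanishes near infinity the contact radii are unbounded, and growth of the
-- penalty replaces convergence at them.
theorem exists_contact_region (hw : RadialFlow N g w) (hN : 1 ≤ N) (hg : ContactSource N C L g)
    {ε : ℝ} (hε : 0 < ε) (R₀ : ℝ) : ∃ K ≥ 0, 2 * L ≤ N * K ∧ ∃ R ≥ R₀, ∃ κ > 0, ∃ b ≥ 0,
      ∃ B : Set ℝ, (∀ r > 0, r ∉ B → (κ ≤ -g r ∨ κ ≤ N - r) ∧ b * max (r - R) 0 = 0) ∧
      ∀ᶠ t in atTop, ∀ h ≥ 0, ∀ x y, ‖y‖ ∈ B →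
        w x (h + t) ≤ w y t + 5 * ε + b * max (‖y‖ - R) 0 ^ 2 + K * |‖x‖ - ‖y‖| := by
  obtain ⟨K, hK, hLK, hmod⟩ := hw.exists_modulus hN hg.lipschitz hε
  obtain ⟨M, hM, hincr⟩ := hw.exists_increment_bound hN hg
  obtain ⟨R₁, hR₁⟩ := hg.eventually_const
  obtain ⟨R, hR⟩ : ∃ R, R = max (max R₀ R₁) N := ⟨_, rfl⟩
  have hR₁R : R₁ ≤ R := by grind
  have hNR : N ≤ R := by grind
  have hconst (r : ℝ) (hr : R ≤ r) : g r = g R := by rw [hR₁ r (by linarith), hR₁ R hR₁R]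
  obtain ⟨ρ, hρ, hKρ, -⟩ := exists_pos_mul_lt_and_mul_lt hε one_pos K 0
  obtain ⟨F, hF, hFg, κ, hκ, hgap⟩ :=
    hg.exists_finite_contact_gap (by linarith) hρ hNR hconst
  refine ⟨K, hK, hLK, R, by grind, κ, hκ, if g R = 0 then M else 0, by split_ifs <;> simp [hM],
    {r | (∃ a ∈ F, |r - a| < ρ) ∨ R + 1 < r ∧ g R = 0}, fun r hr hrB => ?_, ?_⟩
  · have hgap_r : κ ≤ -g r ∨ κ ≤ N - r :=
      ((hgap r hr).resolve_left fun h => hrB (.inl h)).resolve_right fun h => hrB (.inr h)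
    refine ⟨hgap_r, ?_⟩
    split_ifs with hzero
    · rcases le_total r R with hrR | hrR
      · rw [max_eq_right (sub_nonpos.2 hrR), mul_zero]
      · have := hconst r hrR
        rcases hgap_r with h | h <;> linarith
    · rw [zero_mul]
  · filter_upwards [hw.eventually_le_near_contact hN hg hε hK hKρ.le hmod hF hFg,
      eventually_ge_atTop 0] with t hnear ht h hh x y hy
    rcases hy with hy | ⟨hfar, hzero⟩
    · have : 0 ≤ (if g R = 0 then M else 0) * max (‖y‖ - R) 0 ^ 2 := by
        split_ifs <;> positivity
      linarith [hnear h hh x y hy]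
    · rw [if_pos hzero]
      have : M * 1 ≤ M * max (‖y‖ - R) 0 ^ 2 :=
        mul_le_mul_of_nonneg_left (one_le_pow₀ (le_max_of_le_left (by linarith))) hM
      linarith [hincr K hK hLK h hh t ht x y]

-- Scaling the earlier solution by `1 - μ` and adding the penalty gives a strict inequality
-- between the sources off `B`.
theorem penalized_le_of_region (hw : RadialFlow N g w) (hN : 1 ≤ N) (hg : ContactSource N C L g)
    {A R b κ μ K M E₀ E₁ T h s : ℝ} {B : Set ℝ} (hA : 0 ≤ A) (hAκ : L + N ≤ 2 * A * κ)
    (hκ : 0 ≤ κ) (hb : 0 ≤ b) (hμ : 0 ≤ μ) (hμ_lt : μ < 1) (hK : 0 ≤ K) (hLK : 2 * L ≤ N * K)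
    (hh : 0 ≤ h) (hs : 0 ≤ s) (hM : ∀ t ≥ 0, ∀ x, w x t ≤ M)
    (hgap : ∀ r > 0, r ∉ B → (κ ≤ -g r ∨ κ ≤ N - r) ∧ b * max (r - R) 0 = 0)
    (hinit : ∀ x y, w x (h + s) ≤ w y s + E₀ + K * |‖x‖ - ‖y‖|)
    (hE₀ : E₀ ≤ E₁ + μ * κ * T) (hregion : ∀ t ≥ s, ∀ x y, ‖y‖ ∈ B →
      w x (h + t) ≤ w y t + E₁ + b * max (‖y‖ - R) 0 ^ 2 + K * |‖x‖ - ‖y‖|) :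
    ∀ t ∈ Ico 0 T, ∀ x y, w x (h + s + t) + ((1 - μ) * -w y (s + t) +
      radialPenalty N (μ * A) R b ‖y‖ + μ * κ * t) ≤
        E₁ + μ * M + μ * κ * T + K * |‖x‖ - ‖y‖| := by
  have hderiv (t : ℝ) : deriv (fun t => μ * κ * t) t = μ * κ := by
    rw [deriv_const_mul_field, deriv_id'', mul_one]
  have hpen := ((hw.neg_subsol.shift hs).const_mul (sub_pos.2 hμ_lt)).add
    (g' := fun r => (1 - μ) * -g r + μ * κ - N / r * deriv (radialPenalty N (μ * A) R b) r +
      |-1| * |deriv (radialPenalty N (μ * A) R b) r|)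
    (contDiff_radialPenalty N (μ * A) R b) (radialPenalty_nonpos (mul_nonneg hμ hA) hb)
    (b := fun t => μ * κ * t) (by fun_prop) (fun r _ t _ => by rw [hderiv])
  refine (hw.subsol.shift (add_nonneg hh hs)).add_le (B := B) hN hg.lipschitz hpen
    (fun r hr hrB => ?_) hK hLK fun t ht x y _ _ hbdry => ?_
  · obtain ⟨hgap_r, hfar⟩ := hgap r hr hrB
    linarith [hg.penalized_le hN hA hAκ hκ hμ le_rfl hr hgap_r hfar]
  · have hμM := mul_le_mul_of_nonneg_left (hM (s + t) (add_nonneg hs ht.1) y) hμ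
    have hpen_le := radialPenalty_le (N := N) (R := R) (b := b) (mul_nonneg hμ hA) ‖y‖
    have htT := mul_le_mul_of_nonneg_left ht.2.le (mul_nonneg hμ hκ)
    rcases hbdry with rfl | hy
    · have : 0 ≤ b * max (‖y‖ - R) 0 ^ 2 := by positivity
      simp only [add_zero] at hμM ⊢
      linarith [hinit x y]
    · have := hregion (s + t) (le_add_of_nonneg_right ht.1) x y hy
      rw [← add_assoc] at this
      linarith

theorem eventually_le_add (hw : RadialFlow N g w) (hN : 1 ≤ N) (hg : ContactSource N C L g)
    (x : E) {ε : ℝ} (hε : 0 < ε) : ∀ᶠ t in atTop, ∀ h ≥ 0, w x (h + t) ≤ w x t + 9 * ε := by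
  obtain ⟨M, hM, hM_le⟩ := hw.exists_upper_bound hN hg
  obtain ⟨M₁, hM₁⟩ := hw.exists_lower_bound hN hg x
  obtain ⟨M₂, -, hincr⟩ := hw.exists_increment_bound hN hg
  obtain ⟨K, hK, hLK, R, hxR, κ, hκ, b, hb, B, hgap, hregion⟩ :=
    hw.exists_contact_region hN hg hε ‖x‖
  have hN_pos : 0 < N := one_pos.trans_le hN
  have hL := hg.lipschitz.nonneg
  obtain ⟨A, hA⟩ : ∃ A, A = (L + N) / (2 * κ) := ⟨_, rfl⟩
  have hA_nonneg : 0 ≤ A := hA ▸ by positivity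
  have hAκ : L + N ≤ 2 * A * κ := by rw [hA]; field_simp; rfl
  obtain ⟨μ, hμ, hμε, hμ_lt⟩ :=
    exists_pos_mul_lt_and_mul_lt hε one_pos (M + |M₁| + A * N ^ 2 + κ) 1
  rw [one_mul] at hμ_lt
  have : μ * M + μ * |M₁| + μ * A * N ^ 2 + μ * κ < ε := by linarith
  have : 0 ≤ μ * M := by positivity
  have : 0 ≤ μ * |M₁| := by positivity
  have : 0 ≤ μ * A * N ^ 2 := by positivity
  have : 0 ≤ μ * κ := by positivity
  obtain ⟨s, hregion, hs⟩ :=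
    ((eventually_forall_ge_atTop.2 hregion).and (eventually_ge_atTop 0)).exists
  filter_upwards [eventually_ge_atTop (s + max (M₂ / (μ * κ)) 0)] with t ht h hh
  obtain ⟨τ, rfl⟩ : ∃ τ, t = s + τ := ⟨t - s, by ring⟩
  obtain ⟨hM₂τ, hτ⟩ := max_le_iff.1 (le_of_add_le_add_left ht)
  rw [div_le_iff₀' (by positivity)] at hM₂τ
  have hcompare := hw.penalized_le_of_region hN hg hA_nonneg hAκ hκ.le hb hμ.le hμ_lt hK hLK hh hs
    hM_le hgap (hincr K hK hLK h hh s hs) (T := τ + 1) (by linarith)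
    (fun t ht => hregion t ht h hh) τ ⟨hτ, lt_add_one τ⟩ x x
  rw [sub_self, abs_zero, mul_zero, add_assoc h] at hcompare
  have hlower := mul_le_mul_of_nonneg_left (hM₁ (s + τ) (add_nonneg hs hτ)) hμ.le
  have := mul_le_mul_of_nonneg_left (neg_abs_le M₁) hμ.le
  have := neg_mul_sq_le_radialPenalty (b := b) hN_pos.le (mul_nonneg hμ.le hA_nonneg)
    (norm_nonneg x) hxR
  linarith

end RadialFlow

end Penalty

section Convergence

theorem exists_tendsto_of_eventually_le_add {f : ℝ → ℝ} (hbelow : BddBelow (f '' Ici 0))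
    (habove : BddAbove (f '' Ici 0))
    (hf : ∀ ε > 0, ∀ᶠ t in atTop, ∀ h ≥ 0, f (h + t) ≤ f t + ε) :
    ∃ l, Tendsto f atTop (𝓝 l) := by
  have hge : IsBoundedUnder (· ≥ ·) atTop f := hbelow.isBoundedUnder (Ici_mem_atTop 0)
  have hle : IsBoundedUnder (· ≤ ·) atTop f := habove.isBoundedUnder (Ici_mem_atTop 0)
  refine ⟨limsup f atTop, tendsto_of_le_liminf_of_limsup_le ?_ le_rfl hle hge⟩
  refine le_of_forall_pos_le_add fun ε hε => sub_le_iff_le_add.1 ?_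
  refine le_liminf_of_le hle.isCoboundedUnder_ge ((hf ε hε).mono fun t ht => ?_)
  refine sub_le_iff_le_add.2 (limsup_le_of_le hge.isCoboundedUnder_le ?_)
  filter_upwards [eventually_ge_atTop t] with s hs
  simpa using ht (s - t) (sub_nonneg.2 hs)

variable {E : Type*} [NormedAddCommGroup E] [NormedSpace ℝ E] [Nontrivial E] [ProperSpace E]
  {N C L : ℝ} {g : ℝ → ℝ} {w : E → ℝ → ℝ}

namespace RadialFlow

theorem exists_tendsto_apply (hw : RadialFlow N g w) (hN : 1 ≤ N) (hg : ContactSource N C L g)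
    (x : E) : ∃ l, Tendsto (w x) atTop (𝓝 l) := by
  obtain ⟨M, -, hM⟩ := hw.exists_upper_bound hN hg
  obtain ⟨M₁, hM₁⟩ := hw.exists_lower_bound hN hg x
  refine exists_tendsto_of_eventually_le_add ⟨M₁, forall_mem_image.2 hM₁⟩
    ⟨M, forall_mem_image.2 fun t ht => hM t ht x⟩ fun ε hε => ?_
  simpa only [mul_div_cancel₀ ε (by norm_num : (9 : ℝ) ≠ 0)] using
    hw.eventually_le_add hN hg x (ε := ε / 9) (by positivity)

theorem equicontinuous (hw : RadialFlow N g w) (hN : 1 ≤ N) (hg : RadialLipschitz C L g) :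
    Equicontinuous fun (t : Ici (0 : ℝ)) x => w x t := by
  refine (Metric.uniformEquicontinuous_iff.2 fun ε hε => ?_).equicontinuous
  obtain ⟨K, hK, -, hmod⟩ := hw.exists_modulus hN hg (half_pos hε)
  obtain ⟨δ, hδ, hKδ, -⟩ := exists_pos_mul_lt_and_mul_lt (half_pos hε) one_pos K 0
  refine ⟨δ, hδ, fun x y hxy t => ?_⟩
  have hnorm : K * |‖x‖ - ‖y‖| ≤ K * δ :=
    mul_le_mul_of_nonneg_left ((abs_norm_sub_norm_le x y).trans (dist_eq_norm x y ▸ hxy.le)) hK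
  have hxy := hmod t t.2 x y
  have hyx := hmod t t.2 y x
  rw [abs_sub_comm] at hyx
  rw [Real.dist_eq, abs_sub_lt_iff]
  constructor <;> linarith

theorem exists_tendstoUniformlyOn (hw : RadialFlow N g w) (hN : 1 ≤ N)
    (hg : ContactSource N C L g) : ∃ v : E → ℝ, Continuous v ∧
      ∀ K, IsCompact K → TendstoUniformlyOn (fun t x => w x t) v atTop K := by
  choose v hv using hw.exists_tendsto_apply hN hg
  have heq : Equicontinuous fun t x => w x (max t 0) :=
    (hw.equicontinuous hN hg.lipschitz).comp fun t => ⟨max t 0, le_max_right t 0⟩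
  have hmax : ∀ᶠ t in atTop, ∀ x, w x (max t 0) = w x t := by
    filter_upwards [eventually_ge_atTop 0] with t ht x using by rw [max_eq_left ht]
  have hpi : Tendsto (fun t x => w x (max t 0)) atTop (𝓝 v) :=
    tendsto_pi_nhds.2 fun x => (hv x).congr' (hmax.mono fun t ht => (ht x).symm)
  refine ⟨v, hpi.continuous_of_equicontinuous heq, fun K hK => ?_⟩
  refine TendstoUniformlyOn.congr ?_ (hmax.mono fun t ht x _ => ht x)
  exact UniformOnFun.tendsto_iff_tendstoUniformlyOn.1
    ((EquicontinuousOn.tendsto_uniformOnFun_iff_pi (𝔖 := {K | IsCompact K}) (fun _ => id)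
      (eq_univ_of_forall fun x => ⟨{x}, isCompact_singleton, rfl⟩)
      (fun K _ => heq.equicontinuousOn K) atTop v).2 hpi) K hK

end RadialFlow

end Convergence

section Sources

variable {f : ℝ → ℝ} {R : ℝ}

theorem exists_lipschitzOnWith_Ici_of_eventually_const (hf : ContDiffOn ℝ 1 f (Ici 0))
    (hconst : ∀ r ≥ R, f r = f R) : ∃ K, LipschitzOnWith K f (Ici 0) := by
  have hderiv : ContinuousOn (derivWithin f (Ici 0)) (Ici 0) :=
    hf.continuousOn_derivWithin (uniqueDiffOn_Ici 0) le_rfl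
  obtain ⟨C, hC⟩ := (isCompact_Icc (a := 0) (b := max R 0)).exists_bound_of_continuousOn
    (hderiv.mono Icc_subset_Ici_self)
  have hlip : LipschitzOnWith C.toNNReal f (Icc 0 (max R 0)) :=
    (convex_Icc 0 _).lipschitzOnWith_of_nnnorm_hasDerivWithin_le
      (fun r hr => ((hf.differentiableOn one_ne_zero r hr.1).hasDerivWithinAt).mono
        Icc_subset_Ici_self)
      fun r hr => NNReal.le_toNNReal_of_coe_le (hC r hr)
  have hmin (r : ℝ) : f (min r (max R 0)) = f r := by
    rcases le_total r (max R 0) with hr | hr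
    · rw [min_eq_left hr]
    · rw [min_eq_right hr, hconst r ((le_max_left R 0).trans hr), hconst _ (le_max_left R 0)]
  refine ⟨C.toNNReal, LipschitzOnWith.of_dist_le_mul fun r hr s hs => ?_⟩
  rw [← hmin r, ← hmin s]
  refine (hlip.dist_le_mul _ ⟨le_min hr (le_max_right R 0), min_le_right _ _⟩ _
    ⟨le_min hs (le_max_right R 0), min_le_right _ _⟩).trans ?_
  refine mul_le_mul_of_nonneg_left ?_ C.toNNReal.2
  rw [Real.dist_eq, Real.dist_eq]
  refine (abs_min_sub_min_le_max r (max R 0) s (max R 0)).trans_eq ?_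
  rw [sub_self, abs_zero, max_eq_left (abs_nonneg (r - s))]

theorem abs_min_sub_min_le_mul_abs_inv_sub_inv {R r s : ℝ} (hR : 0 < R) (hr : 0 < r)
    (hs : 0 < s) : |min r R - min s R| ≤ R ^ 2 * |r⁻¹ - s⁻¹| := by
  have hp : 0 < min r R := lt_min hr hR
  have hq : 0 < min s R := lt_min hs hR
  have hinv {a : ℝ} (ha : 0 < a) : (min a R)⁻¹ = max a⁻¹ R⁻¹ :=
    antitoneOn_inv_pos.map_min ha hR
  calc |min r R - min s R| = min r R * min s R * |(min r R)⁻¹ - (min s R)⁻¹| := by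
        rw [inv_sub_inv hp.ne' hq.ne', abs_div, abs_of_pos (mul_pos hp hq), abs_sub_comm,
          mul_div_cancel₀ _ (mul_pos hp hq).ne']
    _ ≤ R * R * |max r⁻¹ R⁻¹ - max s⁻¹ R⁻¹| := by
        rw [hinv hr, hinv hs]
        gcongr <;> exact min_le_right _ _
    _ ≤ R ^ 2 * |r⁻¹ - s⁻¹| := by
        rw [← sq]
        exact mul_le_mul_of_nonneg_left (abs_max_sub_max_le_abs _ _ _) (sq_nonneg R)

theorem RadialLipschitz.of_lipschitzOnWith {K : NNReal} (hf : LipschitzOnWith K f (Ioi 0))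
    (hR : 0 < R) (hconst : ∀ r ≥ R, f r = f R) : RadialLipschitz K (K * R ^ 2) f := by
  have hmin (r : ℝ) : f (min r R) = f r := by
    rcases le_total r R with hr | hr
    · rw [min_eq_left hr]
    · rw [min_eq_right hr, hconst r hr]
  refine ⟨fun r hr s hs => hf.dist_le_mul r hr s hs, fun r hr s hs => ?_⟩
  rw [← hmin r, ← hmin s, mul_assoc]
  exact (hf.dist_le_mul _ (lt_min hr hR) _ (lt_min hs hR)).trans
    (mul_le_mul_of_nonneg_left (abs_min_sub_min_le_mul_abs_inv_sub_inv hR hr hs) K.2)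

theorem RadialLipschitz.contactSource_sub {C L N c : ℝ} (hf : RadialLipschitz C L f)
    (hconst : ∀ r ≥ R, f r = f R) (hc : IsGreatest (f '' Ici N) c) :
    ContactSource N C L (fun r => f r - c) where
  lipschitz := ⟨fun r hr s hs => by simpa using hf.abs_sub_le r hr s hs,
    fun r hr s hs => by simpa using hf.abs_sub_le_inv r hr s hs⟩
  nonpos r hr := sub_nonpos.2 (hc.2 (mem_image_of_mem f hr))
  exists_eq_zero := by
    obtain ⟨r, hr, rfl⟩ := hc.1
    exact ⟨r, hr, sub_self _⟩
  eventually_const := ⟨R, fun r hr => congrArg (· - c) (hconst r hr)⟩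

theorem image_norm_setOf_le_norm (E : Type*) [NormedAddCommGroup E] [NormedSpace ℝ E]
    [Nontrivial E] {N : ℝ} (hN : 0 ≤ N) : norm '' {x : E | N ≤ ‖x‖} = Ici N := by
  refine Subset.antisymm (image_subset_iff.2 fun x hx => hx) fun r hr => ?_
  obtain ⟨x, rfl⟩ := exists_norm_eq E (hN.trans hr)
  exact ⟨x, hr, rfl⟩

end Sources

section Strips

variable {E : Type*} [NormedAddCommGroup E] {u : E → ℝ → ℝ}

/-- Continuous on `E × [0, ∞)`, and bounded and uniformly continuous on every strip
`E × [0, T]`: the regularity class of the solutions. -/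
structure UniformOnStrips (u : E → ℝ → ℝ) : Prop where
  continuousOn : ContinuousOn (fun p : E × ℝ => u p.1 p.2) (univ ×ˢ Ici 0)
  bounded : ∀ T > 0, ∃ M, ∀ x, ∀ t ∈ Icc 0 T, |u x t| ≤ M
  uniformContinuousOn : ∀ T > 0,
    UniformContinuousOn (fun p : E × ℝ => u p.1 p.2) (univ ×ˢ Icc 0 T)

namespace UniformOnStrips

theorem neg (hu : UniformOnStrips u) : UniformOnStrips (fun x t => -u x t) where
  continuousOn := hu.continuousOn.neg
  bounded := by simpa only [abs_neg] using hu.bounded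
  uniformContinuousOn T hT := uniformContinuous_neg.comp_uniformContinuousOn
    (hu.uniformContinuousOn T hT)

theorem sub_linear (hu : UniformOnStrips u) (c : ℝ) :
    UniformOnStrips (fun x t => u x t - c * t) where
  continuousOn := hu.continuousOn.sub (by fun_prop)
  bounded T hT := by
    obtain ⟨M, hM⟩ := hu.bounded T hT
    refine ⟨M + |c| * T, fun x t ht => (abs_sub _ _).trans (add_le_add (hM x t ht) ?_)⟩
    rw [abs_mul, abs_of_nonneg ht.1]
    exact mul_le_mul_of_nonneg_left ht.2 (abs_nonneg c)
  uniformContinuousOn T hT := by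
    have hlin : UniformContinuous fun p : E × ℝ => c * p.2 :=
      uniformContinuous_snd.const_smul c
    have := hu.uniformContinuousOn T hT
    rw [uniformContinuousOn_iff_restrict] at this ⊢
    exact this.sub (hlin.comp uniformContinuous_subtype_val)

theorem regularSubsol {N σ : ℝ} {g : ℝ → ℝ} (hu : UniformOnStrips u)
    (hsub : RadialSubsol N σ g u) : RegularSubsol N σ g u where
  subsol := hsub
  continuousOn := hu.continuousOn
  bddAbove T := by
    obtain ⟨M, hM⟩ := hu.bounded (max T 1) (by positivity)
    exact ⟨M, fun x t ht => (le_abs_self _).trans (hM x t ⟨ht.1, ht.2.trans (le_max_left T 1)⟩)⟩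
  equicontinuous T ε hε := by
    have huc := hu.uniformContinuousOn (max T 1) (by positivity)
    obtain ⟨τ, hτ, hτε⟩ := Metric.uniformContinuousOn_iff.1 huc ε hε
    refine ⟨τ, hτ, fun x t ht s hs hts => ?_⟩
    have hstrip {t : ℝ} (ht : t ∈ Icc 0 T) : (x, t) ∈ univ ×ˢ Icc 0 (max T 1) :=
      ⟨mem_univ x, ht.1, ht.2.trans (le_max_left T 1)⟩
    simpa only [Real.dist_eq] using hτε (x, t) (hstrip ht) (x, s) (hstrip hs)
      (by rwa [dist_prod_same_left, Real.dist_eq])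

end UniformOnStrips

end Strips

section MainTheorem

variable {n : ℕ}

local notation "𝔼" => EuclideanSpace ℝ (Fin n)

theorem SeparatedSubsol.regularSubsol {σ : ℝ} {g : ℝ → ℝ} {u : 𝔼 → ℝ → ℝ}
    (hu : SeparatedSubsol σ (fun x => g ‖x‖) u) (hreg : UniformOnStrips u)
    (hg : ContinuousOn g (Ioi 0)) : RegularSubsol (n - 1) σ g u :=
  hreg.regularSubsol (hu.radialSubsol hreg.continuousOn hg)

theorem ParabSupersol.separatedSubsol_neg_sub_linear {f : 𝔼 → ℝ} {u : 𝔼 → ℝ → ℝ}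
    (hu : ParabSupersol f univ u) (c : ℝ) :
    SeparatedSubsol (-1) (fun x => -(f x - c)) (fun x t => -(u x t - c * t)) := by
  have := hu.separatedSubsol_neg.sub_linear (-c)
  simp only [neg_mul] at this
  simpa only [neg_sub', sub_neg_eq_add] using this

theorem radialFlow_of_parabSol {f u₀ : ℝ → ℝ} {u : 𝔼 → ℝ → ℝ} (hf : ContinuousOn f (Ioi 0))
    (hreg : UniformOnStrips u) (hsub : ParabSubsol (fun x => f ‖x‖) univ u)
    (hsuper : ParabSupersol (fun x => f ‖x‖) univ u) (hu₀ : UniformContinuousOn u₀ (Ici 0))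
    (hinit : ∀ x, u x 0 = u₀ ‖x‖) (c : ℝ) :
    RadialFlow (n - 1) (fun r => f r - c) (fun x t => u x t - c * t) where
  subsol := SeparatedSubsol.regularSubsol (hsub.separatedSubsol.sub_linear c) (hreg.sub_linear c)
    (hf.sub continuousOn_const)
  neg_subsol := SeparatedSubsol.regularSubsol (hsuper.separatedSubsol_neg_sub_linear c)
    (hreg.sub_linear c).neg (hf.sub continuousOn_const).neg
  initial ε hε := by
    obtain ⟨δ, hδ, hδε⟩ := Metric.uniformContinuousOn_iff.1 hu₀ ε hε
    refine ⟨δ, hδ, fun x y hxy => ?_⟩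
    simp only [hinit, mul_zero, sub_zero]
    exact (le_abs_self _).trans_lt (hδε ‖x‖ (norm_nonneg x) ‖y‖ (norm_nonneg y) hxy)

theorem stat_of_tendstoUniformlyOn {f v : 𝔼 → ℝ} {u : 𝔼 → ℝ → ℝ} {c : ℝ} (hf : Continuous f)
    (hcont : ContinuousOn (fun p : 𝔼 × ℝ => u p.1 p.2) (univ ×ˢ Ici 0))
    (hsub : ParabSubsol f univ u) (hsuper : ParabSupersol f univ u)
    (hlim : ∀ K, IsCompact K → TendstoUniformlyOn (fun t x => u x t - c * t) v atTop K) :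
    StatSubsol (fun x => f x - c) univ v ∧ StatSupersol (fun x => f x - c) univ v := by
  have hcont' : ContinuousOn (fun p : 𝔼 × ℝ => u p.1 p.2 - c * p.2) (univ ×ˢ Ici 0) :=
    hcont.sub (by fun_prop)
  have hf' : Continuous fun x => f x - c := hf.sub continuous_const
  exact ⟨((hsub.separatedSubsol.sub_linear c).stationary_of_tendsto hf' hcont' hlim).statSubsol,
    ((hsuper.separatedSubsol_neg_sub_linear c).stationary_of_tendsto hf'.neg hcont'.neg
      fun K hK => (hlim K hK).neg).statSupersol⟩

end MainTheorem

theorem stmt_10_general (n : ℕ) (hn : 2 ≤ n)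
    (ftilde : ℝ → ℝ) {K : NNReal} (hflip : LipschitzOnWith K ftilde (Set.Ici 0))
    {R : ℝ} (hfconst : ∀ r ≥ R, ftilde r = ftilde R)
    (f : EuclideanSpace ℝ (Fin n) → ℝ) (hf : ∀ x, f x = ftilde ‖x‖)
    (u₀ : ℝ → ℝ) (hu₀uc : UniformContinuousOn u₀ (Set.Ici 0))
    (u : EuclideanSpace ℝ (Fin n) → ℝ → ℝ) (hu : UniformOnStrips u)
    (hinit : ∀ x, u x 0 = u₀ ‖x‖)
    (hsub : ParabSubsol f Set.univ u) (hsuper : ParabSupersol f Set.univ u)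
    (c : ℝ) (hc : IsGreatest (f '' {x : EuclideanSpace ℝ (Fin n) | (n : ℝ) - 1 ≤ ‖x‖}) c) :
    ∃ vinf : EuclideanSpace ℝ (Fin n) → ℝ,
      Continuous vinf ∧
      StatSubsol (fun x => f x - c) Set.univ vinf ∧
      StatSupersol (fun x => f x - c) Set.univ vinf ∧
      ∀ K : Set (EuclideanSpace ℝ (Fin n)), IsCompact K →
        TendstoUniformlyOn (fun t x => u x t - c * t) vinf Filter.atTop K := by
  obtain rfl : f = fun x => ftilde ‖x‖ := funext hf
  have hN : (1 : ℝ) ≤ n - 1 := by linarith [(Nat.ofNat_le_cast (α := ℝ)).2 hn]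
  have : Nontrivial (Fin n) := Fin.nontrivial_iff_two_le.2 hn
  have hfcont : Continuous fun x : EuclideanSpace ℝ (Fin n) => ftilde ‖x‖ :=
    hflip.continuousOn.comp_continuous continuous_norm norm_nonneg
  have hconst : ∀ r ≥ max R 1, ftilde r = ftilde (max R 1) := fun r hr =>
    (hfconst r ((le_max_left R 1).trans hr)).trans (hfconst _ (le_max_left R 1)).symm
  have hlip := RadialLipschitz.of_lipschitzOnWith (hflip.mono Ioi_subset_Ici_self)
    (by positivity) hconst
  rw [← image_image ftilde norm, image_norm_setOf_le_norm _ (zero_le_one.trans hN)] at hc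
  have hflow := radialFlow_of_parabSol hlip.continuousOn hu hsub hsuper hu₀uc hinit c
  obtain ⟨v, hv, hlim⟩ :=
    hflow.exists_tendstoUniformlyOn hN (hlip.contactSource_sub hconst hc)
  obtain ⟨hstat_sub, hstat_super⟩ :=
    stat_of_tendstoUniformlyOn hfcont hu.continuousOn hsub hsuper hlim
  exact ⟨v, hv, hstat_sub, hstat_super, hlim⟩

/-- Large time behavior in the radially symmetric case: the solution
of the level-set flow with radial source `f(x) = f̃(|x|)` and radial initial data
`u₀(x) = ũ₀(|x|)` satisfies `u(x,t) - c·t → v_∞(x)` locally uniformly, where `v_∞` is a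
viscosity solution of the stationary problem and `c = max_{|x| ≥ n-1} f(x)`. -/
theorem stmt_10 (n : ℕ) (hn : 2 ≤ n)
    (ftilde : ℝ → ℝ) (hfC1 : ContDiffOn ℝ 1 ftilde (Set.Ici 0))
    (hfnonneg : ∀ r ∈ Set.Ici (0 : ℝ), 0 ≤ ftilde r)
    (hfsupp : ∃ R : ℝ, 0 < R ∧ ∀ r ≥ R, ftilde r = 0)
    (hfne : ∃ r ∈ Set.Ici (0 : ℝ), ftilde r ≠ 0)
    (f : EuclideanSpace ℝ (Fin n) → ℝ) (hf : ∀ x, f x = ftilde ‖x‖)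
    (u₀ : ℝ → ℝ) (hu₀bdd : ∃ M : ℝ, ∀ r ∈ Set.Ici (0 : ℝ), |u₀ r| ≤ M)
    (hu₀uc : UniformContinuousOn u₀ (Set.Ici 0))
    (u : EuclideanSpace ℝ (Fin n) → ℝ → ℝ)
    (hucont : ContinuousOn (fun p : EuclideanSpace ℝ (Fin n) × ℝ => u p.1 p.2)
      (Set.univ ×ˢ Set.Ici 0))
    (hubuc : ∀ T > (0 : ℝ),
      (∃ M : ℝ, ∀ x : EuclideanSpace ℝ (Fin n), ∀ t ∈ Set.Icc (0 : ℝ) T, |u x t| ≤ M) ∧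
      UniformContinuousOn (fun p : EuclideanSpace ℝ (Fin n) × ℝ => u p.1 p.2)
        (Set.univ ×ˢ Set.Icc (0 : ℝ) T))
    (hinit : ∀ x, u x 0 = u₀ ‖x‖)
    (hsub : ParabSubsol f Set.univ u) (hsuper : ParabSupersol f Set.univ u)
    (c : ℝ) (hc : IsGreatest (f '' {x : EuclideanSpace ℝ (Fin n) | (n : ℝ) - 1 ≤ ‖x‖}) c) :
    ∃ vinf : EuclideanSpace ℝ (Fin n) → ℝ,
      Continuous vinf ∧
      StatSubsol (fun x => f x - c) Set.univ vinf ∧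
      StatSupersol (fun x => f x - c) Set.univ vinf ∧
      ∀ K : Set (EuclideanSpace ℝ (Fin n)), IsCompact K →
        TendstoUniformlyOn (fun t x => u x t - c * t) vinf Filter.atTop K := by
  obtain ⟨R, -, hR⟩ := hfsupp
  have hconst : ∀ r ≥ R, ftilde r = ftilde R := fun r hr => (hR r hr).trans (hR R le_rfl).symm
  obtain ⟨K, hK⟩ := exists_lipschitzOnWith_Ici_of_eventually_const hfC1 hconst
  exact stmt_10_general n hn ftilde hK hconst f hf u₀ hu₀uc u
    ⟨hucont, fun T hT => (hubuc T hT).1, fun T hT => (hubuc T hT).2⟩ hinit hsub hsuper c hc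
end
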